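/- arXiv:1701.04633 — 4 statements merged into one kernel-verified Lean document; each statement's English description precedes it below -/
import Mathlib

section
/- Let f ∈ ℤ[X] be monic with f = g₁⋯g_k, where g₁,…,g_k ∈ ℤ[X] are irreducible, monic and pairwise distinct, and let Z_f = ℤ[X]/(f). Then the Dirichlet series Σ_{n=1}^∞ a_n(Z_f) n^{-s} converges for every complex s with Re(s) > 1, and there exists a function Z, meromorphic on the half-plane {s ∈ ℂ : Re(s) > 0}, which agrees with the series on {Re(s) > 1} and has a pole of order exactly k at s = 1. -/
open Filter Topology

/-!
Put `R = ℤ[X] / (f)`. It embeds with finite index `m` in `O = ∏ i, 𝓞 (K i)`, where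
`K i = ℚ[X] / (g i)`, and `m O ⊆ R`.

*Reduction to Dedekind zeta functions.* In either ring a finite-index ideal is uniquely an
intersection of an ideal containing a power of `m` with an ideal modulo which `m` is invertible, and
indices multiply. So the zeta functions factor as `Z_R = E_R * C_R` and `Z_O = E_O * C_O`, and
`C_R = C_O` because the rings have the same ideals away from `m`. Here `E_O` is a finite product of
geometric series, without zeros on `Re s > 0`. An ideal `J` of `R` satisfies `m J O ⊆ J ⊆ J O` and
`[J O : m J O]` is independent of `J`, so only boundedly many `J` have a given extension `J O`, and
`E_R` also converges on `Re s > 0`; it is positive at `s = 1`. Hence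
`Z_R = (∏ i, ζ_{K i}) * E_R / E_O`, and the pole of order `k` comes from the `k` Dedekind zeta
functions.

*Continuation of the Dedekind zeta function to `Re s > 0`.* The partial zeta function of an ideal
class is a sum of `|N x| ^ (-s)` over the lattice of an ideal modulo units. The quotient by units is
handled by a smooth cutoff on Minkowski space whose unit translates sum to a constant, so that the
partial zeta function becomes a sum over a full lattice `L` of rank `d` of a function `F s`,
homogeneous of degree `-d s` and smooth off the origin. Adding up all sign characters of `L / 2L`
gives `2 ^ d ∑ F s (2 a) = 2 ^ (d (1 - s)) ∑ F s a`, so `(1 - 2 ^ (d (1 - s))) ∑ F s a` is minus the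
sum of the nontrivially twisted series. Those converge on `Re s > 0` after `d` summations by parts,
as the `d`-th differences of `F s` decay like `‖a‖ ^ (-d Re s - d)`. The factor
`1 - 2 ^ (d (1 - s))` has a simple zero at `1`, and the residue of the zeta function is nonzero by
the analytic class number formula.
-/

/-! ### Finite differences -/

section FiniteDifferences

variable {E G : Type*} [NormedAddCommGroup E] [NormedSpace ℝ E] [NormedAddCommGroup G]
  [NormedSpace ℝ G]

lemma differentiableAt_iteratedDeriv {m : ℕ} {g : ℝ → G} {t : ℝ}
    (hg : ContDiffAt ℝ (m + 1) g t) : DifferentiableAt ℝ (iteratedDeriv m g) t := by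
  simpa only [iteratedDerivWithin_univ, differentiableWithinAt_univ] using
    hg.contDiffWithinAt.differentiableWithinAt_iteratedDerivWithin (s := Set.univ) (m := m)
      (by norm_cast; simp) (by simp)

lemma norm_fwdDiff_iter_le_of_norm_iteratedDeriv_le {m : ℕ} {g : ℝ → G} {a C : ℝ}
    (hg : ∀ t ∈ Set.Icc a (a + m), ContDiffAt ℝ m g t)
    (hC : ∀ t ∈ Set.Icc a (a + m), ‖iteratedDeriv m g t‖ ≤ C) :
    ‖(fwdDiff 1)^[m] g a‖ ≤ C := by
  induction m generalizing g with
  | zero => simpa using hC a (by simp)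
  | succ m ih =>
    have mem_left {t : ℝ} (ht : t ∈ Set.Icc a (a + m)) {u : ℝ} (hu : u ∈ Set.Icc t (t + 1)) :
        u ∈ Set.Icc a (a + (m + 1 : ℕ)) :=
      ⟨ht.1.trans hu.1, by push_cast; linarith [hu.2, ht.2]⟩
    have smooth {t : ℝ} (ht : t ∈ Set.Icc a (a + m)) {u : ℝ} (hu : u ∈ Set.Icc t (t + 1)) :
        ContDiffAt ℝ (m + 1) g u := by exact_mod_cast hg u (mem_left ht hu)
    have smooth_shift {t : ℝ} (ht : t ∈ Set.Icc a (a + m)) :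
        ContDiffAt ℝ m (fun u => g (u + 1)) t :=
      ((smooth ht (by simp : t + 1 ∈ _)).of_le (by norm_cast; simp)).comp t (by fun_prop)
    have smooth_self {t : ℝ} (ht : t ∈ Set.Icc a (a + m)) : ContDiffAt ℝ m g t :=
      (smooth ht (by simp : t ∈ _)).of_le (by norm_cast; simp)
    rw [Function.iterate_succ_apply]
    refine ih (fun t ht => (smooth_shift ht).sub (smooth_self ht)) fun t ht => ?_
    have deriv_sub : iteratedDeriv m (fwdDiff 1 g) t =
        iteratedDeriv m g (t + 1) - iteratedDeriv m g t := by
      rw [show fwdDiff 1 g = (fun u => g (u + 1)) - g from rfl,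
        iteratedDeriv_sub (smooth_shift ht) (smooth_self ht), iteratedDeriv_comp_add_const]
    have mean_value := norm_image_sub_le_of_norm_deriv_le_segment' (C := C)
      (f := iteratedDeriv m g) (f' := iteratedDeriv (m + 1) g) (a := t) (b := t + 1)
      (fun u hu => by
        rw [iteratedDeriv_succ]
        exact (differentiableAt_iteratedDeriv (smooth ht hu)).hasDerivAt.hasDerivWithinAt)
      (fun u hu => hC u (mem_left ht (Set.Ico_subset_Icc_self hu))) (t + 1) (by simp)
    simpa [deriv_sub] using mean_value

lemma iteratedDeriv_comp_add_smul {m : ℕ} {Φ : E → G} {U : Set E} (hU : IsOpen U)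
    (hΦ : ContDiffOn ℝ m Φ U) (x h : E) {t : ℝ} (ht : x + t • h ∈ U) :
    iteratedDeriv m (fun u : ℝ => Φ (x + u • h)) t =
      iteratedFDeriv ℝ m Φ (x + t • h) fun _ => h := by
  let ℓ : ℝ →L[ℝ] E := .toSpanSingleton ℝ h
  have hV : IsOpen ((fun y => x + y) ⁻¹' U) := hU.preimage (by fun_prop)
  have hΨ : ContDiffOn ℝ m (fun y => Φ (x + y)) ((fun y => x + y) ⁻¹' U) :=
    hΦ.comp (by fun_prop) fun _ hy => hy
  have hℓt : ℓ t ∈ (fun y => x + y) ⁻¹' U := ht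
  have chain := ℓ.iteratedFDerivWithin_comp_right hΨ hV.uniqueDiffOn
    (hV.preimage ℓ.continuous).uniqueDiffOn hℓt le_rfl
  rw [iteratedFDerivWithin_of_isOpen m hV hℓt,
    iteratedFDerivWithin_of_isOpen m (hV.preimage ℓ.continuous) hℓt,
    iteratedFDeriv_comp_add_left] at chain
  simpa [iteratedDeriv, ℓ] using! DFunLike.congr_fun chain fun _ => 1

lemma norm_fwdDiff_iter_le {m : ℕ} {Φ : E → G} {U : Set E} (hU : IsOpen U)
    (hΦ : ContDiffOn ℝ m Φ U) {x h : E} {C : ℝ} (hxU : ∀ t ∈ Set.Icc (0 : ℝ) m, x + t • h ∈ U)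
    (hC : ∀ t ∈ Set.Icc (0 : ℝ) m, ‖iteratedFDeriv ℝ m Φ (x + t • h)‖ ≤ C) :
    ‖(fwdDiff h)^[m] Φ x‖ ≤ C * ‖h‖ ^ m := by
  have along_line : (fwdDiff h)^[m] Φ x = (fwdDiff 1)^[m] (fun t : ℝ => Φ (x + t • h)) 0 := by
    simp [fwdDiff_iter_eq_sum_shift, Nat.cast_smul_eq_nsmul]
  rw [along_line]
  refine norm_fwdDiff_iter_le_of_norm_iteratedDeriv_le (fun t ht => ?_) fun t ht => ?_
  · rw [zero_add] at ht
    exact (hΦ.contDiffAt (hU.mem_nhds (hxU t ht))).comp t (by fun_prop)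
  · rw [zero_add] at ht
    rw [iteratedDeriv_comp_add_smul hU hΦ x h (hxU t ht)]
    calc ‖iteratedFDeriv ℝ m Φ (x + t • h) fun _ => h‖
        ≤ ‖iteratedFDeriv ℝ m Φ (x + t • h)‖ * ‖h‖ ^ m := by
          simpa using (iteratedFDeriv ℝ m Φ (x + t • h)).le_opNorm fun _ => h
      _ ≤ C * ‖h‖ ^ m := by gcongr; exact hC t ht

end FiniteDifferences

/-! ### Lattice sums of homogeneous functions -/

/-- Analytic continuation from the half-plane `Re s > 1` to the half-plane `Re s > 0`. -/
def HasHolomorphicExtension (f : ℂ → ℂ) : Prop :=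
  ∃ A : ℂ → ℂ, DifferentiableOn ℂ A {s | 0 < s.re} ∧ ∀ s : ℂ, 1 < s.re → f s = A s

namespace HasHolomorphicExtension

variable {f g : ℂ → ℂ}

lemma congr (hf : HasHolomorphicExtension f) (hfg : ∀ s : ℂ, 1 < s.re → g s = f s) :
    HasHolomorphicExtension g := by
  obtain ⟨A, hA, hfA⟩ := hf
  exact ⟨A, hA, fun s hs => (hfg s hs).trans (hfA s hs)⟩

lemma mul_left (hg : Differentiable ℂ g) (hf : HasHolomorphicExtension f) :
    HasHolomorphicExtension fun s => g s * f s := by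
  obtain ⟨A, hA, hfA⟩ := hf
  exact ⟨fun s => g s * A s, hg.differentiableOn.mul hA, fun s hs => congrArg _ (hfA s hs)⟩

lemma sum {ι : Type*} {t : Finset ι} {F : ι → ℂ → ℂ}
    (hF : ∀ i ∈ t, HasHolomorphicExtension (F i)) :
    HasHolomorphicExtension fun s => ∑ i ∈ t, F i s := by
  choose! A hA hFA using hF
  exact ⟨fun s => ∑ i ∈ t, A i s, DifferentiableOn.fun_sum hA,
    fun s hs => Finset.sum_congr rfl fun i hi => hFA i hi s hs⟩

end HasHolomorphicExtension

lemma differentiableAt_tsum_of_eventually_norm_le {α : Type*} {f : α → ℂ → ℂ} {u : α → ℝ}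
    {U : Set ℂ} {s₀ : ℂ} (hf : ∀ a, Differentiable ℂ (f a)) (hu : Summable u) (hU : U ∈ 𝓝 s₀)
    (hfu : ∀ᶠ a in cofinite, ∀ s ∈ U, ‖f a s‖ ≤ u a) :
    DifferentiableAt ℂ (fun s => ∑' a, f a s) s₀ := by
  classical
  obtain ⟨K, hK, hKU, hKcompact⟩ := local_compact_nhds hU
  have bound (a : α) : ∃ B, ∀ s ∈ K, ‖f a s‖ ≤ B :=
    hKcompact.exists_bound_of_continuousOn (hf a).continuous.continuousOn
  choose B hB using bound
  let v (a : α) : ℝ := if ∀ s ∈ U, ‖f a s‖ ≤ u a then u a else B a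
  have hv : Summable v := hu.congr_cofinite <| by
    filter_upwards [hfu] with a ha using (if_pos ha).symm
  refine DifferentiableOn.differentiableAt (s := interior K) ?_ (interior_mem_nhds.mpr hK)
  refine Complex.differentiableOn_tsum_of_summable_norm hv
    (fun a => (hf a).differentiableOn) isOpen_interior fun a s hs => ?_
  have hsK : s ∈ K := interior_subset hs
  by_cases ha : ∀ s ∈ U, ‖f a s‖ ≤ u a
  · simpa only [v, if_pos ha] using ha s (hKU hsK)
  · simpa only [v, if_neg ha] using hB a s hsK

section SignCharacters

variable {L : Type*} [AddCommGroup L]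

lemma tsum_mul_fwdDiff_iter {χ f : L → ℂ} {e : L} (hχ : ∀ a, ‖χ a‖ ≤ 1)
    (hχe : ∀ a, χ (a + e) = -χ a) (hf : Summable fun a => ‖f a‖) (m : ℕ) :
    (Summable fun a => ‖(fwdDiff e)^[m] f a‖) ∧
      ∑' a, χ a * (fwdDiff e)^[m] f a = (-2) ^ m * ∑' a, χ a * f a := by
  induction m with
  | zero => simpa using hf
  | succ m ih =>
    obtain ⟨hg, hsum⟩ := ih
    rw [Function.iterate_succ_apply']
    set g := (fwdDiff e)^[m] f
    have hg_shift : Summable fun a => ‖g (a + e)‖ :=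
      (Equiv.addRight e).summable_iff (f := fun a => ‖g a‖) |>.mpr hg
    have summable_mul {k : L → ℂ} (hk : Summable fun a => ‖k a‖) : Summable fun a => χ a * k a :=
      .of_norm_bounded hk fun a => by
        rw [norm_mul]
        exact mul_le_of_le_one_left (norm_nonneg _) (hχ a)
    have tsum_shift : ∑' a, χ a * g (a + e) = -∑' a, χ a * g a := by
      rw [← tsum_neg, ← (Equiv.addRight e).tsum_eq fun a => -(χ a * g a)]
      simp [hχe]
    refine ⟨.of_nonneg_of_le (fun _ => norm_nonneg _) (fun a => norm_sub_le _ _)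
      (hg_shift.add hg), ?_⟩
    simp only [fwdDiff, mul_sub]
    rw [(summable_mul hg_shift).tsum_sub (summable_mul hg), tsum_shift, hsum]
    ring

variable {ι : Type*} (b : Module.Basis ι ℤ L)

/-- The character `a ↦ ∏ i ∈ T, (-1) ^ aᵢ` of a free abelian group `L` with basis `b`. As `T` varies
these are the characters of `L / 2L`. -/
noncomputable def signCharacter (T : Finset ι) (a : L) : ℂ :=
  ∏ i ∈ T, (-1 : ℂ) ^ b.repr a i

lemma norm_signCharacter (T : Finset ι) (a : L) : ‖signCharacter b T a‖ = 1 := by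
  simp [signCharacter, norm_prod, norm_zpow]

lemma signCharacter_add_basis {T : Finset ι} {i : ι} (hi : i ∈ T) (a : L) :
    signCharacter b T (a + b i) = -signCharacter b T a := by
  classical
  simp only [signCharacter, map_add, Finsupp.add_apply, Module.Basis.repr_self,
    zpow_add₀ (by norm_num : (-1 : ℂ) ≠ 0), Finset.prod_mul_distrib]
  rw [Finset.prod_eq_single_of_mem (f := fun j => (-1 : ℂ) ^ (Finsupp.single i (1 : ℤ)) j) i hi]
  · simp
  · intro j _ hji
    simp [Finsupp.single_eq_of_ne hji]

variable [Fintype ι]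

lemma sum_signCharacter (a : L) :
    ∑ T, signCharacter b T a = ∏ i, (1 + (-1 : ℂ) ^ b.repr a i) := by
  classical
  simp only [signCharacter]
  rw [Finset.prod_one_add, Finset.powerset_univ]

lemma sum_signCharacter_two_zsmul (a : L) :
    ∑ T, signCharacter b T ((2 : ℤ) • a) = 2 ^ Fintype.card ι := by
  rw [sum_signCharacter, Fintype.card, ← Finset.prod_const]
  refine Finset.prod_congr rfl fun i _ => ?_
  simp only [map_smul, Finsupp.smul_apply, smul_eq_mul, zpow_mul]
  norm_num

lemma exists_eq_two_zsmul_of_sum_signCharacter_ne_zero {a : L}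
    (ha : ∑ T, signCharacter b T a ≠ 0) : ∃ c : L, (2 : ℤ) • c = a := by
  rw [sum_signCharacter, Finset.prod_ne_zero_iff] at ha
  have even_repr (i : ι) : Even (b.repr a i) := by
    by_contra hodd
    rw [Int.not_even_iff_odd] at hodd
    exact ha i (Finset.mem_univ i) (by rw [hodd.neg_one_zpow, add_neg_cancel])
  choose c hc using even_repr
  refine ⟨∑ i, c i • b i, ?_⟩
  rw [← b.sum_repr a, Finset.smul_sum]
  refine Finset.sum_congr rfl fun i _ => ?_
  rw [hc i, smul_smul, two_mul]

lemma sum_tsum_signCharacter_mul {f : L → ℂ} (hf : Summable fun a => ‖f a‖) :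
    ∑ T, ∑' a, signCharacter b T a * f a = 2 ^ Fintype.card ι * ∑' a, f ((2 : ℤ) • a) := by
  have two_zsmul_injective : Function.Injective fun a : L => (2 : ℤ) • a :=
    have := Module.Free.of_basis b
    smul_right_injective L two_ne_zero
  rw [← Summable.tsum_finsetSum fun T _ => .of_norm_bounded hf fun a => by
    rw [norm_mul, norm_signCharacter, one_mul]]
  simp_rw [← Finset.sum_mul]
  rw [← two_zsmul_injective.tsum_eq, ← tsum_mul_left]
  · exact tsum_congr fun a => by rw [sum_signCharacter_two_zsmul]
  · exact fun a ha => exists_eq_two_zsmul_of_sum_signCharacter_ne_zero b (left_ne_zero_of_mul ha)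

end SignCharacters

section LatticeSums

open scoped ContDiff

variable {V : Type*} [NormedAddCommGroup V] [NormedSpace ℝ V]

lemma eventually_le_norm_of_discrete [FiniteDimensional ℝ V] (L : Submodule ℤ V)
    [DiscreteTopology L] (R : ℝ) : ∀ᶠ a : L in cofinite, R ≤ ‖(a : V)‖ := by
  have : ProperSpace V := FiniteDimensional.proper ℝ V
  have closed : IsClosed (X := V) L := @AddSubgroup.isClosed_of_discrete _ _ _ _ _
    L.toAddSubgroup (inferInstanceAs (DiscreteTopology L))
  refine ((Metric.finite_isBounded_inter_isClosed DiscreteTopology.isDiscrete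
    (Metric.isBounded_closedBall (x := (0 : V)) (r := R)) closed).preimage_embedding
    (.subtype _)).subset fun a ha => ?_
  have : ‖(a : V)‖ < R := by simpa using ha
  simpa using this.le

/-- A family of functions `F s` on a real vector space of dimension `d`, holomorphic in `s`, smooth
off the origin jointly with `s`, and homogeneous of degree `-d * s`. -/
structure SmoothHomogeneousFamily (F : ℂ → V → ℂ) : Prop where
  map_smul : ∀ (s : ℂ) {r : ℝ}, 0 < r → ∀ x : V,
    F s (r • x) = (r : ℂ) ^ (-(Module.finrank ℝ V * s)) * F s x
  contDiffOn : ContDiffOn ℝ ∞ (Function.uncurry F) {p | p.2 ≠ 0}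
  differentiable : ∀ x : V, Differentiable ℂ fun s => F s x

namespace SmoothHomogeneousFamily

variable {F : ℂ → V → ℂ}

lemma fwdDiff_iter_eq (hF : SmoothHomogeneousFamily F) (m : ℕ) (e : V) (s : ℂ) (x : V) {r : ℝ}
    (hr : 0 < r) : (fwdDiff e)^[m] (F s) x = (r : ℂ) ^ (-(Module.finrank ℝ V * s)) *
      (fwdDiff (r⁻¹ • e))^[m] (F s) (r⁻¹ • x) := by
  rw [fwdDiff_iter_eq_sum_shift, fwdDiff_iter_eq_sum_shift, Finset.mul_sum]
  refine Finset.sum_congr rfl fun j _ => ?_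
  have rescale : x + j • e = r • (r⁻¹ • x + j • (r⁻¹ • e)) := by
    rw [smul_add, smul_inv_smul₀ hr.ne', smul_comm j, smul_inv_smul₀ hr.ne']
  rw [rescale, hF.map_smul s hr, mul_smul_comm]

lemma differentiable_fwdDiff_iter (hF : SmoothHomogeneousFamily F) (m : ℕ) (e x : V) :
    Differentiable ℂ fun s => (fwdDiff e)^[m] (F s) x := by
  simp only [fwdDiff_iter_eq_sum_shift, zsmul_eq_mul]
  exact .fun_sum fun k _ => (hF.differentiable _).const_mul _

lemma tsum_two_zsmul (hF : SmoothHomogeneousFamily F) (L : Submodule ℤ V) (s : ℂ) :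
    ∑' a : L, F s ((2 : ℤ) • a : L) =
      (2 : ℂ) ^ (-(Module.finrank ℝ V * s)) * ∑' a : L, F s a := by
  rw [← tsum_mul_left]
  refine tsum_congr fun a => ?_
  have real_smul : (((2 : ℤ) • a : L) : V) = (2 : ℝ) • (a : V) := by
    rw [Submodule.coe_smul, ← Int.cast_smul_eq_zsmul ℝ, Int.cast_ofNat]
  rw [real_smul, hF.map_smul s two_pos, Complex.ofReal_ofNat]

variable [FiniteDimensional ℝ V]

lemma exists_norm_iteratedFDeriv_le (hF : SmoothHomogeneousFamily F) (m : ℕ) (M : ℝ) :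
    ∃ C, ∀ (s : ℂ) (x : V), ‖s‖ ≤ M → 1 / 2 ≤ ‖x‖ → ‖x‖ ≤ 3 / 2 →
      ‖iteratedFDeriv ℝ m (Function.uncurry F) (s, x)‖ ≤ C := by
  have : ProperSpace V := FiniteDimensional.proper ℝ V
  let K : Set (ℂ × V) :=
    Metric.closedBall 0 M ×ˢ (Metric.closedBall 0 (3 / 2) \ Metric.ball 0 (1 / 2))
  have hK : IsCompact K :=
    (isCompact_closedBall 0 M).prod ((isCompact_closedBall 0 _).diff Metric.isOpen_ball)
  have hopen : IsOpen {p : ℂ × V | p.2 ≠ 0} := isOpen_ne_fun continuous_snd continuous_const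
  have hKne : K ⊆ {p | p.2 ≠ 0} := fun p hp h0 => hp.2.2 (by simp [h0])
  obtain ⟨C, hC⟩ := hK.exists_bound_of_continuousOn
    ((ContinuousOn.continuousOn_iteratedFDeriv hF.contDiffOn hopen
      (k := m) (by exact_mod_cast le_top)).mono hKne)
  exact ⟨C, fun s x hs hx hx' => hC (s, x)
    ⟨by simpa using hs, by simpa using hx', by simpa using hx⟩⟩

lemma exists_norm_fwdDiff_iter_le_of_norm_eq_one (hF : SmoothHomogeneousFamily F) (m : ℕ)
    (M : ℝ) : ∃ C, ∀ (s : ℂ) (x h : V), ‖s‖ ≤ M → ‖x‖ = 1 → m * ‖h‖ ≤ 1 / 2 →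
      ‖(fwdDiff h)^[m] (F s) x‖ ≤ C * ‖h‖ ^ m := by
  obtain ⟨C, hC⟩ := hF.exists_norm_iteratedFDeriv_le m M
  refine ⟨C, fun s x h hs hx hh => ?_⟩
  have hopen : IsOpen {p : ℂ × V | p.2 ≠ 0} := isOpen_ne_fun continuous_snd continuous_const
  have norm_le {t : ℝ} (ht : t ∈ Set.Icc (0 : ℝ) m) : ‖t • h‖ ≤ 1 / 2 := by
    rw [norm_smul, Real.norm_of_nonneg ht.1]
    exact (mul_le_mul_of_nonneg_right ht.2 (norm_nonneg h)).trans hh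
  have norm_ge {t : ℝ} (ht : t ∈ Set.Icc (0 : ℝ) m) : 1 / 2 ≤ ‖x + t • h‖ := by
    linarith [norm_sub_le_norm_add x (t • h), norm_le ht]
  have along_fiber : (fwdDiff h)^[m] (F s) x =
      (fwdDiff ((0 : ℂ), h))^[m] (Function.uncurry F) (s, x) := by
    simp [fwdDiff_iter_eq_sum_shift]
  have norm_step : ‖((0 : ℂ), h)‖ = ‖h‖ := by simp
  rw [along_fiber, ← norm_step]
  refine norm_fwdDiff_iter_le hopen (hF.contDiffOn.of_le (by exact_mod_cast le_top))
    (fun t ht => ?_) fun t ht => ?_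
  · exact norm_pos_iff.mp (lt_of_lt_of_le (by norm_num) (norm_ge ht))
  · have hle : ‖x + t • h‖ ≤ 3 / 2 := by linarith [norm_add_le x (t • h), norm_le ht]
    simpa using hC s (x + t • h) hs (norm_ge ht) hle

/-- Rescaling `x` to the unit sphere shrinks the step to `‖e‖ / ‖x‖`. -/
lemma exists_norm_fwdDiff_iter_le (hF : SmoothHomogeneousFamily F) (m : ℕ) (e : V) (σ M : ℝ) :
    ∃ C R : ℝ, ∀ (s : ℂ) (x : V), σ ≤ s.re → ‖s‖ ≤ M → R ≤ ‖x‖ →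
      ‖(fwdDiff e)^[m] (F s) x‖ ≤ C * ‖x‖ ^ (-(Module.finrank ℝ V * σ) - m) := by
  obtain ⟨C, hC⟩ := hF.exists_norm_fwdDiff_iter_le_of_norm_eq_one m M
  refine ⟨C * ‖e‖ ^ m, 1 + 2 * (m * ‖e‖), fun s x hσ hs hx => ?_⟩
  have hme : 0 ≤ m * ‖e‖ := by positivity
  have hx_one : 1 ≤ ‖x‖ := by linarith
  have hx_pos : 0 < ‖x‖ := by linarith
  have norm_unit : ‖‖x‖⁻¹ • x‖ = 1 := by
    rw [norm_smul, norm_inv, norm_norm, inv_mul_cancel₀ hx_pos.ne']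
  have norm_step : ‖‖x‖⁻¹ • e‖ = ‖e‖ / ‖x‖ := by
    rw [norm_smul, norm_inv, norm_norm, div_eq_inv_mul]
  have step_small : m * ‖‖x‖⁻¹ • e‖ ≤ 1 / 2 := by
    rw [norm_step, ← mul_div_assoc, div_le_iff₀ hx_pos]
    linarith
  have degree_le : (-(Module.finrank ℝ V * s)).re ≤ -(Module.finrank ℝ V * σ) := by
    rw [Complex.neg_re, ← Complex.ofReal_natCast, Complex.re_ofReal_mul]
    gcongr
  rw [hF.fwdDiff_iter_eq m e s x hx_pos, norm_mul, Complex.norm_cpow_eq_rpow_re_of_pos hx_pos]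
  calc _ ≤ ‖x‖ ^ (-(Module.finrank ℝ V * σ)) * (C * (‖e‖ / ‖x‖) ^ m) := by
        rw [← norm_step]
        gcongr
        exact hC s _ _ hs norm_unit step_small
    _ = _ := by
        rw [Real.rpow_sub hx_pos, Real.rpow_natCast, div_pow]
        field_simp

variable (L : Submodule ℤ V) [DiscreteTopology L] [IsZLattice ℝ L] [Nontrivial V]

lemma summable_norm (hF : SmoothHomogeneousFamily F) {s : ℂ} (hs : 1 < s.re) :
    Summable fun a : L => ‖F s a‖ := by
  obtain ⟨C, R, hC⟩ := hF.exists_norm_fwdDiff_iter_le 0 0 s.re ‖s‖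
  have hd : (0 : ℝ) < Module.finrank ℝ V := by exact_mod_cast Module.finrank_pos
  have hp : -(Module.finrank ℝ V * s.re) - (0 : ℕ) < -Module.finrank ℤ L := by
    rw [ZLattice.rank ℝ L]
    push_cast
    nlinarith
  refine .of_norm_bounded_eventually ((ZLattice.summable_norm_rpow L _ hp).mul_left C) ?_
  filter_upwards [eventually_le_norm_of_discrete L R] with a ha
  simpa using hC s a le_rfl le_rfl ha

variable {L} {ι : Type*} (b : Module.Basis ι ℤ L)

/-- Summation by parts `d` times, where `d` is the dimension, brings the terms down to
`O(‖a‖ ^ (-d * Re s - d))`. -/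
lemma hasHolomorphicExtension_tsum_signCharacter_mul (hF : SmoothHomogeneousFamily F)
    {T : Finset ι} (hT : T.Nonempty) :
    HasHolomorphicExtension fun s => ∑' a : L, signCharacter b T a * F s a := by
  obtain ⟨i, hi⟩ := hT
  set d := Module.finrank ℝ V
  have hd_pos : (0 : ℝ) < d := by exact_mod_cast Module.finrank_pos
  let term (a : L) (s : ℂ) : ℂ := signCharacter b T a * (fwdDiff (b i : V))^[d] (F s) a
  refine ⟨fun s => ((-2) ^ d)⁻¹ * ∑' a : L, term a s, ?_, fun s hs => ?_⟩
  · intro s₀ (hs₀ : 0 < s₀.re)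
    refine ((?_ : DifferentiableAt ℂ _ s₀).const_mul _).differentiableWithinAt
    obtain ⟨C, R, hC⟩ := hF.exists_norm_fwdDiff_iter_le d (b i) (s₀.re / 2) (‖s₀‖ + 1)
    have hp : -(d * (s₀.re / 2)) - d < -Module.finrank ℤ L := by
      rw [ZLattice.rank ℝ L]
      nlinarith
    have hU : {s : ℂ | s₀.re / 2 < s.re ∧ ‖s‖ < ‖s₀‖ + 1} ∈ 𝓝 s₀ :=
      ((isOpen_lt continuous_const Complex.continuous_re).inter
        (isOpen_lt continuous_norm continuous_const)).mem_nhds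
          ⟨by simpa using hs₀, by simp⟩
    refine differentiableAt_tsum_of_eventually_norm_le
      (fun a => (hF.differentiable_fwdDiff_iter d (b i) a).const_mul _)
      ((ZLattice.summable_norm_rpow L _ hp).mul_left C) hU ?_
    filter_upwards [eventually_le_norm_of_discrete L R] with a ha s hs
    rw [norm_mul, norm_signCharacter, one_mul]
    exact hC s a hs.1.le hs.2.le ha
  · have by_parts := (tsum_mul_fwdDiff_iter (fun a => (norm_signCharacter b T a).le)
      (signCharacter_add_basis b hi) (hF.summable_norm L hs) d).2
    have restrict (a : L) : (fwdDiff (b i))^[d] (fun a : L => F s a) a =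
        (fwdDiff (b i : V))^[d] (F s) a := by
      simp [fwdDiff_iter_eq_sum_shift]
    simp only [restrict] at by_parts
    simp only [term, by_parts]
    rw [inv_mul_cancel_left₀ (pow_ne_zero _ (by norm_num))]

/-- By homogeneity and orthogonality of characters, the left side is minus the sum of the
nontrivially twisted series. -/
theorem hasHolomorphicExtension_mul_tsum (hF : SmoothHomogeneousFamily F) (L : Submodule ℤ V)
    [DiscreteTopology L] [IsZLattice ℝ L] :
    HasHolomorphicExtension fun s =>
      (1 - (2 : ℂ) ^ (Module.finrank ℝ V * (1 - s))) * ∑' a : L, F s a := by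
  classical
  have : Module.Free ℤ L := ZLattice.module_free ℝ L
  have : Module.Finite ℤ L := ZLattice.module_finite ℝ L
  let b := Module.Free.chooseBasis ℤ L
  have card_basis : Fintype.card (Module.Free.ChooseBasisIndex ℤ L) = Module.finrank ℝ V := by
    rw [← ZLattice.rank ℝ L, Module.finrank_eq_card_basis b]
  have extends_twisted : HasHolomorphicExtension fun s =>
      ∑ T ∈ Finset.univ.erase ∅, ∑' a : L, signCharacter b T a * F s a :=
    .sum fun T hT => hF.hasHolomorphicExtension_tsum_signCharacter_mul b
      (Finset.nonempty_iff_ne_empty.mpr (Finset.ne_of_mem_erase hT))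
  refine (extends_twisted.mul_left (differentiable_const (-1))).congr fun s hs => ?_
  have orthogonality := sum_tsum_signCharacter_mul b (hF.summable_norm L hs)
  rw [← Finset.add_sum_erase _ _ (Finset.mem_univ ∅), hF.tsum_two_zsmul L, card_basis]
    at orthogonality
  simp only [signCharacter, Finset.prod_empty, one_mul] at orthogonality ⊢
  have two_cpow : (2 : ℂ) ^ (Module.finrank ℝ V * (1 - s)) =
      2 ^ Module.finrank ℝ V * (2 : ℂ) ^ (-(Module.finrank ℝ V * s)) := by
    rw [← Complex.cpow_natCast, ← Complex.cpow_add _ _ two_ne_zero]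
    ring_nf
  rw [two_cpow]
  linear_combination orthogonality

end SmoothHomogeneousFamily

end LatticeSums

/-! ### Smooth cutoffs modulo units -/

lemma hasSum_mul_of_hasSum {α β : Type*} {f : α → ℂ} {g : β → ℂ} {a b : ℂ} (hf : HasSum f a)
    (hg : HasSum g b) : HasSum (fun p : α × β => f p.1 * g p.2) (a * b) :=
  hf.mul hg (summable_mul_of_summable_norm hf.summable.norm hg.summable.norm)

lemma hasSum_fin_pi_prod {k : ℕ} {β : Fin k → Type*} {f : ∀ i, β i → ℂ}
    (hf : ∀ i, Summable (f i)) :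
    HasSum (fun x : ∀ i, β i => ∏ i, f i (x i)) (∏ i, ∑' x, f i x) := by
  induction k with
  | zero => simpa only [Fin.prod_univ_zero] using hasSum_unique fun _ : ∀ i, β i => (1 : ℂ)
  | succ k ih =>
    rw [← (Fin.consEquiv β).hasSum_iff, Fin.prod_univ_succ]
    convert hasSum_mul_of_hasSum (hf 0).hasSum (ih fun i => hf i.succ) using 2 with p
    simp [Fin.prod_univ_succ, Fin.consEquiv]

lemma hasSum_pi_prod {ι : Type*} [Fintype ι] {β : ι → Type*} {f : ∀ i, β i → ℂ}
    (hf : ∀ i, Summable (f i)) :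
    HasSum (fun x : ∀ i, β i => ∏ i, f i (x i)) (∏ i, ∑' x, f i x) := by
  let e := (Fintype.equivFin ι).symm
  rw [← (Equiv.piCongrLeft β e).hasSum_iff, ← e.prod_comp]
  convert hasSum_fin_pi_prod fun a => hf (e a) using 2 with x
  rw [Function.comp_apply, ← e.prod_comp]
  simp only [Equiv.piCongrLeft_apply_apply]

/-- A smooth compactly supported function on `ℝ` whose integer translates sum to `1`. -/
noncomputable def intBump (y : ℝ) : ℝ := Real.smoothTransition (y + 1) - Real.smoothTransition y

lemma contDiff_intBump {n : ℕ∞} : ContDiff ℝ n intBump := by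
  have h : ContDiff ℝ n Real.smoothTransition := Real.smoothTransition.contDiff
  exact (h.comp (contDiff_id.add contDiff_const)).sub h

lemma intBump_eq_zero_of_one_le {y : ℝ} (hy : 1 ≤ y) : intBump y = 0 := by
  rw [intBump, Real.smoothTransition.one_of_one_le (by linarith),
    Real.smoothTransition.one_of_one_le hy, sub_self]

lemma intBump_eq_zero_of_le_neg_one {y : ℝ} (hy : y ≤ -1) : intBump y = 0 := by
  rw [intBump, Real.smoothTransition.zero_of_nonpos (by linarith),
    Real.smoothTransition.zero_of_nonpos (by linarith), sub_self]

lemma abs_le_one_of_intBump_ne_zero {y : ℝ} (hy : intBump y ≠ 0) : |y| ≤ 1 := by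
  contrapose! hy
  rcases lt_abs.mp hy with h | h
  · exact intBump_eq_zero_of_one_le h.le
  · exact intBump_eq_zero_of_le_neg_one (by linarith)

lemma intBump_add_intBump_sub_one {y : ℝ} (hy : 0 ≤ y) (hy' : y ≤ 1) :
    intBump y + intBump (y - 1) = 1 := by
  rw [intBump, intBump, Real.smoothTransition.one_of_one_le (by linarith),
    Real.smoothTransition.zero_of_nonpos (x := y - 1) (by linarith), sub_add_cancel]
  ring

lemma hasSum_intBump (y : ℝ) : HasSum (fun n : ℤ => intBump (n + y)) 1 := by
  have hfloor := Int.floor_le y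
  have hfloor' := Int.lt_floor_add_one y
  have vanish : ∀ n ∉ ({-⌊y⌋, -⌊y⌋ - 1} : Finset ℤ), intBump (n + y) = 0 := by
    intro n hn
    simp only [Finset.mem_insert, Finset.mem_singleton, not_or] at hn
    rcases lt_or_gt_of_ne hn.1 with h | h
    · have : (n : ℝ) ≤ -⌊y⌋ - 2 := by exact_mod_cast (by lia : n ≤ -⌊y⌋ - 2)
      exact intBump_eq_zero_of_le_neg_one (by linarith)
    · have : (-⌊y⌋ + 1 : ℝ) ≤ n := by exact_mod_cast (by lia : -⌊y⌋ + 1 ≤ n)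
      exact intBump_eq_zero_of_one_le (by linarith)
  have two_terms := intBump_add_intBump_sub_one (y := -⌊y⌋ + y) (by linarith) (by linarith)
  have sum_eq : ∑ n ∈ {-⌊y⌋, -⌊y⌋ - 1}, intBump (n + y) = 1 := by
    rw [Finset.sum_pair (by lia), ← two_terms]
    push_cast
    ring_nf
  exact sum_eq ▸ hasSum_sum_of_ne_finset_zero vanish

section UnitCutoff

open NumberField NumberField.mixedEmbedding NumberField.Units
  NumberField.Units.dirichletUnitTheorem NumberField.mixedEmbedding.fundamentalCone
open scoped Classical ContDiff

variable (K : Type*) [Field K] [NumberField K]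

/-- The basis of the logarithmic space given by the fundamental units. -/
noncomputable def unitBasis : Module.Basis (Fin (rank K)) ℝ (logSpace K) :=
  (basisUnitLattice K).ofZLatticeBasis ℝ _

variable {K}

/-- A smooth substitute for the indicator function of a fundamental domain of the action of the
units on Minkowski space: where the norm is nonzero it is homogeneous of degree `0`, and its unit
translates sum to a constant. -/
noncomputable def unitCutoff (x : mixedSpace K) : ℂ :=
  ∏ i, (intBump ((unitBasis K).repr (logMap x) i) : ℂ)

lemma unitBasis_repr_logEmbedding (ζ : torsion K) (n : Fin (rank K) → ℤ) (i : Fin (rank K)) :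
    (unitBasis K).repr (logEmbedding K (Additive.ofMul
      ((ζ : (𝓞 K)ˣ) * ∏ i, (fundSystem K i) ^ (n i)))) i = n i := by
  have log_torsion : logEmbedding K (Additive.ofMul (ζ : (𝓞 K)ˣ)) = 0 :=
    logEmbedding_eq_zero_iff.mpr ζ.2
  have log_fundSystem (j : Fin (rank K)) : logEmbedding K (Additive.ofMul (fundSystem K j ^ n j)) =
      (n j : ℝ) • unitBasis K j := by
    rw [ofMul_zpow, map_zsmul, logEmbedding_fundSystem, unitBasis,
      Module.Basis.ofZLatticeBasis_apply, Int.cast_smul_eq_zsmul]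
  rw [ofMul_mul, map_add, log_torsion, zero_add, ofMul_prod, map_sum]
  simp_rw [log_fundSystem]
  rw [(unitBasis K).repr_sum_self]

lemma unitCutoff_unit_smul (ζ : torsion K) (n : Fin (rank K) → ℤ) {x : mixedSpace K}
    (hx : mixedEmbedding.norm x ≠ 0) :
    unitCutoff (((ζ : (𝓞 K)ˣ) * ∏ i, (fundSystem K i) ^ (n i)) • x) =
      ∏ i, (intBump (n i + (unitBasis K).repr (logMap x) i) : ℂ) := by
  rw [unitCutoff, logMap_unit_smul _ hx]
  refine Finset.prod_congr rfl fun i _ => ?_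
  rw [map_add, Finsupp.add_apply]
  congr 3
  exact unitBasis_repr_logEmbedding ζ n i

lemma hasSum_unitCutoff {x : mixedSpace K} (hx : mixedEmbedding.norm x ≠ 0) :
    HasSum (fun u : (𝓞 K)ˣ => unitCutoff (u • x)) (torsionOrder K) := by
  have : Fintype (torsion K) := Fintype.ofFinite _
  let decomposition : torsion K × (Fin (rank K) → ℤ) ≃ (𝓞 K)ˣ :=
    Equiv.ofBijective (fun p => (p.1 : (𝓞 K)ˣ) * ∏ i, (fundSystem K i) ^ (p.2 i)) <| by
      simpa only [Function.bijective_iff_existsUnique, eq_comm] using exist_unique_eq_mul_prod K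
  have hasSum_bump (i : Fin (rank K)) :
      HasSum (fun n : ℤ => (intBump (n + (unitBasis K).repr (logMap x) i) : ℂ)) 1 := by
    have := Complex.hasSum_ofReal.mpr (hasSum_intBump ((unitBasis K).repr (logMap x) i))
    rwa [Complex.ofReal_one] at this
  have hasSum_free := hasSum_pi_prod fun i => (hasSum_bump i).summable
  simp only [(hasSum_bump _).tsum_eq, Finset.prod_const_one] at hasSum_free
  have hasSum_torsion : HasSum (fun _ : torsion K => (1 : ℂ)) (torsionOrder K) := by
    simpa [torsionOrder, Nat.card_eq_fintype_card] using hasSum_fintype fun _ : torsion K => (1 : ℂ)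
  rw [← decomposition.hasSum_iff]
  convert hasSum_mul_of_hasSum hasSum_torsion hasSum_free using 1
  · funext p
    rw [one_mul]
    exact unitCutoff_unit_smul p.1 p.2 hx
  · rw [mul_one]

lemma norm_logMap_le_of_unitCutoff_ne_zero {x : mixedSpace K} (hx : unitCutoff x ≠ 0) :
    ‖logMap x‖ ≤ ∑ i, ‖unitBasis K i‖ := by
  have coord_le (i : Fin (rank K)) : |(unitBasis K).repr (logMap x) i| ≤ 1 :=
    abs_le_one_of_intBump_ne_zero <| by
      exact_mod_cast Finset.prod_ne_zero_iff.mp hx i (Finset.mem_univ i)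
  calc ‖logMap x‖ = ‖∑ i, (unitBasis K).repr (logMap x) i • unitBasis K i‖ := by
        rw [(unitBasis K).sum_repr]
    _ ≤ ∑ i, ‖unitBasis K i‖ := norm_sum_le_of_le _ fun i _ => by
        rw [_root_.norm_smul]
        exact mul_le_of_le_one_left (norm_nonneg _) (coord_le i)

lemma sum_mult_mul_log_normAtPlace_sub {x : mixedSpace K} (hx : mixedEmbedding.norm x ≠ 0) :
    ∑ w : InfinitePlace K, (w.mult : ℝ) * (Real.log (normAtPlace w x) -
      Real.log (mixedEmbedding.norm x) * (Module.finrank ℚ K : ℝ)⁻¹) = 0 := by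
  have hd : (Module.finrank ℚ K : ℝ) ≠ 0 := by exact_mod_cast Module.finrank_pos.ne'
  simp only [mul_sub, Finset.sum_sub_distrib]
  rw [← Finset.sum_mul, ← Nat.cast_sum, InfinitePlace.sum_mult_eq, mul_comm _ (_ * _),
    inv_mul_cancel_right₀ hd, mixedEmbedding.norm_apply,
    Real.log_prod fun w _ => pow_ne_zero _ (mixedEmbedding.norm_ne_zero_iff.mp hx w)]
  simp only [Real.log_pow, sub_self]

/-- The coordinate missing from `logMap x`, at the place `w₀`, is minus the sum of the others. -/
lemma mult_mul_log_normAtPlace_sub_le {x : mixedSpace K} (hx : mixedEmbedding.norm x ≠ 0)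
    (w : InfinitePlace K) :
    (w.mult : ℝ) * (Real.log (normAtPlace w x) -
      Real.log (mixedEmbedding.norm x) * (Module.finrank ℚ K : ℝ)⁻¹) ≤
        Fintype.card (InfinitePlace K) * ‖logMap x‖ := by
  set δ : InfinitePlace K → ℝ := fun v => (v.mult : ℝ) * (Real.log (normAtPlace v x) -
    Real.log (mixedEmbedding.norm x) * (Module.finrank ℚ K : ℝ)⁻¹)
  have le_norm {v : InfinitePlace K} (hv : v ≠ w₀) : ‖δ v‖ ≤ ‖logMap x‖ :=
    norm_le_pi_norm (logMap x) ⟨v, hv⟩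
  by_cases hw : w = w₀
  · have sum_others : δ w = -∑ v ∈ Finset.univ.erase w, δ v := by
      rw [eq_neg_iff_add_eq_zero, Finset.add_sum_erase _ _ (Finset.mem_univ w)]
      exact sum_mult_mul_log_normAtPlace_sub hx
    calc δ w ≤ ‖∑ v ∈ Finset.univ.erase w, δ v‖ := sum_others.trans_le (neg_le_abs _)
      _ ≤ ∑ _v ∈ Finset.univ.erase w, ‖logMap x‖ :=
          norm_sum_le_of_le _ fun v hv => le_norm (hw ▸ Finset.ne_of_mem_erase hv)
      _ ≤ Fintype.card (InfinitePlace K) * ‖logMap x‖ := by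
          rw [Finset.sum_const, nsmul_eq_mul]
          gcongr
          exact Finset.card_le_univ _
  · have card_pos : (1 : ℝ) ≤ Fintype.card (InfinitePlace K) := by
      exact_mod_cast Fintype.card_pos_iff.mpr ⟨w⟩
    exact (le_abs_self _).trans ((le_norm hw).trans
      (le_mul_of_one_le_left (norm_nonneg _) card_pos))

lemma norm_pow_finrank_le {x : mixedSpace K} (hx : mixedEmbedding.norm x ≠ 0) :
    ‖x‖ ^ Module.finrank ℚ K ≤ Real.exp (Module.finrank ℚ K *
      (Fintype.card (InfinitePlace K) * ‖logMap x‖)) * mixedEmbedding.norm x := by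
  set d := Module.finrank ℚ K
  set B := Fintype.card (InfinitePlace K) * ‖logMap x‖
  set N := Real.log (mixedEmbedding.norm x) with hN
  have hd : (d : ℝ) ≠ 0 := by exact_mod_cast Module.finrank_pos.ne'
  have hB : 0 ≤ B := by positivity
  have norm_pos : 0 < mixedEmbedding.norm x := (mixedEmbedding.norm_nonneg x).lt_of_ne' hx
  have normAtPlace_le (w : InfinitePlace K) : normAtPlace w x ≤ Real.exp (B + N * (d : ℝ)⁻¹) := by
    have hw : 0 < normAtPlace w x :=
      (normAtPlace_nonneg w x).lt_of_ne' (mixedEmbedding.norm_ne_zero_iff.mp hx w)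
    have hmult : (1 : ℝ) ≤ w.mult := by exact_mod_cast InfinitePlace.mult_pos
    have := mult_mul_log_normAtPlace_sub_le hx w
    rw [← Real.log_le_iff_le_exp hw]
    nlinarith
  calc ‖x‖ ^ d ≤ Real.exp (B + N * (d : ℝ)⁻¹) ^ d := by
        gcongr
        rw [norm_eq_sup'_normAtPlace]
        exact Finset.sup'_le _ _ fun w _ => normAtPlace_le w
    _ = Real.exp (d * B) * Real.exp N := by
        rw [← Real.exp_nat_mul, ← Real.exp_add, mul_add, mul_comm N, mul_inv_cancel_left₀ hd]
    _ = Real.exp (d * B) * mixedEmbedding.norm x := by rw [hN, Real.exp_log norm_pos]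

lemma exists_norm_pow_le_of_unitCutoff_ne_zero :
    ∃ C : ℝ, ∀ x : mixedSpace K, mixedEmbedding.norm x ≠ 0 → unitCutoff x ≠ 0 →
      ‖x‖ ^ Module.finrank ℚ K ≤ C * mixedEmbedding.norm x := by
  refine ⟨Real.exp (Module.finrank ℚ K *
    (Fintype.card (InfinitePlace K) * ∑ i, ‖unitBasis K i‖)), fun x hx hcut => ?_⟩
  refine (norm_pow_finrank_le hx).trans ?_
  have := mixedEmbedding.norm_nonneg x
  gcongr
  exact norm_logMap_le_of_unitCutoff_ne_zero hcut

lemma contDiffAt_normAtPlace {n : WithTop ℕ∞} {w : InfinitePlace K} {x : mixedSpace K}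
    (hx : normAtPlace w x ≠ 0) : ContDiffAt ℝ n (fun x : mixedSpace K => normAtPlace w x) x := by
  rcases w.isReal_or_isComplex with hw | hw
  · simp only [normAtPlace_apply_of_isReal hw] at hx ⊢
    have coordinate : ContDiffAt ℝ n (fun x : mixedSpace K => x.1 ⟨w, hw⟩) x := by fun_prop
    exact (contDiffAt_norm ℝ (norm_ne_zero_iff.mp hx)).comp x coordinate
  · simp only [normAtPlace_apply_of_isComplex hw] at hx ⊢
    have coordinate : ContDiffAt ℝ n (fun x : mixedSpace K => x.2 ⟨w, hw⟩) x := by fun_prop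
    exact (contDiffAt_norm ℂ (norm_ne_zero_iff.mp hx)).comp x coordinate

lemma contDiffAt_mixedNorm {n : WithTop ℕ∞} {x : mixedSpace K} (hx : mixedEmbedding.norm x ≠ 0) :
    ContDiffAt ℝ n (fun x : mixedSpace K => mixedEmbedding.norm x) x := by
  simp only [mixedEmbedding.norm_apply]
  exact contDiffAt_prod fun w _ =>
    (contDiffAt_normAtPlace (mixedEmbedding.norm_ne_zero_iff.mp hx w)).pow _

lemma contDiffAt_logMap {n : WithTop ℕ∞} {x : mixedSpace K} (hx : mixedEmbedding.norm x ≠ 0) :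
    ContDiffAt ℝ n (fun x : mixedSpace K => logMap x) x := by
  rw [contDiffAt_pi]
  intro w
  have hw := mixedEmbedding.norm_ne_zero_iff.mp hx w.1
  simp only [logMap_apply]
  exact contDiffAt_const.mul (((contDiffAt_normAtPlace hw).log hw).sub
    (((contDiffAt_mixedNorm hx).log hx).mul contDiffAt_const))

lemma contDiffAt_unitCutoff {n : ℕ∞} {x : mixedSpace K} (hx : mixedEmbedding.norm x ≠ 0) :
    ContDiffAt ℝ n (fun x : mixedSpace K => unitCutoff x) x := by
  refine contDiffAt_prod fun i _ => ?_
  have coordinate : ContDiff ℝ n fun y : logSpace K => (unitBasis K).repr y i :=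
    (LinearMap.toContinuousLinearMap ((unitBasis K).coord i)).contDiff
  exact Complex.ofRealCLM.contDiff.contDiffAt.comp x
    (contDiff_intBump.contDiffAt.comp x (coordinate.contDiffAt.comp x (contDiffAt_logMap hx)))

/-- The smoothed norm power `unitCutoff x * |N x| ^ (-s)`, set to `0` where the norm vanishes so
that it is entire in `s`. -/
noncomputable def cutoffNormPow (s : ℂ) (x : mixedSpace K) : ℂ :=
  if mixedEmbedding.norm x = 0 then 0
  else unitCutoff x * Complex.exp (-s * Real.log (mixedEmbedding.norm x))

lemma cutoffNormPow_smul (s : ℂ) {r : ℝ} (hr : 0 < r) (x : mixedSpace K) :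
    cutoffNormPow s (r • x) = (r : ℂ) ^ (-(Module.finrank ℚ K * s)) * cutoffNormPow s x := by
  have norm_smul : mixedEmbedding.norm (r • x) =
      r ^ Module.finrank ℚ K * mixedEmbedding.norm x := by
    rw [mixedEmbedding.norm_smul, abs_of_pos hr]
  have hrd : r ^ Module.finrank ℚ K ≠ 0 := (pow_pos hr _).ne'
  by_cases hx : mixedEmbedding.norm x = 0
  · simp [cutoffNormPow, norm_smul, hx]
  · have hrx : mixedEmbedding.norm (r • x) ≠ 0 := norm_smul ▸ mul_ne_zero hrd hx
    rw [cutoffNormPow, cutoffNormPow, if_neg hx, if_neg hrx, unitCutoff,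
      logMap_real_smul hx hr.ne', ← unitCutoff, norm_smul, Real.log_mul hrd hx, Real.log_pow,
      Complex.cpow_def_of_ne_zero (by exact_mod_cast hr.ne'), mul_left_comm, ← Complex.exp_add,
      ← Complex.ofReal_log hr.le]
    congr 2
    push_cast
    ring

lemma differentiable_cutoffNormPow (x : mixedSpace K) :
    Differentiable ℂ fun s => cutoffNormPow s x := by
  unfold cutoffNormPow
  split_ifs
  · exact differentiable_const _
  · fun_prop

lemma eventually_cutoffNormPow_eq_zero {x : mixedSpace K} (hx : x ≠ 0)
    (hNx : mixedEmbedding.norm x = 0) : ∀ᶠ y in 𝓝 x, ∀ s, cutoffNormPow s y = 0 := by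
  obtain ⟨C, hC⟩ := exists_norm_pow_le_of_unitCutoff_ne_zero (K := K)
  have norm_lt : ∀ᶠ y in 𝓝 x, C * mixedEmbedding.norm y < ‖y‖ ^ Module.finrank ℚ K := by
    refine ContinuousAt.eventually_lt ((mixedEmbedding.continuous_norm K).continuousAt.const_mul C)
      (by fun_prop) ?_
    simpa [hNx] using pow_pos (norm_pos_iff.mpr hx) _
  filter_upwards [norm_lt] with y hy s
  rw [cutoffNormPow]
  split_ifs with hNy
  · rfl
  · have cutoff_eq_zero : unitCutoff y = 0 := by
      by_contra hcut
      exact hy.not_ge (hC y hNy hcut)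
    rw [cutoff_eq_zero, zero_mul]

lemma contDiffAt_cutoffNormPow (s : ℂ) {x : mixedSpace K} (hx : mixedEmbedding.norm x ≠ 0) :
    ContDiffAt ℝ ∞ (Function.uncurry (cutoffNormPow (K := K))) (s, x) := by
  have norm_ne_zero : ∀ᶠ p : ℂ × mixedSpace K in 𝓝 (s, x), mixedEmbedding.norm p.2 ≠ 0 :=
    ((mixedEmbedding.continuous_norm K).comp continuous_snd).continuousAt.eventually_ne hx
  have smooth_norm : ContDiffAt ℝ ∞ (fun p : ℂ × mixedSpace K => mixedEmbedding.norm p.2) (s, x) :=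
    (contDiffAt_mixedNorm hx).comp (s, x) contDiffAt_snd
  have smooth_cutoff : ContDiffAt ℝ ∞ (fun p : ℂ × mixedSpace K => unitCutoff p.2) (s, x) :=
    ContDiffAt.comp (g := fun x : mixedSpace K => unitCutoff x) (s, x)
      (contDiffAt_unitCutoff hx) contDiffAt_snd
  have smooth_exp : ContDiffAt ℝ ∞ (fun p : ℂ × mixedSpace K =>
      Complex.exp (-p.1 * (Real.log (mixedEmbedding.norm p.2) : ℂ))) (s, x) :=
    Complex.contDiff_exp.contDiffAt.comp (s, x) (contDiffAt_fst.neg.mul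
      (Complex.ofRealCLM.contDiff.contDiffAt.comp (s, x) (smooth_norm.log hx)))
  refine (smooth_cutoff.mul smooth_exp).congr_of_eventuallyEq ?_
  filter_upwards [norm_ne_zero] with p hp
  exact if_neg hp

theorem smoothHomogeneousFamily_cutoffNormPow :
    SmoothHomogeneousFamily (cutoffNormPow (K := K)) where
  map_smul s r hr x := by
    rw [mixedEmbedding.finrank K]
    exact cutoffNormPow_smul s hr x
  contDiffOn := by
    rintro ⟨s, x⟩ (hx : x ≠ 0)
    refine ContDiffAt.contDiffWithinAt ?_
    by_cases hNx : mixedEmbedding.norm x = 0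
    · refine (contDiffAt_const (c := (0 : ℂ))).congr_of_eventuallyEq ?_
      filter_upwards [continuousAt_snd.eventually (eventually_cutoffNormPow_eq_zero hx hNx)]
        with p hp using hp p.1
    · exact contDiffAt_cutoffNormPow s hNx
  differentiable := differentiable_cutoffNormPow

end UnitCutoff

/-! ### Partial zeta functions of ideal classes -/

section IdealClass

open nonZeroDivisors

variable {R : Type*} [CommRing R] [IsDedekindDomain R]

/-- The nonzero ideals whose class is inverse to that of `J`. -/
abbrev InverseClassIdeal (J : (Ideal R)⁰) : Type _ :=
  {I : (Ideal R)⁰ // ClassGroup.mk0 I = (ClassGroup.mk0 J)⁻¹}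

/-- A generator of the principal ideal `I * J`. -/
noncomputable def mulGenerator {J : (Ideal R)⁰} (I : InverseClassIdeal J) : R :=
  (ClassGroup.mk0_eq_mk0_inv_iff.mp I.2).choose

variable {J : (Ideal R)⁰} (I : InverseClassIdeal J)

lemma mulGenerator_ne_zero : mulGenerator I ≠ 0 :=
  (ClassGroup.mk0_eq_mk0_inv_iff.mp I.2).choose_spec.1

lemma span_mulGenerator : Ideal.span {mulGenerator I} = (I.1 : Ideal R) * (J : Ideal R) :=
  (ClassGroup.mk0_eq_mk0_inv_iff.mp I.2).choose_spec.2.symm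

lemma mulGenerator_mem : mulGenerator I ∈ (J : Ideal R) :=
  Ideal.mul_le_right (span_mulGenerator I ▸ Ideal.mem_span_singleton_self (mulGenerator I))

lemma units_mul_mulGenerator_injective :
    Function.Injective fun p : InverseClassIdeal J × Rˣ => (p.2 : R) * mulGenerator p.1 := by
  rintro ⟨I, u⟩ ⟨I', u'⟩ (h : (u : R) * mulGenerator I = u' * mulGenerator I')
  have mul_eq : (I.1 : Ideal R) * J = (I'.1 : Ideal R) * J := by
    rw [← span_mulGenerator, ← span_mulGenerator, ← Ideal.span_singleton_mul_left_unit u.isUnit, h,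
      Ideal.span_singleton_mul_left_unit u'.isUnit]
  obtain rfl : I = I' :=
    Subtype.ext (Subtype.ext (mul_right_cancel₀ (nonZeroDivisors.coe_ne_zero J) mul_eq))
  rw [Units.ext (mul_right_cancel₀ (mulGenerator_ne_zero I) h)]

lemma exists_units_mul_mulGenerator_eq {a : R} (ha : a ∈ (J : Ideal R)) (ha0 : a ≠ 0) :
    ∃ (I : InverseClassIdeal J) (u : Rˣ), (u : R) * mulGenerator I = a := by
  obtain ⟨I, hI⟩ := Ideal.dvd_iff_le.mpr ((Ideal.span_singleton_le_iff_mem _).mpr ha)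
  rw [mul_comm] at hI
  have hI0 : I ∈ (Ideal R)⁰ := by
    refine mem_nonZeroDivisors_of_ne_zero ?_
    rintro rfl
    exact ha0 (Ideal.span_singleton_eq_bot.mp (by rw [hI, zero_mul, Ideal.zero_eq_bot]))
  let I' : InverseClassIdeal J :=
    ⟨⟨I, hI0⟩, ClassGroup.mk0_eq_mk0_inv_iff.mpr ⟨a, ha0, hI.symm⟩⟩
  obtain ⟨u, hu⟩ := Ideal.span_singleton_eq_span_singleton.mp
    ((span_mulGenerator I').trans hI.symm)
  exact ⟨I', u, by rw [mul_comm, hu]⟩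

end IdealClass

section PartialZeta

open NumberField NumberField.mixedEmbedding NumberField.Units nonZeroDivisors

variable {K : Type*} [Field K] [NumberField K]

lemma mixedNorm_mixedEmbedding (a : 𝓞 K) :
    mixedEmbedding.norm (mixedEmbedding K a) = (Ideal.absNorm (Ideal.span {a}) : ℝ) := by
  rw [mixedEmbedding.norm_eq_norm, Ideal.absNorm_span_singleton, ← Algebra.coe_norm_int,
    Nat.cast_natAbs, Int.cast_abs, Rat.cast_abs, Rat.cast_intCast]

lemma absNorm_coe_nonZeroDivisors_ne_zero (I : (Ideal (𝓞 K))⁰) :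
    Ideal.absNorm (I : Ideal (𝓞 K)) ≠ 0 :=
  Ideal.absNorm_eq_zero_iff.not.mpr (nonZeroDivisors.coe_ne_zero I)

variable {J : (Ideal (𝓞 K))⁰}

lemma mixedNorm_mulGenerator (I : InverseClassIdeal J) :
    mixedEmbedding.norm (mixedEmbedding K ((mulGenerator I : 𝓞 K) : K)) =
      ((Ideal.absNorm (I : Ideal (𝓞 K)) * Ideal.absNorm (J : Ideal (𝓞 K)) : ℕ) : ℝ) := by
  rw [mixedNorm_mixedEmbedding, span_mulGenerator, map_mul]

lemma mixedNorm_mulGenerator_ne_zero (I : InverseClassIdeal J) :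
    mixedEmbedding.norm (mixedEmbedding K ((mulGenerator I : 𝓞 K) : K)) ≠ 0 := by
  rw [mixedNorm_mulGenerator]
  exact_mod_cast mul_ne_zero (absNorm_coe_nonZeroDivisors_ne_zero I.1)
    (absNorm_coe_nonZeroDivisors_ne_zero J)

/-- The parametrization of the nonzero points of the lattice of `J` by the ideals in the inverse
class and the units. -/
noncomputable def latticePoint (p : InverseClassIdeal J × (𝓞 K)ˣ) :
    idealLattice K (FractionalIdeal.mk0 K J) :=
  ⟨mixedEmbedding K ((p.2 * mulGenerator p.1 : 𝓞 K) : K), (mem_idealLattice K _).mpr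
    ⟨_, (FractionalIdeal.mem_coeIdeal _).mpr
      ⟨_, Ideal.mul_mem_left _ _ (mulGenerator_mem p.1), rfl⟩, rfl⟩⟩

lemma coe_latticePoint (p : InverseClassIdeal J × (𝓞 K)ˣ) :
    (latticePoint p : mixedSpace K) = p.2 • mixedEmbedding K ((mulGenerator p.1 : 𝓞 K) : K) := by
  simp [latticePoint, unitSMul_smul]

lemma latticePoint_injective : Function.Injective (latticePoint (J := J)) := fun _ _ h =>
  units_mul_mulGenerator_injective
    (RingOfIntegers.coe_injective ((mixedEmbedding K).injective (Subtype.ext_iff.mp h)))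

lemma support_cutoffNormPow_subset_range_latticePoint (s : ℂ) :
    Function.support (fun a : idealLattice K (FractionalIdeal.mk0 K J) =>
      cutoffNormPow s (a : mixedSpace K)) ⊆ Set.range latticePoint := by
  rintro ⟨x, hx⟩ hs
  obtain ⟨y, hy, rfl⟩ := (mem_idealLattice K _).mp hx
  obtain ⟨a, ha, rfl⟩ := (FractionalIdeal.mem_coeIdeal _).mp hy
  have ha0 : a ≠ 0 := by
    rintro rfl
    exact hs (by simp [cutoffNormPow])
  obtain ⟨I, u, rfl⟩ := exists_units_mul_mulGenerator_eq ha ha0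
  exact ⟨(I, u), rfl⟩

lemma cutoffNormPow_latticePoint (s : ℂ) (p : InverseClassIdeal J × (𝓞 K)ˣ) :
    cutoffNormPow s (latticePoint p : mixedSpace K) =
      unitCutoff (p.2 • mixedEmbedding K ((mulGenerator p.1 : 𝓞 K) : K)) *
        ((Ideal.absNorm (J : Ideal (𝓞 K)) : ℂ) ^ (-s) *
          (Ideal.absNorm (p.1 : Ideal (𝓞 K)) : ℂ) ^ (-s)) := by
  rw [coe_latticePoint, cutoffNormPow, mixedEmbedding.norm_unit_smul,
    if_neg (mixedNorm_mulGenerator_ne_zero _), mixedNorm_mulGenerator,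
    mul_comm ((Ideal.absNorm (J : Ideal (𝓞 K)) : ℂ) ^ (-s)), ← Complex.natCast_mul_natCast_cpow,
    ← Nat.cast_mul, Complex.cpow_def_of_ne_zero, Complex.ofReal_log (by positivity),
    Complex.ofReal_natCast, mul_comm (-s)]
  exact_mod_cast mul_ne_zero (absNorm_coe_nonZeroDivisors_ne_zero p.1.1)
    (absNorm_coe_nonZeroDivisors_ne_zero J)

lemma tsum_units_cutoffNormPow_latticePoint (s : ℂ) (I : InverseClassIdeal J) :
    ∑' u : (𝓞 K)ˣ, cutoffNormPow s (latticePoint (I, u) : mixedSpace K) =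
      torsionOrder K * (Ideal.absNorm (J : Ideal (𝓞 K)) : ℂ) ^ (-s) *
        (Ideal.absNorm (I : Ideal (𝓞 K)) : ℂ) ^ (-s) := by
  simp only [cutoffNormPow_latticePoint]
  rw [tsum_mul_right, (hasSum_unitCutoff (mixedNorm_mulGenerator_ne_zero I)).tsum_eq, mul_assoc]

lemma torsionOrder_mul_absNorm_cpow_ne_zero (J : (Ideal (𝓞 K))⁰) (s : ℂ) :
    torsionOrder K * (Ideal.absNorm (J : Ideal (𝓞 K)) : ℂ) ^ (-s) ≠ 0 := by
  refine mul_ne_zero (by exact_mod_cast torsionOrder_ne_zero K) ?_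
  rw [Ne, Complex.cpow_eq_zero_iff]
  exact fun h => absNorm_coe_nonZeroDivisors_ne_zero J (by exact_mod_cast h.1)

lemma summable_norm_cutoffNormPow_latticePoint (J : (Ideal (𝓞 K))⁰) {s : ℂ} (hs : 1 < s.re) :
    Summable fun p : InverseClassIdeal J × (𝓞 K)ˣ =>
      ‖cutoffNormPow s (latticePoint p : mixedSpace K)‖ := by
  classical
  exact (smoothHomogeneousFamily_cutoffNormPow.summable_norm _ hs).comp_injective
    latticePoint_injective

lemma summable_norm_absNorm_cpow_inverseClassIdeal (J : (Ideal (𝓞 K))⁰) {s : ℂ} (hs : 1 < s.re) :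
    Summable fun I : InverseClassIdeal J => ‖(Ideal.absNorm (I : Ideal (𝓞 K)) : ℂ) ^ (-s)‖ := by
  have summable_points := summable_norm_cutoffNormPow_latticePoint J hs
  rw [← summable_mul_left_iff (norm_ne_zero_iff.mpr (torsionOrder_mul_absNorm_cpow_ne_zero J s))]
  refine .of_nonneg_of_le (fun I => by positivity) (fun I => ?_) summable_points.prod
  rw [← norm_mul, ← tsum_units_cutoffNormPow_latticePoint]
  exact norm_tsum_le_tsum_norm (summable_points.prod_factor I)

lemma tsum_idealLattice_cutoffNormPow (J : (Ideal (𝓞 K))⁰) {s : ℂ} (hs : 1 < s.re) :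
    ∑' a : idealLattice K (FractionalIdeal.mk0 K J), cutoffNormPow s (a : mixedSpace K) =
      torsionOrder K * (Ideal.absNorm (J : Ideal (𝓞 K)) : ℂ) ^ (-s) *
        ∑' I : InverseClassIdeal J, (Ideal.absNorm (I : Ideal (𝓞 K)) : ℂ) ^ (-s) := by
  rw [← latticePoint_injective.tsum_eq (support_cutoffNormPow_subset_range_latticePoint s),
    (summable_norm_cutoffNormPow_latticePoint J hs).of_norm.tsum_prod, ← tsum_mul_left]
  exact tsum_congr (tsum_units_cutoffNormPow_latticePoint s)

theorem hasHolomorphicExtension_mul_tsum_inverseClassIdeal (J : (Ideal (𝓞 K))⁰) :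
    HasHolomorphicExtension fun s => (1 - (2 : ℂ) ^ (Module.finrank ℚ K * (1 - s))) *
      ∑' I : InverseClassIdeal J, (Ideal.absNorm (I : Ideal (𝓞 K)) : ℂ) ^ (-s) := by
  classical
  have differentiable_inv : Differentiable ℂ fun s : ℂ =>
      (torsionOrder K * (Ideal.absNorm (J : Ideal (𝓞 K)) : ℂ) ^ (-s))⁻¹ := fun s =>
    ((differentiableAt_id.neg.const_cpow (Or.inl (by
      exact_mod_cast absNorm_coe_nonZeroDivisors_ne_zero J))).const_mul _).inv
        (torsionOrder_mul_absNorm_cpow_ne_zero J s)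
  refine ((smoothHomogeneousFamily_cutoffNormPow.hasHolomorphicExtension_mul_tsum
    (idealLattice K (FractionalIdeal.mk0 K J))).mul_left differentiable_inv).congr fun s hs => ?_
  rw [tsum_idealLattice_cutoffNormPow J hs, mixedEmbedding.finrank, mul_left_comm,
    inv_mul_cancel_left₀ (torsionOrder_mul_absNorm_cpow_ne_zero J s)]

end PartialZeta

/-! ### Meromorphic extension to the half-plane -/

lemma isOpen_zero_lt_re : IsOpen {s : ℂ | 0 < s.re} :=
  isOpen_lt continuous_const Complex.continuous_re

lemma meromorphicOrderAt_eq_zero_of_tendsto {f : ℂ → ℂ} {z c : ℂ} {l : Filter ℂ} [l.NeBot]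
    (hl : l ≤ 𝓝[≠] z) (hlim : Tendsto f l (𝓝 c)) (hc : c ≠ 0) :
    meromorphicOrderAt f z = 0 := by
  refine le_antisymm (not_lt.mp fun hpos => hc ?_) (not_lt.mp fun hneg => ?_)
  · exact tendsto_nhds_unique hlim ((tendsto_zero_of_meromorphicOrderAt_pos hpos).mono_left hl)
  · exact not_tendsto_atTop_of_tendsto_nhds hlim.norm (tendsto_norm_cobounded_atTop.comp
      ((tendsto_cobounded_of_meromorphicOrderAt_neg hneg).mono_left hl))

/-- `f` extends from the half-plane `Re s > 1` to a meromorphic function on `Re s > 0` whose order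
at `1` is `n`; a pole of order `k` corresponds to `n = -k`. -/
def HasMeromorphicExtension (f : ℂ → ℂ) (n : ℤ) : Prop :=
  ∃ Z : ℂ → ℂ, MeromorphicOn Z {s | 0 < s.re} ∧ (∀ s : ℂ, 1 < s.re → Z s = f s) ∧
    meromorphicOrderAt Z 1 = n

namespace HasMeromorphicExtension

variable {f g : ℂ → ℂ} {m n : ℤ}

lemma congr (hf : HasMeromorphicExtension f n) (hfg : ∀ s : ℂ, 1 < s.re → g s = f s) :
    HasMeromorphicExtension g n := by
  obtain ⟨Z, hZ, hZf, horder⟩ := hf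
  exact ⟨Z, hZ, fun s hs => (hZf s hs).trans (hfg s hs).symm, horder⟩

lemma of_differentiableOn (hf : DifferentiableOn ℂ f {s | 0 < s.re}) (hf1 : f 1 ≠ 0) :
    HasMeromorphicExtension f 0 := by
  have analyticAt {s : ℂ} (hs : 0 < s.re) : AnalyticAt ℂ f s :=
    hf.analyticAt (isOpen_zero_lt_re.mem_nhds hs)
  have analyticAt_one : AnalyticAt ℂ f 1 := analyticAt (by simp)
  refine ⟨f, fun s hs => (analyticAt hs).meromorphicAt, fun _ _ => rfl, ?_⟩
  exact meromorphicOrderAt_eq_zero_of_tendsto le_rfl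
    (analyticAt_one.continuousAt.tendsto.mono_left nhdsWithin_le_nhds) hf1

lemma mul (hf : HasMeromorphicExtension f m) (hg : HasMeromorphicExtension g n) :
    HasMeromorphicExtension (fun s => f s * g s) (m + n) := by
  obtain ⟨Z, hZ, hZf, hm⟩ := hf
  obtain ⟨W, hW, hWg, hn⟩ := hg
  refine ⟨Z * W, fun s hs => (hZ s hs).mul (hW s hs), fun s hs => ?_, ?_⟩
  · rw [Pi.mul_apply, hZf s hs, hWg s hs]
  · rw [meromorphicOrderAt_mul (hZ 1 (by simp)) (hW 1 (by simp)), hm, hn, WithTop.coe_add]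

lemma inv (hf : HasMeromorphicExtension f n) : HasMeromorphicExtension (fun s => (f s)⁻¹) (-n) := by
  obtain ⟨Z, hZ, hZf, hn⟩ := hf
  refine ⟨Z⁻¹, fun s hs => (hZ s hs).inv, fun s hs => by rw [Pi.inv_apply, hZf s hs], ?_⟩
  rw [meromorphicOrderAt_inv, hn]
  rfl

lemma prod {ι : Type*} {t : Finset ι} {F : ι → ℂ → ℂ} {n : ι → ℤ}
    (hF : ∀ i ∈ t, HasMeromorphicExtension (F i) (n i)) :
    HasMeromorphicExtension (fun s => ∏ i ∈ t, F i s) (∑ i ∈ t, n i) := by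
  choose! Z hZ hZF hn using hF
  refine ⟨∏ i ∈ t, Z i, fun s hs => .prod fun i hi => hZ i hi s hs, fun s hs => ?_, ?_⟩
  · rw [Finset.prod_apply]
    exact Finset.prod_congr rfl fun i hi => hZF i hi s hs
  · rw [meromorphicOrderAt_prod fun i hi => hZ i hi 1 (by simp), Finset.sum_congr rfl hn]
    exact (map_sum (WithTop.addHom : ℤ →+ WithTop ℤ) n t).symm

lemma exists_pole {k : ℕ} (hf : HasMeromorphicExtension f (-k)) :
    ∃ Z : ℂ → ℂ, MeromorphicOn Z {s | 0 < s.re} ∧ (∀ s : ℂ, 1 < s.re → Z s = f s) ∧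
      ∃ H : ℂ → ℂ, AnalyticAt ℂ H 1 ∧ H 1 ≠ 0 ∧ ∀ᶠ s in 𝓝[≠] (1 : ℂ), (s - 1) ^ k * Z s = H s := by
  obtain ⟨Z, hZ, hZf, horder⟩ := hf
  obtain ⟨H, hH, hH1, hZH⟩ := (meromorphicOrderAt_eq_int_iff (hZ 1 (by simp))).mp horder
  refine ⟨Z, hZ, hZf, H, hH, hH1, ?_⟩
  filter_upwards [hZH, self_mem_nhdsWithin] with s hs (hs1 : s ≠ 1)
  rw [hs, smul_eq_mul, zpow_neg, zpow_natCast,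
    mul_inv_cancel_left₀ (pow_ne_zero k (sub_ne_zero.mpr hs1))]

end HasMeromorphicExtension

/-! ### Zeta functions of sets of ideals -/

section IdealZeta

variable {S : Type*} [CommRing S]

/-- The term `[S : I] ^ (-s)` of the zeta function of `S`. -/
noncomputable def indexCpow (s : ℂ) (I : Ideal S) : ℂ := (Nat.card (S ⧸ I) : ℂ) ^ (-s)

/-- The part of the zeta function of `S` contributed by the ideals in `T`. -/
noncomputable def idealZeta (T : Set (Ideal S)) (s : ℂ) : ℂ := ∑' I : T, indexCpow s (I : Ideal S)

variable (S) in
/-- The ideals over which the zeta function of `S` is summed. -/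
def finiteIndexIdeals : Set (Ideal S) := {I | Finite (S ⧸ I)}

variable (S) in
/-- The coefficients of the zeta function of `S`. The value at `0`, which the L-series ignores,
counts the ideals of infinite index, as `Nat.card` is `0` on infinite types. -/
noncomputable def idealCount (n : ℕ) : ℂ := Nat.card {I : Ideal S // Nat.card (S ⧸ I) = n}

lemma card_quotient_ne_zero {I : Ideal S} (hI : I ∈ finiteIndexIdeals S) :
    Nat.card (S ⧸ I) ≠ 0 :=
  Nat.card_ne_zero.mpr ⟨inferInstance, hI⟩

lemma card_quotient_ne_zero_iff {I : Ideal S} :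
    Nat.card (S ⧸ I) ≠ 0 ↔ I ∈ finiteIndexIdeals S :=
  ⟨Nat.finite_of_card_ne_zero, card_quotient_ne_zero⟩

lemma tsum_indexCpow_fiber (s : ℂ) (n : ℕ) :
    ∑' I : {I : finiteIndexIdeals S // Nat.card (S ⧸ (I : Ideal S)) = n},
      indexCpow s (I : Ideal S) = LSeries.term (idealCount S) s n := by
  have term_eq (I : {I : finiteIndexIdeals S // Nat.card (S ⧸ (I : Ideal S)) = n}) :
      indexCpow s (I : Ideal S) = (n : ℂ) ^ (-s) := by
    rw [indexCpow, I.2]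
  rw [tsum_congr term_eq, tsum_const, LSeries.term_def]
  split_ifs with hn
  · subst hn
    have : IsEmpty {I : finiteIndexIdeals S // Nat.card (S ⧸ (I : Ideal S)) = 0} :=
      ⟨fun I => card_quotient_ne_zero I.1.2 I.2⟩
    simp
  · have fiber_equiv : {I : finiteIndexIdeals S // Nat.card (S ⧸ (I : Ideal S)) = n} ≃
        {I : Ideal S // Nat.card (S ⧸ I) = n} :=
      ⟨fun I => ⟨I.1.1, I.2⟩,
        fun I => ⟨⟨I.1, card_quotient_ne_zero_iff.mp (by rw [I.2]; exact hn)⟩, I.2⟩,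
        fun _ => rfl, fun _ => rfl⟩
    rw [Nat.card_congr fiber_equiv, nsmul_eq_mul, Complex.cpow_neg, div_eq_mul_inv, idealCount]

lemma lseriesHasSum_idealCount {s : ℂ}
    (hs : Summable fun I : finiteIndexIdeals S => indexCpow s (I : Ideal S)) :
    LSeriesHasSum (idealCount S) s (idealZeta (finiteIndexIdeals S) s) := by
  have hasSum_sigma := (Equiv.sigmaFiberEquiv fun I : finiteIndexIdeals S =>
    Nat.card (S ⧸ (I : Ideal S))).hasSum_iff.mpr hs.hasSum
  refine hasSum_sigma.sigma fun n => ?_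
  rw [← tsum_indexCpow_fiber]
  exact (hasSum_sigma.summable.sigma_factor n).hasSum

end IdealZeta

/-! ### The Dedekind zeta function -/

section Dedekind

open NumberField nonZeroDivisors

variable (K : Type*) [Field K] [NumberField K]

lemma summable_norm_absNorm_cpow_idealClass (C : ClassGroup (𝓞 K)) {s : ℂ} (hs : 1 < s.re) :
    Summable fun I : {I : (Ideal (𝓞 K))⁰ // ClassGroup.mk0 I = C} =>
      ‖(Ideal.absNorm (I : Ideal (𝓞 K)) : ℂ) ^ (-s)‖ := by
  obtain ⟨J, hJ⟩ := ClassGroup.mk0_surjective C⁻¹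
  obtain rfl : (ClassGroup.mk0 J)⁻¹ = C := by rw [hJ, inv_inv]
  exact summable_norm_absNorm_cpow_inverseClassIdeal J hs

lemma hasHolomorphicExtension_mul_tsum_idealClass (C : ClassGroup (𝓞 K)) :
    HasHolomorphicExtension fun s => (1 - (2 : ℂ) ^ (Module.finrank ℚ K * (1 - s))) *
      ∑' I : {I : (Ideal (𝓞 K))⁰ // ClassGroup.mk0 I = C},
        (Ideal.absNorm (I : Ideal (𝓞 K)) : ℂ) ^ (-s) := by
  obtain ⟨J, hJ⟩ := ClassGroup.mk0_surjective C⁻¹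
  obtain rfl : (ClassGroup.mk0 J)⁻¹ = C := by rw [hJ, inv_inv]
  exact hasHolomorphicExtension_mul_tsum_inverseClassIdeal J

variable {K} in
lemma mem_nonZeroDivisors_iff_mem_finiteIndexIdeals {I : Ideal (𝓞 K)} :
    I ∈ (Ideal (𝓞 K))⁰ ↔ I ∈ finiteIndexIdeals (𝓞 K) := by
  rw [mem_nonZeroDivisors_iff_ne_zero, finiteIndexIdeals, Set.mem_ofPred_eq,
    ← Ideal.absNorm_ne_zero_iff, Ne, Ne, Ideal.absNorm_eq_zero_iff, Ideal.zero_eq_bot]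

/-- The partition of the finite-index ideals of `𝓞 K` into ideal classes. -/
noncomputable def sigmaClassGroupEquiv :
    (Σ C : ClassGroup (𝓞 K), {I : (Ideal (𝓞 K))⁰ // ClassGroup.mk0 I = C}) ≃
      finiteIndexIdeals (𝓞 K) :=
  (Equiv.sigmaFiberEquiv fun I : (Ideal (𝓞 K))⁰ => ClassGroup.mk0 I).trans
    (Equiv.subtypeEquivRight fun _ => mem_nonZeroDivisors_iff_mem_finiteIndexIdeals)

variable {K} in
lemma card_quotient_eq_absNorm (I : Ideal (𝓞 K)) : Nat.card (𝓞 K ⧸ I) = Ideal.absNorm I := by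
  rw [Ideal.absNorm_apply, Submodule.cardQuot_apply]

lemma indexCpow_sigmaClassGroupEquiv (s : ℂ)
    (p : Σ C : ClassGroup (𝓞 K), {I : (Ideal (𝓞 K))⁰ // ClassGroup.mk0 I = C}) :
    indexCpow s (sigmaClassGroupEquiv K p : Ideal (𝓞 K)) =
      (Ideal.absNorm (p.2 : Ideal (𝓞 K)) : ℂ) ^ (-s) := by
  rw [indexCpow, card_quotient_eq_absNorm]
  rfl

lemma summable_norm_absNorm_cpow_sigma {s : ℂ} (hs : 1 < s.re) :
    Summable fun p : Σ C : ClassGroup (𝓞 K), {I : (Ideal (𝓞 K))⁰ // ClassGroup.mk0 I = C} =>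
      ‖(Ideal.absNorm (p.2 : Ideal (𝓞 K)) : ℂ) ^ (-s)‖ :=
  (summable_sigma_of_nonneg fun _ => norm_nonneg _).mpr
    ⟨fun C => summable_norm_absNorm_cpow_idealClass K C hs, .of_finite⟩

lemma summable_indexCpow_ringOfIntegers {s : ℂ} (hs : 1 < s.re) :
    Summable fun I : finiteIndexIdeals (𝓞 K) => indexCpow s (I : Ideal (𝓞 K)) := by
  rw [← (sigmaClassGroupEquiv K).summable_iff]
  exact (summable_norm_absNorm_cpow_sigma K hs).of_norm.congr fun p =>
    indexCpow_sigmaClassGroupEquiv K s p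

lemma hasHolomorphicExtension_mul_idealZeta_ringOfIntegers :
    HasHolomorphicExtension fun s => (1 - (2 : ℂ) ^ (Module.finrank ℚ K * (1 - s))) *
      idealZeta (finiteIndexIdeals (𝓞 K)) s := by
  refine (HasHolomorphicExtension.sum (t := Finset.univ) fun C _ =>
    hasHolomorphicExtension_mul_tsum_idealClass K C).congr fun s hs => ?_
  rw [idealZeta, ← (sigmaClassGroupEquiv K).tsum_eq,
    tsum_congr (indexCpow_sigmaClassGroupEquiv K s),
    (summable_norm_absNorm_cpow_sigma K hs).of_norm.tsum_sigma, tsum_fintype, Finset.mul_sum]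

lemma one_sub_two_cpow_ne_zero {d : ℕ} (hd : 0 < d) {s : ℂ} (hs : 1 < s.re) :
    1 - (2 : ℂ) ^ (d * (1 - s)) ≠ 0 := by
  intro h
  have norm_eq_one : ‖((2 : ℝ) : ℂ) ^ (d * (1 - s))‖ = 1 := by
    rw [Complex.ofReal_ofNat, ← sub_eq_zero.mp h, norm_one]
  rw [Complex.norm_cpow_eq_rpow_re_of_pos two_pos] at norm_eq_one
  have re_neg : (d * (1 - s)).re < 0 := by
    rw [← Complex.ofReal_natCast, Complex.re_ofReal_mul, Complex.sub_re, Complex.one_re]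
    exact mul_neg_of_pos_of_neg (by exact_mod_cast hd) (by linarith)
  exact (Real.rpow_lt_one_of_one_lt_of_neg one_lt_two re_neg).ne norm_eq_one

lemma tendsto_sub_one_mul_idealZeta_ringOfIntegers :
    Tendsto (fun s : ℂ => (s - 1) * idealZeta (finiteIndexIdeals (𝓞 K)) s)
      (map Complex.ofReal (𝓝[>] 1)) (𝓝 (dedekindZeta_residue K)) := by
  refine tendsto_map'_iff.mpr ((tendsto_sub_one_mul_dedekindZeta_nhdsGT K).congr' ?_)
  filter_upwards [self_mem_nhdsWithin] with s (hs : 1 < s)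
  have lseries := lseriesHasSum_idealCount
    (summable_indexCpow_ringOfIntegers K (s := s) (by simpa using hs))
  have idealCount_eq : idealCount (𝓞 K) =
      fun n => (Nat.card {I : Ideal (𝓞 K) // Ideal.absNorm I = n} : ℂ) := by
    funext n
    simp only [idealCount, card_quotient_eq_absNorm]
  rw [Function.comp_apply, ← lseries.LSeries_eq, idealCount_eq, dedekindZeta]

lemma map_ofReal_nhdsGT_one_le : map Complex.ofReal (𝓝[>] 1) ≤ 𝓝[≠] (1 : ℂ) := by
  refine tendsto_nhdsWithin_iff.mpr ⟨?_, ?_⟩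
  · exact (Complex.continuous_ofReal.tendsto' 1 1 Complex.ofReal_one).mono_left nhdsWithin_le_nhds
  · filter_upwards [self_mem_nhdsWithin] with s (hs : 1 < s)
    simpa using hs.ne'

theorem hasMeromorphicExtension_idealZeta_ringOfIntegers :
    HasMeromorphicExtension (idealZeta (finiteIndexIdeals (𝓞 K))) (-1) := by
  obtain ⟨A, hA, hζA⟩ := hasHolomorphicExtension_mul_idealZeta_ringOfIntegers K
  let Z (s : ℂ) : ℂ := A s / (1 - (2 : ℂ) ^ (Module.finrank ℚ K * (1 - s)))
  have hZ {s : ℂ} (hs : 0 < s.re) : MeromorphicAt Z s := by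
    have : Differentiable ℂ fun s : ℂ => 1 - (2 : ℂ) ^ (Module.finrank ℚ K * (1 - s)) := fun s =>
      DifferentiableAt.const_sub (DifferentiableAt.const_cpow (by fun_prop) (by simp)) 1
    exact (hA.analyticAt (isOpen_zero_lt_re.mem_nhds hs)).meromorphicAt.div
      (this.analyticAt s).meromorphicAt
  have hZζ {s : ℂ} (hs : 1 < s.re) : Z s = idealZeta (finiteIndexIdeals (𝓞 K)) s := by
    rw [div_eq_iff (one_sub_two_cpow_ne_zero Module.finrank_pos hs), ← hζA s hs, mul_comm]
  have sub_one_meromorphic : MeromorphicAt (fun s : ℂ => s - 1) 1 := by fun_prop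
  have order_mul : meromorphicOrderAt ((fun s : ℂ => s - 1) * Z) 1 = 0 := by
    refine meromorphicOrderAt_eq_zero_of_tendsto map_ofReal_nhdsGT_one_le
      ((tendsto_sub_one_mul_idealZeta_ringOfIntegers K).congr' ?_)
      (by exact_mod_cast dedekindZeta_residue_ne_zero K)
    filter_upwards [image_mem_map self_mem_nhdsWithin]
    rintro _ ⟨s, hs, rfl⟩
    rw [Pi.mul_apply, hZζ (by simpa using hs)]
  refine ⟨Z, fun s hs => hZ hs, fun s hs => hZζ hs, ?_⟩
  rw [meromorphicOrderAt_mul sub_one_meromorphic (hZ (by simp)),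
    meromorphicOrderAt_id_sub_const] at order_mul
  cases h : meromorphicOrderAt Z 1 with
  | top => simp [h] at order_mul
  | coe n =>
    rw [h] at order_mul
    have : 1 + n = 0 := by exact_mod_cast order_mul
    exact congrArg _ (by lia)

end Dedekind

/-! ### The part of the zeta function supported on an element -/

section PrimaryCoprime

variable {S : Type*} [CommRing S]

/-- The finite-index ideals supported at the primes containing `c`. -/
def primaryIdeals (c : S) : Set (Ideal S) := {I ∈ finiteIndexIdeals S | c ∈ I.radical}

/-- The finite-index ideals modulo which `c` is invertible. -/
def coprimeIdeals (c : S) : Set (Ideal S) :=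
  {I ∈ finiteIndexIdeals S | IsCoprime (Ideal.span {c}) I}

lemma exists_pow_isIdempotentElem {M : Type*} [Monoid M] [Finite M] (x : M) :
    ∃ n, 0 < n ∧ IsIdempotentElem (x ^ n) := by
  obtain ⟨i, j, hij, hpow⟩ : ∃ i j, i < j ∧ x ^ i = x ^ j := by
    obtain ⟨i, j, hne, hpow⟩ := Finite.exists_ne_map_eq_of_infinite (x ^ · : ℕ → M)
    rcases hne.lt_or_gt with hij | hji
    exacts [⟨i, j, hij, hpow⟩, ⟨j, i, hji, hpow.symm⟩]
  obtain ⟨p, rfl⟩ := Nat.exists_eq_add_of_lt hij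
  set period := p + 1 with hperiod
  have pow_add_period (m : ℕ) (hm : i ≤ m) (t : ℕ) : x ^ (m + t * period) = x ^ m := by
    induction t with
    | zero => rw [zero_mul, add_zero]
    | succ t ih =>
      obtain ⟨r, rfl⟩ := Nat.exists_eq_add_of_le hm
      calc x ^ (i + r + (t + 1) * period)
          = x ^ (i + p + 1) * x ^ (r + t * period) := by rw [← pow_add]; congr 1; lia
        _ = x ^ (i + r + t * period) := by rw [← hpow, ← pow_add, add_assoc]
        _ = x ^ (i + r) := ih
  refine ⟨(i + 1) * period, by positivity, ?_⟩
  rw [IsIdempotentElem, ← pow_add]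
  exact pow_add_period _ (by nlinarith) _

lemma isCoprime_of_mem_radical {c : S} {I J : Ideal S} (hI : c ∈ I.radical)
    (hJ : IsCoprime (Ideal.span {c}) J) : IsCoprime I J := by
  obtain ⟨n, hn⟩ := hI
  have span_pow_le : Ideal.span {c} ^ n ≤ I := by
    rwa [Ideal.span_singleton_pow, Ideal.span_singleton_le_iff_mem]
  rw [Ideal.isCoprime_iff_sup_eq]
  exact eq_top_mono (sup_le_sup_right span_pow_le J) (Ideal.isCoprime_iff_sup_eq.mp hJ.pow_left)

lemma le_of_inf_le_of_isCoprime {A A' B : Ideal S} (h : A ⊓ B ≤ A') (hcop : IsCoprime A' B) :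
    A ≤ A' :=
  calc A = A * A' ⊔ A * B := by
        rw [← Ideal.mul_sup, Ideal.isCoprime_iff_sup_eq.mp hcop, Ideal.mul_top]
    _ ≤ A' := sup_le Ideal.mul_le_right (Ideal.mul_le_inf.trans h)

lemma card_quotient_inf {I J : Ideal S} (h : IsCoprime I J) :
    Nat.card (S ⧸ I ⊓ J) = Nat.card (S ⧸ I) * Nat.card (S ⧸ J) := by
  rw [Nat.card_congr (Ideal.quotientInfEquivQuotientProd I J h).toEquiv, Nat.card_prod]

lemma mem_finiteIndexIdeals_of_le {I J : Ideal S} (hI : I ∈ finiteIndexIdeals S) (hIJ : I ≤ J) :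
    J ∈ finiteIndexIdeals S :=
  have : Finite (S ⧸ I) := hI
  Finite.of_surjective _ (Ideal.Quotient.factor_surjective hIJ)

lemma inf_mem_finiteIndexIdeals {c : S} (I : primaryIdeals c) (J : coprimeIdeals c) :
    (I ⊓ J : Ideal S) ∈ finiteIndexIdeals S := by
  rw [← card_quotient_ne_zero_iff, card_quotient_inf (isCoprime_of_mem_radical I.2.2 J.2.2)]
  exact mul_ne_zero (card_quotient_ne_zero I.2.1) (card_quotient_ne_zero J.2.1)

/-- A power `e` of `c` is idempotent modulo `I`, and `I = (I + (e)) ∩ (I + (1 - e))`. -/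
lemma exists_inf_eq_of_mem_finiteIndexIdeals (c : S) {I : Ideal S}
    (hI : I ∈ finiteIndexIdeals S) : ∃ A ∈ primaryIdeals c, ∃ B ∈ coprimeIdeals c, A ⊓ B = I := by
  have : Finite (S ⧸ I) := hI
  obtain ⟨n, hn, idem⟩ := exists_pow_isIdempotentElem (Ideal.Quotient.mk I c)
  have mul_mem : c ^ n * (1 - c ^ n) ∈ I := by
    rw [← Ideal.Quotient.eq_zero_iff_mem]
    simpa only [map_mul, map_pow, map_sub, map_one] using idem.mul_one_sub_self
  let A := I ⊔ Ideal.span {c ^ n}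
  let B := I ⊔ Ideal.span {1 - c ^ n}
  have hA : A ∈ primaryIdeals c := ⟨mem_finiteIndexIdeals_of_le hI le_sup_left,
    n, Ideal.mem_sup_right (Ideal.mem_span_singleton_self _)⟩
  have hB : B ∈ coprimeIdeals c := ⟨mem_finiteIndexIdeals_of_le hI le_sup_left,
    Ideal.isCoprime_iff_exists.mpr ⟨c ^ n,
      Ideal.mem_span_singleton.mpr (dvd_pow_self c hn.ne'), 1 - c ^ n,
      Ideal.mem_sup_right (Ideal.mem_span_singleton_self _), add_sub_cancel _ _⟩⟩
  refine ⟨A, hA, B, hB, le_antisymm ?_ (le_inf le_sup_left le_sup_left)⟩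
  rw [← Ideal.mul_eq_inf_of_isCoprime (isCoprime_of_mem_radical hA.2 hB.2), Ideal.sup_mul,
    Ideal.mul_sup (Ideal.span {c ^ n}), Ideal.span_singleton_mul_span_singleton]
  exact sup_le Ideal.mul_le_left (sup_le Ideal.mul_le_right
    ((Ideal.span_singleton_le_iff_mem I).mpr mul_mem))

/-- The factorization of a finite-index ideal into a part supported at `c` and a part prime
to `c`. -/
noncomputable def primaryCoprimeEquiv (c : S) :
    primaryIdeals c × coprimeIdeals c ≃ finiteIndexIdeals S :=
  Equiv.ofBijective (fun p => ⟨p.1 ⊓ p.2, inf_mem_finiteIndexIdeals p.1 p.2⟩) <| by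
    constructor
    · rintro ⟨⟨I, hI⟩, ⟨J, hJ⟩⟩ ⟨⟨I', hI'⟩, ⟨J', hJ'⟩⟩ h
      have inf_eq : I ⊓ J = I' ⊓ J' := Subtype.ext_iff.mp h
      have hIJ' := isCoprime_of_mem_radical hI.2 hJ'.2
      have hI'J := isCoprime_of_mem_radical hI'.2 hJ.2
      have hI_eq : I = I' := le_antisymm
        (le_of_inf_le_of_isCoprime (inf_eq.trans_le inf_le_left) hI'J)
        (le_of_inf_le_of_isCoprime (inf_eq.symm.trans_le inf_le_left) hIJ')
      have hJ_eq : J = J' := le_antisymm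
        (le_of_inf_le_of_isCoprime ((inf_comm J I).trans_le (inf_eq.trans_le inf_le_right))
          hIJ'.symm)
        (le_of_inf_le_of_isCoprime ((inf_comm J' I').trans_le (inf_eq.symm.trans_le inf_le_right))
          hI'J.symm)
      subst hI_eq hJ_eq
      rfl
    · rintro ⟨I, hI⟩
      obtain ⟨A, hA, B, hB, hAB⟩ := exists_inf_eq_of_mem_finiteIndexIdeals c hI
      exact ⟨(⟨A, hA⟩, ⟨B, hB⟩), Subtype.ext hAB⟩

lemma indexCpow_primaryCoprimeEquiv (s : ℂ) {c : S} (p : primaryIdeals c × coprimeIdeals c) :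
    indexCpow s (primaryCoprimeEquiv c p : Ideal S) =
      indexCpow s (p.1 : Ideal S) * indexCpow s (p.2 : Ideal S) := by
  change indexCpow s (p.1 ⊓ p.2 : Ideal S) = _
  rw [indexCpow, card_quotient_inf (isCoprime_of_mem_radical p.1.2.2 p.2.2.2), Nat.cast_mul,
    Complex.natCast_mul_natCast_cpow, indexCpow, indexCpow]

lemma hasSum_indexCpow_of_primary_coprime {c : S} {s : ℂ}
    (hprimary : Summable fun I : primaryIdeals c => indexCpow s (I : Ideal S))
    (hcoprime : Summable fun I : coprimeIdeals c => indexCpow s (I : Ideal S)) :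
    HasSum (fun I : finiteIndexIdeals S => indexCpow s (I : Ideal S))
      (idealZeta (primaryIdeals c) s * idealZeta (coprimeIdeals c) s) := by
  rw [← (primaryCoprimeEquiv c).hasSum_iff]
  exact (hasSum_mul_of_hasSum hprimary.hasSum hcoprime.hasSum).congr_fun
    (indexCpow_primaryCoprimeEquiv s)

end PrimaryCoprime

section Convergence

variable {S : Type*} [CommRing S] {T : Set (Ideal S)}

lemma norm_indexCpow {I : Ideal S} (hI : I ∈ finiteIndexIdeals S) (s : ℂ) :
    ‖indexCpow s I‖ = (Nat.card (S ⧸ I) : ℝ) ^ (-s.re) := by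
  rw [indexCpow, Complex.norm_natCast_cpow_of_pos (Nat.pos_of_ne_zero (card_quotient_ne_zero hI)),
    Complex.neg_re]

lemma differentiable_indexCpow {I : Ideal S} (hI : I ∈ finiteIndexIdeals S) :
    Differentiable ℂ fun s => indexCpow s I := fun _ =>
  differentiableAt_id.neg.const_cpow (.inl (Nat.cast_ne_zero.mpr (card_quotient_ne_zero hI)))

/-- On `Re s > σ` every term is dominated by its value at `σ`, as the indices are at least `1`. -/
lemma differentiableOn_idealZeta (hT : T ⊆ finiteIndexIdeals S)
    (hsum : ∀ s : ℂ, 0 < s.re → Summable fun I : T => indexCpow s (I : Ideal S)) :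
    DifferentiableOn ℂ (idealZeta T) {s | 0 < s.re} := by
  intro s₀ (hs₀ : 0 < s₀.re)
  have half_pos : 0 < ((s₀.re / 2 : ℝ) : ℂ).re := by rw [Complex.ofReal_re]; linarith
  have nhds : {s : ℂ | s₀.re / 2 < s.re} ∈ 𝓝 s₀ :=
    (isOpen_lt continuous_const Complex.continuous_re).mem_nhds (half_lt_self hs₀)
  refine (differentiableAt_tsum_of_eventually_norm_le
    (fun I : T => differentiable_indexCpow (hT I.2)) (hsum _ half_pos).norm nhds
    (.of_forall fun I s (hs : s₀.re / 2 < s.re) => ?_)).differentiableWithinAt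
  rw [norm_indexCpow (hT I.2), norm_indexCpow (hT I.2), Complex.ofReal_re]
  have one_le_card : (1 : ℝ) ≤ Nat.card (S ⧸ (I : Ideal S)) := by
    exact_mod_cast Nat.one_le_iff_ne_zero.mpr (card_quotient_ne_zero (hT I.2))
  exact Real.rpow_le_rpow_of_exponent_le one_le_card (neg_le_neg hs.le)

lemma card_quotient_top : Nat.card (S ⧸ (⊤ : Ideal S)) = 1 :=
  have : Subsingleton (S ⧸ (⊤ : Ideal S)) := Ideal.Quotient.subsingleton_iff.mpr rfl
  Nat.card_unique

lemma top_mem_primaryIdeals (c : S) : ⊤ ∈ primaryIdeals c :=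
  ⟨card_quotient_ne_zero_iff.mp (by rw [card_quotient_top]; exact one_ne_zero), by
    rw [Ideal.radical_top]; exact Submodule.mem_top⟩

lemma idealZeta_one_ne_zero (htop : ⊤ ∈ T)
    (hsum : Summable fun I : T => indexCpow 1 (I : Ideal S)) : idealZeta T 1 ≠ 0 := by
  have term_eq_norm (I : T) : indexCpow 1 (I : Ideal S) = (‖indexCpow 1 (I : Ideal S)‖ : ℝ) := by
    rw [indexCpow, Complex.cpow_neg_one, norm_inv, Complex.norm_natCast, Complex.ofReal_inv,
      Complex.ofReal_natCast]
  rw [idealZeta, tsum_congr term_eq_norm, ← Complex.ofReal_tsum, Complex.ofReal_ne_zero]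
  refine (hsum.norm.tsum_pos (fun _ => norm_nonneg _) ⟨⊤, htop⟩ ?_).ne'
  rw [indexCpow, card_quotient_top, Nat.cast_one, Complex.one_cpow, norm_one]
  exact one_pos

lemma hasMeromorphicExtension_idealZeta_primaryIdeals {c : S} (hsum : ∀ s : ℂ, 0 < s.re →
    Summable fun I : primaryIdeals c => indexCpow s (I : Ideal S)) :
    HasMeromorphicExtension (idealZeta (primaryIdeals c)) 0 :=
  .of_differentiableOn (differentiableOn_idealZeta (fun _ hI => hI.1) hsum)
    (idealZeta_one_ne_zero (top_mem_primaryIdeals c) (hsum 1 (by simp)))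

end Convergence

/-! ### Ideals of a subring prime to the conductor -/

section Conductor

variable {R O : Type*} [CommRing R] [CommRing O]

/-- `c` lies in the conductor of `O` over the image of `R`: all multiples of `φ c` in `O` come
from `R`. -/
def IsConductor (φ : R →+* O) (c : R) : Prop := ∀ y : O, ∃ r : R, φ r = φ c * y

lemma isCoprime_span_singleton_iff {c : R} {I : Ideal R} :
    IsCoprime (Ideal.span {c}) I ↔ ∃ w, 1 - c * w ∈ I := by
  simp only [Ideal.isCoprime_iff_exists, Ideal.mem_span_singleton]
  constructor
  · rintro ⟨_, ⟨w, rfl⟩, b, hb, hab⟩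
    exact ⟨w, by rwa [← hab, add_sub_cancel_left]⟩
  · rintro ⟨w, hw⟩
    exact ⟨c * w, dvd_mul_right c w, _, hw, add_sub_cancel _ _⟩

lemma mem_of_mul_mem_of_isCoprime {c y : R} {I : Ideal R} (hI : IsCoprime (Ideal.span {c}) I)
    (hy : c * y ∈ I) : y ∈ I := by
  obtain ⟨w, hw⟩ := isCoprime_span_singleton_iff.mp hI
  rw [show y = y * (1 - c * w) + w * (c * y) by ring]
  exact I.add_mem (I.mul_mem_left _ hw) (I.mul_mem_left _ hy)

lemma isCoprime_span_singleton_map {φ : R →+* O} {c : R} {J : Ideal R}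
    (hJ : IsCoprime (Ideal.span {c}) J) : IsCoprime (Ideal.span {φ c}) (J.map φ) := by
  obtain ⟨w, hw⟩ := isCoprime_span_singleton_iff.mp hJ
  exact isCoprime_span_singleton_iff.mpr ⟨φ w, by simpa using Ideal.mem_map_of_mem φ hw⟩

namespace IsConductor

variable {φ : R →+* O} {c : R}

lemma exists_mem_map_eq (hc : IsConductor φ c) {J : Ideal R} {y : O} (hy : y ∈ J.map φ) :
    ∃ r ∈ J, φ r = φ c * y := by
  induction hy using Submodule.closure_induction with
  | zero => exact ⟨0, J.zero_mem, by rw [map_zero, mul_zero]⟩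
  | add x y _ _ hx hy =>
    obtain ⟨r, hr, hrx⟩ := hx
    obtain ⟨t, ht, hty⟩ := hy
    exact ⟨r + t, J.add_mem hr ht, by rw [map_add, hrx, hty, mul_add]⟩
  | smul_mem a x hx =>
    obtain ⟨j, hj, rfl⟩ := hx
    obtain ⟨r, hr⟩ := hc a
    exact ⟨r * j, J.mul_mem_left _ hj, by rw [map_mul, hr, smul_eq_mul, mul_assoc]⟩

lemma isCoprime_comap (hc : IsConductor φ c) {I : Ideal O}
    (hI : IsCoprime (Ideal.span {φ c}) I) : IsCoprime (Ideal.span {c}) (I.comap φ) := by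
  obtain ⟨w, hw⟩ := isCoprime_span_singleton_iff.mp hI
  obtain ⟨r, hr⟩ := hc (w * w)
  refine isCoprime_span_singleton_iff.mpr ⟨r, ?_⟩
  rw [Ideal.mem_comap, map_sub, map_one, map_mul, hr,
    show 1 - φ c * (φ c * (w * w)) = (1 + φ c * w) * (1 - φ c * w) by ring]
  exact I.mul_mem_left _ hw

lemma map_comap_eq (hc : IsConductor φ c) {I : Ideal O}
    (hI : IsCoprime (Ideal.span {φ c}) I) : (I.comap φ).map φ = I := by
  refine le_antisymm Ideal.map_comap_le fun y hy => ?_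
  obtain ⟨r, hr⟩ := hc y
  refine mem_of_mul_mem_of_isCoprime (isCoprime_span_singleton_map (hc.isCoprime_comap hI)) ?_
  rw [← hr]
  exact Ideal.mem_map_of_mem φ (by rw [Ideal.mem_comap, hr]; exact I.mul_mem_left _ hy)

lemma comap_map_eq (hc : IsConductor φ c) (hφ : Function.Injective φ) {J : Ideal R}
    (hJ : IsCoprime (Ideal.span {c}) J) : (J.map φ).comap φ = J := by
  refine le_antisymm (fun x hx => mem_of_mul_mem_of_isCoprime hJ ?_) Ideal.le_comap_map
  obtain ⟨r, hr, hrx⟩ := hc.exists_mem_map_eq (Ideal.mem_comap.mp hx)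
  rwa [← hφ (hrx.trans (map_mul φ c x).symm)]

lemma card_quotient_comap (hc : IsConductor φ c) {I : Ideal O}
    (hI : IsCoprime (Ideal.span {φ c}) I) : Nat.card (R ⧸ I.comap φ) = Nat.card (O ⧸ I) := by
  obtain ⟨w, hw⟩ := isCoprime_span_singleton_iff.mp hI
  refine Nat.card_eq_of_bijective (Ideal.quotientMap I φ le_rfl)
    ⟨Ideal.quotientMap_injective, fun x => ?_⟩
  obtain ⟨y, rfl⟩ := Ideal.Quotient.mk_surjective x
  obtain ⟨r, hr⟩ := hc (w * y)
  refine ⟨Ideal.Quotient.mk _ r, ?_⟩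
  rw [Ideal.quotientMap_mk, hr, eq_comm, Ideal.Quotient.eq,
    show y - φ c * (w * y) = y * (1 - φ c * w) by ring]
  exact I.mul_mem_left _ hw

lemma comap_mem_coprimeIdeals (hc : IsConductor φ c) {I : Ideal O}
    (hI : I ∈ coprimeIdeals (φ c)) : I.comap φ ∈ coprimeIdeals c :=
  ⟨card_quotient_ne_zero_iff.mp (by
    rw [hc.card_quotient_comap hI.2]; exact card_quotient_ne_zero hI.1), hc.isCoprime_comap hI.2⟩

lemma map_mem_coprimeIdeals (hc : IsConductor φ c) (hφ : Function.Injective φ) {J : Ideal R}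
    (hJ : J ∈ coprimeIdeals c) : J.map φ ∈ coprimeIdeals (φ c) := by
  have hcop : IsCoprime (Ideal.span {φ c}) (J.map φ) := isCoprime_span_singleton_map hJ.2
  refine ⟨card_quotient_ne_zero_iff.mp ?_, hcop⟩
  rw [← hc.card_quotient_comap hcop, hc.comap_map_eq hφ hJ.2]
  exact card_quotient_ne_zero hJ.1

/-- Away from the conductor, contraction identifies the ideals of `O` with those of `R`. -/
def comapEquiv (hc : IsConductor φ c) (hφ : Function.Injective φ) :
    coprimeIdeals (φ c) ≃ coprimeIdeals c where
  toFun I := ⟨I.1.comap φ, hc.comap_mem_coprimeIdeals I.2⟩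
  invFun J := ⟨J.1.map φ, hc.map_mem_coprimeIdeals hφ J.2⟩
  left_inv I := Subtype.ext (hc.map_comap_eq I.2.2)
  right_inv J := Subtype.ext (hc.comap_map_eq hφ J.2.2)

lemma indexCpow_comapEquiv (hc : IsConductor φ c) (hφ : Function.Injective φ) (s : ℂ)
    (I : coprimeIdeals (φ c)) :
    indexCpow s (hc.comapEquiv hφ I : Ideal R) = indexCpow s (I : Ideal O) := by
  rw [indexCpow, indexCpow, ← hc.card_quotient_comap I.2.2]
  rfl

lemma hasSum_indexCpow_coprimeIdeals (hc : IsConductor φ c) (hφ : Function.Injective φ) {s : ℂ}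
    (hs : Summable fun I : coprimeIdeals (φ c) => indexCpow s (I : Ideal O)) :
    HasSum (fun J : coprimeIdeals c => indexCpow s (J : Ideal R))
      (idealZeta (coprimeIdeals (φ c)) s) := by
  rw [← (hc.comapEquiv hφ).hasSum_iff]
  exact hs.hasSum.congr_fun (hc.indexCpow_comapEquiv hφ s)

end IsConductor

end Conductor

/-! ### Ideals of a subring supported on the conductor -/

lemma summable_comp_of_encard_fiber_le {α β : Type*} {f : β → ℝ} (hf : Summable f)
    (hf0 : ∀ b, 0 ≤ f b) {g : α → β} {N : ℕ} (hg : ∀ b, {a | g a = b}.encard ≤ N) :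
    Summable fun a => f (g a) := by
  have fiber_finite (b : β) : Finite {a // g a = b} :=
    (Set.encard_le_coe_iff_finite_ncard_le.mp (hg b)).1
  have card_fiber_le (b : β) : Nat.card {a // g a = b} ≤ N :=
    (Set.encard_le_coe_iff_finite_ncard_le.mp (hg b)).2
  have term_eq (b : β) (a : {a // g a = b}) : f (g a) = f b := congrArg f a.2
  rw [← (Equiv.sigmaFiberEquiv g).summable_iff]
  refine (summable_sigma_of_nonneg fun x => hf0 _).mpr ⟨fun b => .of_finite, ?_⟩
  refine (hf.mul_left (N : ℝ)).of_nonneg_of_le (fun b => tsum_nonneg fun a => hf0 _) fun b => ?_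
  calc ∑' a : {a // g a = b}, f (g a) = Nat.card {a // g a = b} * f b := by
        rw [tsum_congr (term_eq b), tsum_const, nsmul_eq_mul]
    _ ≤ N * f b := by gcongr; exacts [hf0 b, card_fiber_le b]

lemma encard_le_two_pow_of_injOn {α Q : Type*} [Finite Q] {s : Set α} {f : α → Set Q}
    (hf : Set.InjOn f s) : s.encard ≤ 2 ^ Nat.card Q := by
  have := Fintype.ofFinite Q
  calc s.encard ≤ (Set.univ : Set (Set Q)).encard :=
        Set.encard_le_encard_of_injOn (Set.mapsTo_univ f s) hf
    _ = 2 ^ Nat.card Q := by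
        rw [Set.encard_univ, ENat.card_eq_coe_fintype_card, Fintype.card_set,
          Nat.card_eq_fintype_card, Nat.cast_pow, Nat.cast_ofNat]

section ConductorPrimary

variable {R O : Type*} [CommRing R] [CommRing O]

lemma range_mulLeft_eq_span (c : O) :
    (AddMonoidHom.mulLeft c).range = (Ideal.span {c}).toAddSubgroup := by
  ext x
  simp only [AddMonoidHom.mem_range, AddMonoidHom.coe_mulLeft, Submodule.mem_toAddSubgroup,
    Ideal.mem_span_singleton, dvd_iff_exists_eq_mul_right, eq_comm]

lemma relIndex_map_mulLeft {c : O} (hc : IsLeftRegular c) {I : Ideal O}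
    (hI : I ∈ finiteIndexIdeals O) :
    (I.toAddSubgroup.map (AddMonoidHom.mulLeft c)).relIndex I.toAddSubgroup =
      Nat.card (O ⧸ Ideal.span {c}) := by
  have ker_eq : (AddMonoidHom.mulLeft c).ker = ⊥ := (AddMonoidHom.ker_eq_bot_iff _).mpr hc
  have map_le : I.toAddSubgroup.map (AddMonoidHom.mulLeft c) ≤ I.toAddSubgroup := by
    rintro _ ⟨x, hx, rfl⟩
    exact I.mul_mem_left c hx
  have index_eq := AddSubgroup.relIndex_mul_index map_le
  rw [AddSubgroup.index_map, ker_eq, sup_bot_eq, range_mulLeft_eq_span,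
    mul_comm] at index_eq
  exact Nat.eq_of_mul_eq_mul_left (Nat.pos_of_ne_zero (card_quotient_ne_zero hI)) index_eq

lemma card_quotient_map_dvd {φ : R →+* O} (hφ : Function.Injective φ) (J : Ideal R) :
    Nat.card (O ⧸ J.map φ) ∣ Nat.card (R ⧸ J) * φ.toAddMonoidHom.range.index := by
  have map_le : J.toAddSubgroup.map φ.toAddMonoidHom ≤ (J.map φ).toAddSubgroup := by
    rintro _ ⟨x, hx, rfl⟩
    exact Ideal.mem_map_of_mem φ hx
  have index_dvd := AddSubgroup.index_dvd_of_le map_le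
  rwa [AddSubgroup.index_map, (AddMonoidHom.ker_eq_bot_iff φ.toAddMonoidHom).mpr hφ,
    sup_bot_eq] at index_dvd

namespace IsConductor

variable {φ : R →+* O} {c : R}

lemma range_index_ne_zero (hc : IsConductor φ c)
    (hfin : Ideal.span {φ c} ∈ finiteIndexIdeals O) : φ.toAddMonoidHom.range.index ≠ 0 := by
  have span_le : (Ideal.span {φ c}).toAddSubgroup ≤ φ.toAddMonoidHom.range := by
    intro x hx
    obtain ⟨y, rfl⟩ := Ideal.mem_span_singleton.mp hx
    exact hc y
  exact ne_zero_of_dvd_ne_zero (card_quotient_ne_zero hfin) (AddSubgroup.index_dvd_of_le span_le)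

/-- If `J O = I` then `c I ⊆ J ⊆ I`, so `J` is determined by its image in `I / c I`, a group of
order `[O : c O]`. -/
lemma encard_map_eq_le (hc : IsConductor φ c) (hφ : Function.Injective φ)
    (hreg : IsLeftRegular (φ c)) (hfin : Ideal.span {φ c} ∈ finiteIndexIdeals O) {I : Ideal O}
    (hI : I ∈ finiteIndexIdeals O) :
    {J : Ideal R | J.map φ = I}.encard ≤ 2 ^ Nat.card (O ⧸ Ideal.span {φ c}) := by
  let B := I.toAddSubgroup
  let cB := (B.map (AddMonoidHom.mulLeft (φ c))).addSubgroupOf B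
  have card_quotient : Nat.card (B ⧸ cB) = Nat.card (O ⧸ Ideal.span {φ c}) :=
    relIndex_map_mulLeft hreg hI
  have : Finite (B ⧸ cB) :=
    Nat.finite_of_card_ne_zero (card_quotient ▸ card_quotient_ne_zero hfin)
  let image (J : Ideal R) : AddSubgroup B :=
    (J.toAddSubgroup.map φ.toAddMonoidHom).addSubgroupOf B
  have map_le {J : Ideal R} (hJ : J.map φ = I) :
      J.toAddSubgroup.map φ.toAddMonoidHom ≤ B := by
    rintro _ ⟨r, hr, rfl⟩
    exact hJ.le (Ideal.mem_map_of_mem φ hr)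
  have cB_le {J : Ideal R} (hJ : J.map φ = I) : cB ≤ image J := by
    rintro _ ⟨x, hx, hxy⟩
    obtain ⟨r, hr, hrx⟩ := hc.exists_mem_map_eq (hJ.ge hx)
    exact ⟨r, hr, hrx.trans hxy⟩
  rw [← card_quotient]
  refine encard_le_two_pow_of_injOn
    (f := fun J => ((image J).map (QuotientAddGroup.mk' cB) : Set (B ⧸ cB)))
    fun J hJ J' hJ' heq => ?_
  rw [SetLike.coe_set_eq, AddSubgroup.map_eq_map_iff, QuotientAddGroup.ker_mk',
    sup_of_le_left (cB_le hJ), sup_of_le_left (cB_le hJ'), AddSubgroup.addSubgroupOf_inj,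
    inf_of_le_left (map_le hJ), inf_of_le_left (map_le hJ')] at heq
  exact Submodule.toAddSubgroup_injective (AddSubgroup.map_injective hφ heq)

lemma map_mem_primaryIdeals (hc : IsConductor φ c) (hφ : Function.Injective φ)
    (hfin : Ideal.span {φ c} ∈ finiteIndexIdeals O) {J : Ideal R} (hJ : J ∈ primaryIdeals c) :
    J.map φ ∈ primaryIdeals (φ c) := by
  refine ⟨card_quotient_ne_zero_iff.mp (ne_zero_of_dvd_ne_zero
    (mul_ne_zero (card_quotient_ne_zero hJ.1) (hc.range_index_ne_zero hfin))
    (card_quotient_map_dvd hφ J)), ?_⟩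
  obtain ⟨n, hn⟩ := hJ.2
  exact ⟨n, map_pow φ c n ▸ Ideal.mem_map_of_mem φ hn⟩

lemma norm_indexCpow_le_map (hc : IsConductor φ c) (hφ : Function.Injective φ)
    (hfin : Ideal.span {φ c} ∈ finiteIndexIdeals O) {J : Ideal R} (hJ : J ∈ primaryIdeals c)
    {s : ℂ} (hs : 0 ≤ s.re) :
    ‖indexCpow s J‖ ≤ (φ.toAddMonoidHom.range.index : ℝ) ^ s.re * ‖indexCpow s (J.map φ)‖ := by
  have hmap := (hc.map_mem_primaryIdeals hφ hfin hJ).1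
  have card_pos : 0 < Nat.card (R ⧸ J) := Nat.pos_of_ne_zero (card_quotient_ne_zero hJ.1)
  have card_map_pos : 0 < Nat.card (O ⧸ J.map φ) := Nat.pos_of_ne_zero (card_quotient_ne_zero hmap)
  have card_map_le : (Nat.card (O ⧸ J.map φ) : ℝ) ≤
      Nat.card (R ⧸ J) * φ.toAddMonoidHom.range.index := by
    exact_mod_cast Nat.le_of_dvd
      (Nat.mul_pos card_pos (Nat.pos_of_ne_zero (hc.range_index_ne_zero hfin)))
      (card_quotient_map_dvd hφ J)
  rw [norm_indexCpow hJ.1, norm_indexCpow hmap, Real.rpow_neg (by positivity),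
    Real.rpow_neg (by positivity), ← div_eq_mul_inv, le_div_iff₀ (by positivity),
    inv_mul_le_iff₀ (by positivity), ← Real.mul_rpow (by positivity) (by positivity)]
  exact Real.rpow_le_rpow (by positivity) card_map_le hs

lemma summable_indexCpow_primaryIdeals (hc : IsConductor φ c) (hφ : Function.Injective φ)
    (hreg : IsLeftRegular (φ c)) (hfin : Ideal.span {φ c} ∈ finiteIndexIdeals O) {s : ℂ}
    (hs : 0 ≤ s.re)
    (hsum : Summable fun I : primaryIdeals (φ c) => indexCpow s (I : Ideal O)) :
    Summable fun J : primaryIdeals c => indexCpow s (J : Ideal R) := by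
  let extend (J : primaryIdeals c) : primaryIdeals (φ c) :=
    ⟨J.1.map φ, hc.map_mem_primaryIdeals hφ hfin J.2⟩
  have fiber_le (I : primaryIdeals (φ c)) :
      {J | extend J = I}.encard ≤ (2 ^ Nat.card (O ⧸ Ideal.span {φ c}) : ℕ) := by
    refine (Set.encard_le_encard_of_injOn (f := Subtype.val) (fun J hJ => ?_)
      Subtype.val_injective.injOn).trans (hc.encard_map_eq_le hφ hreg hfin I.2.1)
    exact congrArg Subtype.val hJ
  exact (((summable_comp_of_encard_fiber_le hsum.norm (fun _ => norm_nonneg _)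
    fiber_le).mul_left _).of_nonneg_of_le (fun _ => norm_nonneg _)
    fun J => hc.norm_indexCpow_le_map hφ hfin J.2 hs).of_norm

end IsConductor

end ConductorPrimary

/-! ### Products of rings -/

lemma natCast_prod_cpow {ι : Type*} (t : Finset ι) (a : ι → ℕ) (s : ℂ) :
    ((∏ i ∈ t, a i : ℕ) : ℂ) ^ s = ∏ i ∈ t, (a i : ℂ) ^ s := by
  classical
  induction t using Finset.induction_on with
  | empty => simp
  | insert i t hi ih =>
    rw [Finset.prod_insert hi, Finset.prod_insert hi, Nat.cast_mul,
      Complex.natCast_mul_natCast_cpow, ih]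

lemma natCast_pow_cpow (a k : ℕ) (s : ℂ) : ((a ^ k : ℕ) : ℂ) ^ s = ((a : ℂ) ^ s) ^ k := by
  simpa only [Finset.prod_const, Finset.card_range] using
    natCast_prod_cpow (Finset.range k) (fun _ => a) s

section Pi

variable {ι : Type*} {A : ι → Type*} [∀ i, CommRing (A i)]

lemma card_quotient_pi [Fintype ι] (I : ∀ i, Ideal (A i)) :
    Nat.card ((∀ i, A i) ⧸ Ideal.pi I) = ∏ i, Nat.card (A i ⧸ I i) := by
  let reduce : (∀ i, A i) →+* ∀ i, A i ⧸ I i :=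
    RingHom.pi fun i => (Ideal.Quotient.mk (I i)).comp (Pi.evalRingHom A i)
  have surjective : Function.Surjective reduce := fun y => by
    choose x hx using fun i => Ideal.Quotient.mk_surjective (y i)
    exact ⟨x, funext hx⟩
  have ker_eq : RingHom.ker reduce = Ideal.pi I := by
    ext x
    rw [RingHom.mem_ker, Ideal.mem_pi, funext_iff]
    exact forall_congr' fun i => Ideal.Quotient.eq_zero_iff_mem
  rw [← ker_eq, Nat.card_congr (RingHom.quotientKerEquivOfSurjective surjective).toEquiv,
    Nat.card_pi]

lemma indexCpow_pi [Fintype ι] (s : ℂ) (I : ∀ i, Ideal (A i)) :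
    indexCpow s (Ideal.pi I) = ∏ i, indexCpow s (I i) := by
  simp only [indexCpow, card_quotient_pi, natCast_prod_cpow]

lemma pi_mem_finiteIndexIdeals_iff [Finite ι] {I : ∀ i, Ideal (A i)} :
    Ideal.pi I ∈ finiteIndexIdeals (∀ i, A i) ↔ ∀ i, I i ∈ finiteIndexIdeals (A i) := by
  cases nonempty_fintype ι
  simp only [← card_quotient_ne_zero_iff, card_quotient_pi, Finset.prod_ne_zero_iff,
    Finset.mem_univ, true_imp_iff]

lemma pi_mem_primaryIdeals_iff [Finite ι] {c : ∀ i, A i} {I : ∀ i, Ideal (A i)} :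
    Ideal.pi I ∈ primaryIdeals c ↔ ∀ i, I i ∈ primaryIdeals (c i) := by
  refine (and_congr pi_mem_finiteIndexIdeals_iff ⟨?_, fun h => ?_⟩).trans forall_and.symm
  · rintro ⟨n, hn⟩ i
    exact ⟨n, (Ideal.mem_pi _ _).mp hn i⟩
  · cases nonempty_fintype ι
    choose n hn using h
    exact ⟨∑ i, n i, (Ideal.mem_pi _ _).mpr fun i => Ideal.pow_mem_of_pow_mem _ (hn i)
      (Finset.single_le_sum (fun _ _ => Nat.zero_le _) (Finset.mem_univ i))⟩

/-- If the set `U` of ideals of a product ring consists of the products of ideals in the sets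
`T i`, it is the product of these sets. -/
noncomputable def idealPiEquiv [Finite ι] {T : ∀ i, Set (Ideal (A i))} {U : Set (Ideal (∀ i, A i))}
    (hU : ∀ I : ∀ i, Ideal (A i), Ideal.pi I ∈ U ↔ ∀ i, I i ∈ T i) : (∀ i, T i) ≃ U :=
  Equiv.subtypePiEquivPi.symm.trans
    ((Ideal.piOrderIso (R := A)).symm.toEquiv.subtypeEquiv fun I => (hU I).symm)

lemma hasSum_indexCpow_pi [Fintype ι] {T : ∀ i, Set (Ideal (A i))} {U : Set (Ideal (∀ i, A i))}
    (hU : ∀ I : ∀ i, Ideal (A i), Ideal.pi I ∈ U ↔ ∀ i, I i ∈ T i) {s : ℂ}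
    (hsum : ∀ i, Summable fun I : T i => indexCpow s (I : Ideal (A i))) :
    HasSum (fun I : U => indexCpow s (I : Ideal (∀ i, A i))) (∏ i, idealZeta (T i) s) := by
  rw [← (idealPiEquiv hU).hasSum_iff]
  exact (hasSum_pi_prod hsum).congr_fun fun I => indexCpow_pi s fun i => (I i : Ideal (A i))

end Pi

/-! ### Monomials in finitely many primes -/

section PrimeMonomials

open UniqueFactorizationMonoid

variable {M : Type*} [CommMonoidWithZero M] [UniqueFactorizationMonoid M]
  [NormalizationMonoid M] [Subsingleton Mˣ]

lemma count_normalizedFactors_prod_pow [DecidableEq M] {P : Finset M} (hP : ∀ p ∈ P, Prime p)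
    (x : P → ℕ) (q : P) : (normalizedFactors (∏ p : P, (p : M) ^ x p)).count (q : M) = x q := by
  have : Nontrivial M := ⟨q, 0, (hP q q.2).ne_zero⟩
  have prod_eq : ∏ p : P, (p : M) ^ x p = (∑ p : P, x p • ({(p : M)} : Multiset M)).prod := by
    simp only [Multiset.prod_sum, Multiset.prod_nsmul, Multiset.prod_singleton]
  have mem_prime : ∀ r ∈ ∑ p : P, x p • ({(p : M)} : Multiset M), Prime r := fun r hr => by
    obtain ⟨p, -, hp⟩ := Multiset.mem_sum.mp hr
    rw [Multiset.mem_singleton.mp (Multiset.mem_of_mem_nsmul hp)]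
    exact hP p p.2
  rw [prod_eq, normalizedFactors_prod_of_prime mem_prime, Multiset.count_sum',
    Finset.sum_eq_single q]
  · simp
  · intro p _ hpq
    simp [Subtype.coe_ne_coe.mpr hpq.symm]
  · simp

lemma prod_pow_count_normalizedFactors [DecidableEq M] {P : Finset M} {a : M} (ha : a ≠ 0)
    (hP : primeFactors a ⊆ P) : ∏ p : P, (p : M) ^ (normalizedFactors a).count (p : M) = a := by
  have : (normalizedFactors a).toFinset ⊆ P := by rwa [toFinset_normalizedFactors]
  rw [Finset.prod_coe_sort P fun p => p ^ (normalizedFactors a).count p,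
    ← Finset.prod_multiset_count_of_subset _ P this]
  exact associated_iff_eq.mp (prod_normalizedFactors ha)

lemma primeFactors_subset_of_dvd_pow {a b : M} (hb : b ≠ 0) {n : ℕ} (h : a ∣ b ^ n) :
    primeFactors a ⊆ primeFactors b := by
  intro p hp
  rw [mem_primeFactors] at hp ⊢
  have prime := prime_of_normalized_factor p hp
  exact (mem_normalizedFactors_iff hb).mpr
    ⟨prime, prime.dvd_of_dvd_pow ((dvd_of_mem_normalizedFactors hp).trans h)⟩

end PrimeMonomials

/-! ### Ideals of a ring of integers supported on an element -/

section DedekindPrimary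

open NumberField UniqueFactorizationMonoid

variable {K : Type*} [Field K] [NumberField K]

lemma one_lt_absNorm_of_prime {p : Ideal (𝓞 K)} (hp : Prime p) : 1 < Ideal.absNorm p := by
  have ne_zero : Ideal.absNorm p ≠ 0 := Ideal.absNorm_eq_zero_iff.not.mpr hp.ne_zero
  have ne_one : Ideal.absNorm p ≠ 1 :=
    Ideal.absNorm_eq_one_iff.not.mpr fun h => hp.not_isUnit (Ideal.isUnit_iff.mpr h)
  lia

lemma norm_absNorm_cpow_lt_one {p : Ideal (𝓞 K)} (hp : Prime p) {s : ℂ} (hs : 0 < s.re) :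
    ‖(Ideal.absNorm p : ℂ) ^ (-s)‖ < 1 := by
  have one_lt := one_lt_absNorm_of_prime hp
  rw [Complex.norm_natCast_cpow_of_pos (zero_lt_one.trans one_lt), Complex.neg_re]
  exact Real.rpow_lt_one_of_one_lt_of_neg (by exact_mod_cast one_lt) (neg_neg_of_pos hs)

lemma prime_of_mem_primeFactors {c : 𝓞 K} (p : primeFactors (Ideal.span {c})) :
    Prime (p : Ideal (𝓞 K)) :=
  prime_of_normalized_factor _ (mem_primeFactors.mp p.2)

lemma prod_primeFactors_pow_mem_primaryIdeals {c : 𝓞 K}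
    (x : primeFactors (Ideal.span {c}) → ℕ) :
    ∏ p : primeFactors (Ideal.span {c}), (p : Ideal (𝓞 K)) ^ x p ∈ primaryIdeals c := by
  refine ⟨mem_nonZeroDivisors_iff_mem_finiteIndexIdeals.mp (mem_nonZeroDivisors_of_ne_zero ?_),
    ∑ p, x p, ?_⟩
  · exact Finset.prod_ne_zero_iff.mpr fun p _ =>
      pow_ne_zero _ (prime_of_mem_primeFactors p).ne_zero
  · rw [← Finset.prod_pow_eq_pow_sum]
    exact Ideal.prod_mem_prod fun p _ => Ideal.pow_mem_pow
      (Ideal.dvd_span_singleton.mp (dvd_of_mem_normalizedFactors (mem_primeFactors.mp p.2))) _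

open Classical in
/-- The ideals supported on `c ≠ 0` are the monomials in the primes dividing `c`. -/
noncomputable def primaryIdealsEquiv {c : 𝓞 K} (hc : c ≠ 0) :
    (primeFactors (Ideal.span {c}) → ℕ) ≃ primaryIdeals c where
  toFun x := ⟨_, prod_primeFactors_pow_mem_primaryIdeals x⟩
  invFun I p := (normalizedFactors (I : Ideal (𝓞 K))).count (p : Ideal (𝓞 K))
  left_inv x := funext fun q => count_normalizedFactors_prod_pow
    (fun p hp => prime_of_mem_primeFactors ⟨p, hp⟩) x q
  right_inv I := by
    obtain ⟨n, hn⟩ := I.2.2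
    refine Subtype.ext (prod_pow_count_normalizedFactors (nonZeroDivisors.ne_zero
      (mem_nonZeroDivisors_iff_mem_finiteIndexIdeals.mpr I.2.1))
      (primeFactors_subset_of_dvd_pow (n := n) ?_ ?_))
    · rwa [Ne, Ideal.zero_eq_bot, Ideal.span_singleton_eq_bot]
    · rwa [Ideal.span_singleton_pow, Ideal.dvd_span_singleton]

lemma indexCpow_primaryIdealsEquiv {c : 𝓞 K} (hc : c ≠ 0) (s : ℂ)
    (x : primeFactors (Ideal.span {c}) → ℕ) :
    indexCpow s (primaryIdealsEquiv hc x : Ideal (𝓞 K)) =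
      ∏ p : primeFactors (Ideal.span {c}),
        ((Ideal.absNorm (p : Ideal (𝓞 K)) : ℂ) ^ (-s)) ^ x p := by
  change indexCpow s (∏ p : primeFactors (Ideal.span {c}), (p : Ideal (𝓞 K)) ^ x p) = _
  rw [indexCpow, card_quotient_eq_absNorm, map_prod, natCast_prod_cpow]
  exact Finset.prod_congr rfl fun p _ => by
    rw [map_pow, natCast_pow_cpow]

lemma hasSum_indexCpow_primaryIdeals_ringOfIntegers {c : 𝓞 K} (hc : c ≠ 0) {s : ℂ}
    (hs : 0 < s.re) :
    HasSum (fun I : primaryIdeals c => indexCpow s (I : Ideal (𝓞 K)))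
      (∏ p : primeFactors (Ideal.span {c}),
        (1 - (Ideal.absNorm (p : Ideal (𝓞 K)) : ℂ) ^ (-s))⁻¹) := by
  have norm_lt_one (p : primeFactors (Ideal.span {c})) :=
    norm_absNorm_cpow_lt_one (prime_of_mem_primeFactors p) hs
  rw [← (primaryIdealsEquiv hc).hasSum_iff, ← Finset.prod_congr rfl fun p _ =>
    tsum_geometric_of_norm_lt_one (norm_lt_one p)]
  exact (hasSum_pi_prod fun p => summable_geometric_of_norm_lt_one (norm_lt_one p)).congr_fun
    (indexCpow_primaryIdealsEquiv hc s)

lemma idealZeta_primaryIdeals_ringOfIntegers_ne_zero {c : 𝓞 K} (hc : c ≠ 0) {s : ℂ}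
    (hs : 0 < s.re) : idealZeta (primaryIdeals c) s ≠ 0 := by
  rw [idealZeta, (hasSum_indexCpow_primaryIdeals_ringOfIntegers hc hs).tsum_eq]
  exact Finset.prod_ne_zero_iff.mpr fun p _ => inv_ne_zero
    (isUnit_one_sub_of_norm_lt_one
      (norm_absNorm_cpow_lt_one (prime_of_mem_primeFactors p) hs)).ne_zero

end DedekindPrimary

/-! ### Orders in products of rings of integers -/

lemma range_index_ne_zero_of_injective {M N : Type*} [AddCommGroup M] [AddCommGroup N]
    [Module.Free ℤ N] [Module.Finite ℤ N] {ψ : M →+ N} (hψ : Function.Injective ψ)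
    (hrank : Module.finrank ℤ M = Module.finrank ℤ N) : ψ.range.index ≠ 0 := by
  have : Finite (N ⧸ LinearMap.range ψ.toIntLinearMap) := by
    rw [Submodule.finiteQuotient_iff, LinearMap.finrank_range_of_inj hψ, hrank]
  exact Nat.card_ne_zero.mpr ⟨inferInstance, this⟩

lemma span_singleton_mem_finiteIndexIdeals {O : Type*} [CommRing O] [Module.Free ℤ O]
    [Module.Finite ℤ O] {c : O} (hc : IsLeftRegular c) :
    Ideal.span {c} ∈ finiteIndexIdeals O := by
  refine card_quotient_ne_zero_iff.mp ?_
  have := range_index_ne_zero_of_injective (ψ := AddMonoidHom.mulLeft c) hc rfl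
  rwa [range_mulLeft_eq_span] at this

lemma isLeftRegular_of_forall_ne_zero {ι : Type*} {A : ι → Type*} [∀ i, CommRing (A i)]
    [∀ i, IsDomain (A i)] {c : ∀ i, A i} (hc : ∀ i, c i ≠ 0) : IsLeftRegular c := fun _ _ h =>
  funext fun i => mul_left_cancel₀ (hc i) (congrFun h i)

namespace IsConductor

variable {R O : Type*} [CommRing R] [CommRing O] {φ : R →+* O} {c : R}

lemma natCast_range_index (φ : R →+* O) :
    IsConductor φ (φ.toAddMonoidHom.range.index : R) := fun y => by
  rw [map_natCast, ← nsmul_eq_mul]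
  exact AddSubgroup.nsmul_index_mem φ.toAddMonoidHom.range y

lemma hasSum_indexCpow_finiteIndexIdeals (hc : IsConductor φ c) (hφ : Function.Injective φ)
    {s : ℂ} (hO : Summable fun I : finiteIndexIdeals O => indexCpow s (I : Ideal O))
    (hR : Summable fun I : primaryIdeals c => indexCpow s (I : Ideal R))
    (hne : idealZeta (primaryIdeals (φ c)) s ≠ 0) :
    HasSum (fun I : finiteIndexIdeals R => indexCpow s (I : Ideal R))
      (idealZeta (finiteIndexIdeals O) s *
        (idealZeta (primaryIdeals c) s * (idealZeta (primaryIdeals (φ c)) s)⁻¹)) := by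
  have summable_of_subset {T : Set (Ideal O)} (hT : T ⊆ finiteIndexIdeals O) :
      Summable fun I : T => indexCpow s (I : Ideal O) :=
    (hO.comp_injective (Set.inclusion_injective hT) :)
  have coprime_summable : Summable fun I : coprimeIdeals (φ c) => indexCpow s (I : Ideal O) :=
    summable_of_subset fun _ hI => hI.1
  have factor_O := (hasSum_indexCpow_of_primary_coprime
    (summable_of_subset fun _ hI => hI.1) coprime_summable).tsum_eq
  have coprime_R := hc.hasSum_indexCpow_coprimeIdeals hφ coprime_summable
  have factor_R := hasSum_indexCpow_of_primary_coprime hR coprime_R.summable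
  convert factor_R using 1
  rw [idealZeta, factor_O, idealZeta.eq_def (coprimeIdeals c), coprime_R.tsum_eq]
  field_simp

end IsConductor

section Order

open NumberField

variable {ι : Type*} {K : ι → Type*} [∀ i, Field (K i)] [∀ i, NumberField (K i)]

lemma hasSum_indexCpow_pi_ringOfIntegers [Fintype ι] {s : ℂ} (hs : 1 < s.re) :
    HasSum (fun I : finiteIndexIdeals (∀ i, 𝓞 (K i)) => indexCpow s (I : Ideal (∀ i, 𝓞 (K i))))
      (∏ i, idealZeta (finiteIndexIdeals (𝓞 (K i))) s) :=
  hasSum_indexCpow_pi (fun _ => pi_mem_finiteIndexIdeals_iff) fun i =>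
    summable_indexCpow_ringOfIntegers (K i) hs

lemma hasSum_indexCpow_primaryIdeals_pi [Fintype ι] {c : ∀ i, 𝓞 (K i)} (hc : ∀ i, c i ≠ 0)
    {s : ℂ} (hs : 0 < s.re) :
    HasSum (fun I : primaryIdeals c => indexCpow s (I : Ideal (∀ i, 𝓞 (K i))))
      (∏ i, idealZeta (primaryIdeals (c i)) s) :=
  hasSum_indexCpow_pi (fun _ => pi_mem_primaryIdeals_iff) fun i =>
    (hasSum_indexCpow_primaryIdeals_ringOfIntegers (hc i) hs).summable

lemma idealZeta_primaryIdeals_pi_ne_zero [Finite ι] {c : ∀ i, 𝓞 (K i)} (hc : ∀ i, c i ≠ 0)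
    {s : ℂ} (hs : 0 < s.re) : idealZeta (primaryIdeals c) s ≠ 0 := by
  cases nonempty_fintype ι
  rw [idealZeta, (hasSum_indexCpow_primaryIdeals_pi hc hs).tsum_eq]
  exact Finset.prod_ne_zero_iff.mpr fun i _ =>
    idealZeta_primaryIdeals_ringOfIntegers_ne_zero (hc i) hs

lemma hasMeromorphicExtension_idealZeta_pi [Fintype ι] :
    HasMeromorphicExtension (idealZeta (finiteIndexIdeals (∀ i, 𝓞 (K i)))) (-Fintype.card ι) := by
  have prod := HasMeromorphicExtension.prod (t := Finset.univ) fun i _ =>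
    hasMeromorphicExtension_idealZeta_ringOfIntegers (K i)
  rw [Finset.sum_const, Finset.card_univ, nsmul_eq_mul, mul_neg_one] at prod
  exact prod.congr fun s hs => (hasSum_indexCpow_pi_ringOfIntegers hs).tsum_eq

variable {R : Type*} [CommRing R] {φ : R →+* ∀ i, 𝓞 (K i)}

namespace IsConductor

variable {c : R}

lemma summable_indexCpow_primaryIdeals_order [Finite ι] (hc : IsConductor φ c)
    (hφ : Function.Injective φ) (hc0 : ∀ i, φ c i ≠ 0) {s : ℂ} (hs : 0 < s.re) :
    Summable fun I : primaryIdeals c => indexCpow s (I : Ideal R) := by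
  cases nonempty_fintype ι
  have regular : IsLeftRegular (φ c) := isLeftRegular_of_forall_ne_zero hc0
  exact hc.summable_indexCpow_primaryIdeals hφ regular
    (span_singleton_mem_finiteIndexIdeals regular) hs.le
    (hasSum_indexCpow_primaryIdeals_pi hc0 hs).summable

lemma hasSum_indexCpow_order [Finite ι] (hc : IsConductor φ c) (hφ : Function.Injective φ)
    (hc0 : ∀ i, φ c i ≠ 0) {s : ℂ} (hs : 1 < s.re) :
    HasSum (fun I : finiteIndexIdeals R => indexCpow s (I : Ideal R))
      (idealZeta (finiteIndexIdeals (∀ i, 𝓞 (K i))) s *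
        (idealZeta (primaryIdeals c) s * (idealZeta (primaryIdeals (φ c)) s)⁻¹)) := by
  cases nonempty_fintype ι
  have hs0 : 0 < s.re := one_pos.trans hs
  exact hc.hasSum_indexCpow_finiteIndexIdeals hφ (hasSum_indexCpow_pi_ringOfIntegers hs).summable
    (hc.summable_indexCpow_primaryIdeals_order hφ hc0 hs0)
    (idealZeta_primaryIdeals_pi_ne_zero hc0 hs0)

lemma hasMeromorphicExtension_idealZeta_order [Fintype ι] (hc : IsConductor φ c)
    (hφ : Function.Injective φ) (hc0 : ∀ i, φ c i ≠ 0) :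
    HasMeromorphicExtension (idealZeta (finiteIndexIdeals R)) (-Fintype.card ι) := by
  have primary_R := hasMeromorphicExtension_idealZeta_primaryIdeals fun _ hs =>
    hc.summable_indexCpow_primaryIdeals_order hφ hc0 hs
  have primary_O := hasMeromorphicExtension_idealZeta_primaryIdeals fun _ hs =>
    (hasSum_indexCpow_primaryIdeals_pi hc0 hs).summable
  have factors := (hasMeromorphicExtension_idealZeta_pi (K := K)).mul (primary_R.mul primary_O.inv)
  rw [neg_zero, add_zero, add_zero] at factors
  exact factors.congr fun s hs => (hc.hasSum_indexCpow_order hφ hc0 hs).tsum_eq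

end IsConductor

theorem zeta_quotient_separable_general [Fintype ι] (hφ : Function.Injective φ)
    (hindex : φ.toAddMonoidHom.range.index ≠ 0) :
    (∀ s : ℂ, 1 < s.re → LSeriesSummable (idealCount R) s) ∧
    ∃ Z : ℂ → ℂ, MeromorphicOn Z {s : ℂ | 0 < s.re} ∧
      (∀ s : ℂ, 1 < s.re → Z s = LSeries (idealCount R) s) ∧
      ∃ H : ℂ → ℂ, AnalyticAt ℂ H 1 ∧ H 1 ≠ 0 ∧
        ∀ᶠ s in 𝓝[≠] (1 : ℂ), (s - 1) ^ Fintype.card ι * Z s = H s := by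
  have hc := IsConductor.natCast_range_index φ
  have hc0 (i : ι) : φ (φ.toAddMonoidHom.range.index : R) i ≠ 0 := by
    rw [map_natCast, Pi.natCast_apply]
    exact_mod_cast hindex
  have lseries {s : ℂ} (hs : 1 < s.re) :=
    lseriesHasSum_idealCount (hc.hasSum_indexCpow_order hφ hc0 hs).summable
  exact ⟨fun s hs => (lseries hs).LSeriesSummable,
    ((hc.hasMeromorphicExtension_idealZeta_order hφ hc0).congr fun s hs =>
      (lseries hs).LSeries_eq).exists_pole⟩

end Order

/-! ### The quotients of `ℤ[X]` by separable polynomials -/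

section Embedding

open NumberField Polynomial

/-- By Gauss's lemma `p` is irreducible over `ℚ`, so `ℚ[X] / (p)` is such a field. -/
lemma exists_numberField_root {p : ℤ[X]} (hp : Irreducible p) (hmonic : p.Monic) :
    ∃ (K : Type) (_ : Field K) (_ : NumberField K) (α : 𝓞 K),
      Module.finrank ℤ (𝓞 K) = p.natDegree ∧ ∀ q : ℤ[X], aeval α q = 0 ↔ p ∣ q := by
  let P := p.map (algebraMap ℤ ℚ)
  have irreducible : Irreducible P :=
    (hmonic.irreducible_iff_irreducible_map_fraction_map (K := ℚ)).mp hp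
  have : Fact (Irreducible P) := ⟨irreducible⟩
  have : FiniteDimensional ℚ (AdjoinRoot P) :=
    (AdjoinRoot.powerBasis irreducible.ne_zero).finite
  have : CharZero (AdjoinRoot P) :=
    charZero_of_injective_algebraMap (algebraMap ℚ (AdjoinRoot P)).injective
  have : NumberField (AdjoinRoot P) := ⟨⟩
  have aeval_root (q : ℤ[X]) : aeval (AdjoinRoot.root P) q = 0 ↔ p ∣ q := by
    have aeval_eq : aeval (AdjoinRoot.root P) q = AdjoinRoot.mk P (q.map (algebraMap ℤ ℚ)) := by
      rw [← AdjoinRoot.aeval_eq, aeval_def, aeval_def, eval₂_map]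
      exact congrArg (fun ρ => eval₂ ρ _ q) (RingHom.ext_int _ _)
    rw [aeval_eq, AdjoinRoot.mk_eq_zero]
    exact map_dvd_map _ (algebraMap ℤ ℚ).injective_int hmonic
  let α : 𝓞 (AdjoinRoot P) := ⟨AdjoinRoot.root P, p, hmonic, (aeval_root p).mpr dvd_rfl⟩
  refine ⟨AdjoinRoot P, inferInstance, inferInstance, α, ?_, fun q => ?_⟩
  · rw [RingOfIntegers.rank, (AdjoinRoot.powerBasis irreducible.ne_zero).finrank,
      AdjoinRoot.powerBasis_dim, hmonic.natDegree_map]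
  · rw [← aeval_root q, show AdjoinRoot.root P = algebraMap (𝓞 (AdjoinRoot P)) _ α from rfl,
      aeval_algebraMap_apply, map_eq_zero_iff _ RingOfIntegers.coe_injective]

variable {ι A : Type*} [CommRing A]

lemma prod_dvd_iff_of_injective_monic [Fintype ι] [IsDomain A] [UniqueFactorizationMonoid A]
    {g : ι → A[X]} (hirr : ∀ i, Irreducible (g i)) (hmonic : ∀ i, (g i).Monic)
    (hinj : Function.Injective g) {q : A[X]} : ∏ i, g i ∣ q ↔ ∀ i, g i ∣ q := by
  refine ⟨fun h i => (Finset.dvd_prod_of_mem g (Finset.mem_univ i)).trans h, fun h =>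
    Finset.prod_dvd_of_isRelPrime (fun i _ j _ hij => ?_) fun i _ => h i⟩
  refine (hirr i).isRelPrime_iff_not_dvd.mpr fun hdvd => hij (hinj ?_)
  exact eq_of_monic_of_associated (hmonic i) (hmonic j)
    ((hirr i).associated_of_dvd (hirr j) hdvd)

lemma exists_injective_ringHom_pi {O : ι → Type*} [∀ i, CommRing (O i)]
    [∀ i, Algebra A (O i)] {α : ∀ i, O i} {f : A[X]}
    (hα : ∀ q : A[X], f ∣ q ↔ ∀ i, aeval (α i) q = 0) :
    ∃ φ : A[X] ⧸ Ideal.span {f} →+* ∀ i, O i, Function.Injective φ := by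
  let eval : A[X] →+* ∀ i, O i := RingHom.pi fun i => (aeval (α i)).toRingHom
  have ker_eq : RingHom.ker eval = Ideal.span {f} := by
    ext q
    rw [RingHom.mem_ker, Ideal.mem_span_singleton, hα, funext_iff]
    rfl
  exact ⟨eval.kerLift.comp (Ideal.quotEquivOfEq ker_eq.symm : _ →+* _),
    eval.kerLift_injective.comp (Ideal.quotEquivOfEq ker_eq.symm).injective⟩

lemma exists_embedding_ringOfIntegers [Fintype ι] {g : ι → ℤ[X]}
    (hirr : ∀ i, Irreducible (g i)) (hmonic : ∀ i, (g i).Monic) (hinj : Function.Injective g) :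
    ∃ (K : ι → Type) (_ : ∀ i, Field (K i)) (_ : ∀ i, NumberField (K i))
      (φ : ℤ[X] ⧸ Ideal.span {∏ i, g i} →+* ∀ i, 𝓞 (K i)),
      Function.Injective φ ∧ φ.toAddMonoidHom.range.index ≠ 0 := by
  choose K hfield hnumberField α hrank hα using fun i => exists_numberField_root (hirr i) (hmonic i)
  obtain ⟨φ, hφ⟩ := exists_injective_ringHom_pi (α := α) (f := ∏ i, g i) fun q => by
    simp only [prod_dvd_iff_of_injective_monic hirr hmonic hinj, hα]
  refine ⟨K, hfield, hnumberField, φ, hφ, range_index_ne_zero_of_injective hφ ?_⟩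
  rw [finrank_quotient_span_eq_natDegree' (monic_prod_of_monic _ _ fun i _ => hmonic i),
    Module.finrank_pi_fintype, natDegree_prod_of_monic _ _ fun i _ => hmonic i]
  exact Finset.sum_congr rfl fun i _ => (hrank i).symm

end Embedding

/-- For `f = g₁⋯g_k` a product of `k` pairwise distinct monic irreducible polynomials over ℤ,
the zeta function of `Z_f = ℤ[X]/(f)` converges for `Re(s) > 1` and extends meromorphically
to `Re(s) > 0` with a pole of order exactly `k` at `s = 1`. -/
theorem zeta_quotient_separable (k : ℕ) (hk : 0 < k) (g : Fin k → Polynomial ℤ)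
    (hirr : ∀ i, Irreducible (g i)) (hmonic : ∀ i, (g i).Monic)
    (hdist : Function.Injective g)
    (f : Polynomial ℤ) (hf : f = ∏ i, g i) (hfmonic : f.Monic) :
    (∀ s : ℂ, 1 < s.re →
      LSeriesSummable (fun n => (Nat.card {I : Ideal (Polynomial ℤ ⧸ Ideal.span {f}) //
        Nat.card ((Polynomial ℤ ⧸ Ideal.span {f}) ⧸ I) = n} : ℂ)) s) ∧
    ∃ Z : ℂ → ℂ, MeromorphicOn Z {s : ℂ | 0 < s.re} ∧
      (∀ s : ℂ, 1 < s.re →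
        Z s = LSeries (fun n => (Nat.card {I : Ideal (Polynomial ℤ ⧸ Ideal.span {f}) //
          Nat.card ((Polynomial ℤ ⧸ Ideal.span {f}) ⧸ I) = n} : ℂ)) s) ∧
      ∃ H : ℂ → ℂ, AnalyticAt ℂ H 1 ∧ H 1 ≠ 0 ∧
        ∀ᶠ s in 𝓝[≠] (1 : ℂ), (s - 1) ^ k * Z s = H s := by
  subst hf
  obtain ⟨K, _, _, φ, hφ, hindex⟩ := exists_embedding_ringOfIntegers hirr hmonic hdist
  have extension := zeta_quotient_separable_general hφ hindex
  rw [Fintype.card_fin] at extension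
  exact extension
end

section
/- Let S be a commutative ring with identity, p a prime number, and let R = ℤ·1 + pS be the subring of S generated additively by the image of ℤ and the set pS. If I₁ and I₂ are ideals of R such that the ideals of S generated by I₁ and by I₂ coincide (S·I₁ = S·I₂), then p·I₂ ⊆ I₁ and p·I₁ ⊆ I₂. -/
/-!
If `cS ⊆ R`, then `c(S·I) = I·(cS) ⊆ I·R = I` for every ideal `I` of `R`, so `J ⊆ S·I` implies
`cJ ⊆ I`. The inclusion `cS ⊆ R` is written `c • ⊤ ≤ 1`, where `1 : Submodule R S` is the image of
`R` in `S`.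
-/

open scoped Pointwise

section Algebra

variable {R S : Type*} [CommSemiring R] [CommSemiring S] [Algebra R S] {c : R}

theorem smul_map_le_map_linearMap (hc : c • (⊤ : Submodule R S) ≤ 1) (I : Ideal R) :
    c • (I.map (algebraMap R S)).restrictScalars R ≤ Submodule.map (Algebra.linearMap R S) I :=
  calc
    c • (I.map (algebraMap R S)).restrictScalars R = c • I • (⊤ : Submodule R S) := by
      rw [Ideal.smul_top_eq_map]
    _ = I • c • (⊤ : Submodule R S) := Submodule.map_smul'' I ⊤ _
    _ ≤ I • (1 : Submodule R S) := smul_mono_right I hc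
    _ = Submodule.map (Algebra.linearMap R S) I := by
      rw [Submodule.one_eq_range, LinearMap.range_eq_map, ← Submodule.map_smul'',
        smul_eq_mul, Ideal.mul_top]

theorem smul_mem_of_span_eq_general [FaithfulSMul R S] (hc : c • (⊤ : Submodule R S) ≤ 1)
    {I J : Ideal R} (hJI : J.map (algebraMap R S) ≤ I.map (algebraMap R S)) {x : R} (hx : x ∈ J) :
    c • x ∈ I := by
  have hxI : algebraMap R S x ∈ I.map (algebraMap R S) := hJI (Ideal.mem_map_of_mem _ hx)
  have hcx : c • algebraMap R S x ∈ Submodule.map (Algebra.linearMap R S) I :=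
    smul_map_le_map_linearMap hc I (Submodule.smul_mem_pointwise_smul _ c _ hxI)
  rw [← Algebra.linearMap_apply, ← map_smul] at hcx
  exact (FaithfulSMul.algebraMap_injective R S).mem_set_image.mp hcx

end Algebra

theorem smul_top_le_one_of_forall_smul_mem {S : Type*} [CommRing S] {R : Subring S} {c : R}
    (hc : ∀ s : S, c • s ∈ R) : c • (⊤ : Submodule R S) ≤ 1 := by
  rintro _ ⟨s, -, rfl⟩
  exact Submodule.mem_one.mpr ⟨⟨c • s, hc s⟩, rfl⟩

/-- Let `R = ℤ·1 + pS` inside a commutative ring `S`, `p` prime. If two ideals `I₁, I₂` of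
`R` generate the same ideal of `S`, then `p·I₂ ⊆ I₁` and `p·I₁ ⊆ I₂`. -/
theorem smul_mem_of_span_eq (S : Type*) [CommRing S] (p : ℕ) (hp : p.Prime)
    (R : Subring S) (hR : (R : Set S) = {x : S | ∃ (a : ℤ) (y : S), x = a • (1 : S) + p • y})
    (I₁ I₂ : Ideal R)
    (h : Ideal.map (R.subtype) I₁ = Ideal.map (R.subtype) I₂) :
    (∀ x ∈ I₂, p • x ∈ I₁) ∧ (∀ x ∈ I₁, p • x ∈ I₂) := by
  have hpS : (p : R) • (⊤ : Submodule R S) ≤ 1 :=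
    smul_top_le_one_of_forall_smul_mem fun s => hR.ge ⟨0, s, by simp [Nat.cast_smul_eq_nsmul]⟩
  simp only [← Nat.cast_smul_eq_nsmul R p]
  exact ⟨fun _ => smul_mem_of_span_eq_general hpS h.ge,
    fun _ => smul_mem_of_span_eq_general hpS h.le⟩
end

section
/- Let A = (a_{i,j})_{0≤i,j≤d-1} ∈ ℤ^{d×d} be an upper triangular matrix with nonzero determinant which is idealizing, i.e., for every 0 ≤ j ≤ d-2, the vector σ(A e_j) obtained from the j-th column of A by shifting its entries down by one position (inserting 0 in the top coordinate) lies in the subgroup of ℤ^d generated by the columns A e_0, …, A e_{j+1}. Then for every 1 ≤ j ≤ d-1, the diagonal entry a_{j,j} divides a_{i,k} for all 0 ≤ i, k ≤ j. -/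
/-- The down-shift of a vector: `σ(v)_0 = 0` and `σ(v)_i = v_{i-1}` for `i ≥ 1`. -/
def shiftDown {d : ℕ} (v : Fin d → ℤ) : Fin d → ℤ :=
  fun i => if (i : ℕ) = 0 then 0
    else v ⟨(i : ℕ) - 1, lt_of_le_of_lt (Nat.sub_le _ _) i.isLt⟩

/-!
Let `p_j` be the `j`-th column of `A`, read as a polynomial of degree `j` with leading coefficient
`a_{j,j}`; the shift is multiplication by `X`. Hence `X p_j = c p_{j+1} + z` with `z` in the span of
`p_0, …, p_j`, and the coefficients of degree `j+1` give `a_{j,j} = c a_{j+1,j+1}`. If `a_{j,j}`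
divides `p_0, …, p_j`, then it divides `c p_{j+1}`, and cancelling `c`, a factor of
`a_{j,j} ≠ 0`, shows that `a_{j+1,j+1}` divides `p_{j+1}`. It divides the earlier columns because it
divides `a_{j,j}`.
-/

open Matrix Set Submodule
open scoped nonZeroDivisors

section

variable {R ι κ : Type*} [CommRing R]

lemma dvd_apply_of_mem_span {s : Set (ι → R)} {m : R} {i : ι} {z : ι → R}
    (hs : ∀ v ∈ s, m ∣ v i) (hz : z ∈ span R s) : m ∣ z i := by
  have hle : span R s ≤ comap (LinearMap.proj i) (Ideal.span {m}) :=
    span_le.2 fun v hv => Ideal.mem_span_singleton.2 (hs v hv)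
  exact Ideal.mem_span_singleton.1 (hle hz)

lemma dvd_linearMap_apply (T : (ι → R) →ₗ[R] (κ → R)) {m : R} {v : ι → R}
    (hv : ∀ i, m ∣ v i) (k : κ) : m ∣ T v k := by
  choose u hu using hv
  obtain rfl : v = m • u := funext hu
  rw [map_smul]
  exact dvd_mul_right m (T u k)

/-- `A` is idealizing for the endomorphism `T` if `T` maps each column into the span of the columns
up to the next one. The columns are indexed by any ordered type, with `j ⋖ k` in place of
`k = j + 1`; for an ideal lattice, `T` is the shift of `ℤ^d`. -/
def IsIdealizing [Preorder κ] (T : (ι → R) →ₗ[R] (ι → R)) (A : Matrix ι κ R) : Prop :=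
  ∀ ⦃j k : κ⦄, j ⋖ k → T (A.col j) ∈ span R (A.col '' Iic k)

variable [LinearOrder ι] {T : (ι → R) →ₗ[R] (ι → R)} {A : Matrix ι ι R}

lemma diag_mem_nonZeroDivisors_of_det_mem [Fintype ι] (hA : A.IsUpperTriangular)
    (hdet : A.det ∈ R⁰) (i : ι) : A i i ∈ R⁰ := by
  rw [det_of_isUpperTriangular hA, ← Finset.mul_prod_erase _ _ (Finset.mem_univ i)] at hdet
  exact (mul_mem_nonZeroDivisors.1 hdet).1

lemma apply_eq_zero_of_mem_span_col_Iio (hA : A.IsUpperTriangular) {k : ι} {z : ι → R}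
    (hz : z ∈ span R (A.col '' Iio k)) : z k = 0 := by
  have hcol : ∀ v ∈ A.col '' Iio k, (0 : R) ∣ v k :=
    forall_mem_image.2 fun _ hl => zero_dvd_iff.2 (hA hl)
  exact zero_dvd_iff.1 (dvd_apply_of_mem_span hcol hz)

lemma exists_eq_smul_col_add (hA : A.IsUpperTriangular) {k : ι} {w : ι → R}
    (hw : w ∈ span R (A.col '' Iic k)) :
    ∃ c : R, ∃ z ∈ span R (A.col '' Iio k), w = c • A.col k + z ∧ w k = c * A k k := by
  rw [← Iio_insert, image_insert_eq, mem_span_insert] at hw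
  obtain ⟨c, z, hz, rfl⟩ := hw
  refine ⟨c, z, hz, rfl, ?_⟩
  simp [apply_eq_zero_of_mem_span_col_Iio hA hz]

lemma IsIdealizing.diag_dvd_of_covBy (hideal : IsIdealizing T A) (hA : A.IsUpperTriangular)
    {j k : ι} (hjk : j ⋖ k) (hlead : T (A.col j) k = A j j) (hj : A j j ∈ R⁰)
    (hdvd : ∀ l ≤ j, ∀ i, A j j ∣ A i l) : ∀ l ≤ k, ∀ i, A k k ∣ A i l := by
  obtain ⟨c, z, hz, hTj, hTjk⟩ := exists_eq_smul_col_add hA (hideal hjk)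
  have hdiag : A j j = c * A k k := hlead.symm.trans hTjk
  have hc : c ∈ R⁰ := (mul_mem_nonZeroDivisors.1 (hdiag ▸ hj)).1
  intro l hl i
  rcases hl.lt_or_eq with hlk | rfl
  · exact (Dvd.intro_left c hdiag.symm).trans (hdvd l (hjk.le_of_lt hlk) i)
  · have hdvd_T : A j j ∣ T (A.col j) i := dvd_linearMap_apply T (hdvd j le_rfl) i
    have hdvd_z : A j j ∣ z i := dvd_apply_of_mem_span
      (forall_mem_image.2 fun l hl => hdvd l (hjk.le_of_lt hl) i) hz
    have hdvd_smul : A j j ∣ c * A i l := by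
      rw [hTj] at hdvd_T
      exact (dvd_add_left hdvd_z).1 hdvd_T
    rw [hdiag] at hdvd_smul
    exact (dvd_cancel_left_mem_nonZeroDivisors hc).1 hdvd_smul

theorem idealizing_matrix_divisibility_general [PredOrder ι] [WellFoundedLT ι]
    (hA : A.IsUpperTriangular) (hdiag : ∀ j, A j j ∈ R⁰) (hideal : IsIdealizing T A)
    (hlead : ∀ ⦃j k⦄, j ⋖ k → T (A.col j) k = A j j) (j : ι) :
    ∀ k ≤ j, ∀ i, A j j ∣ A i k := by
  induction j using WellFoundedLT.induction with
  | ind j ih =>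
    by_cases hmin : IsMin j
    · intro k hk i
      obtain rfl : k = j := hmin.eq_of_le hk
      rcases (hmin.isBot i).lt_or_eq with hki | rfl
      · exact hA hki ▸ dvd_zero _
      · exact dvd_rfl
    · have hpred : Order.pred j ⋖ j := Order.pred_covBy_of_not_isMin hmin
      exact hideal.diag_dvd_of_covBy hA hpred (hlead hpred) (hdiag _) (ih _ hpred.lt)

end

section

variable {d : ℕ}

/-- The shift `shiftDown` as an endomorphism of `ℤ^d`. -/
def shiftDownLinearMap (d : ℕ) : (Fin d → ℤ) →ₗ[ℤ] (Fin d → ℤ) where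
  toFun := shiftDown
  map_add' v w := by
    ext i
    by_cases hi : (i : ℕ) = 0 <;> simp [shiftDown, hi]
  map_smul' a v := by
    ext i
    by_cases hi : (i : ℕ) = 0 <;> simp [shiftDown, hi]

lemma shiftDown_apply_of_covBy (v : Fin d → ℤ) {j k : Fin d} (hjk : j ⋖ k) :
    shiftDown v k = v j := by
  have hk : (k : ℕ) = j + 1 := (Nat.covBy_iff_add_one_eq.1 (Fin.covBy_iff.1 hjk)).symm
  simp [shiftDown, hk]

lemma isIdealizing_shiftDownLinearMap {A : Matrix (Fin d) (Fin d) ℤ}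
    (hideal : ∀ j : Fin d, (j : ℕ) + 2 ≤ d →
      shiftDown (fun i => A i j) ∈ span ℤ
        {w : Fin d → ℤ | ∃ l : Fin d, (l : ℕ) ≤ (j : ℕ) + 1 ∧ w = fun i => A i l}) :
    IsIdealizing (shiftDownLinearMap d) A := by
  intro j k hjk
  have hk : (j : ℕ) + 1 = k := Nat.covBy_iff_add_one_eq.1 (Fin.covBy_iff.1 hjk)
  refine span_mono ?_ (hideal j (by omega))
  rintro _ ⟨l, hl, rfl⟩
  exact ⟨l, Fin.le_def.2 (hl.trans_eq hk), rfl⟩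

end

/-- Divisibility property (2) of idealizing matrices: if `A` is upper triangular with
nonzero determinant and for each `0 ≤ j ≤ d-2` the shifted `j`-th column lies in the
subgroup generated by columns `0,…,j+1`, then `a_{j,j} ∣ a_{i,k}` for all `i, k ≤ j`. -/
theorem idealizing_matrix_divisibility {d : ℕ} (A : Matrix (Fin d) (Fin d) ℤ)
    (hut : ∀ i j : Fin d, (j : ℕ) < (i : ℕ) → A i j = 0)
    (hdet : A.det ≠ 0)
    (hideal : ∀ j : Fin d, (j : ℕ) + 2 ≤ d →
      shiftDown (fun i => A i j) ∈ Submodule.span ℤ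
        {w : Fin d → ℤ | ∃ l : Fin d, (l : ℕ) ≤ (j : ℕ) + 1 ∧ w = fun i => A i l}) :
    ∀ j i k : Fin d, 1 ≤ (j : ℕ) → (i : ℕ) ≤ (j : ℕ) → (k : ℕ) ≤ (j : ℕ) →
      A j j ∣ A i k := by
  have hA : A.IsUpperTriangular := fun i j => hut i j
  exact fun j i k _ _ hk => idealizing_matrix_divisibility_general hA
    (diag_mem_nonZeroDivisors_of_det_mem hA (mem_nonZeroDivisors_of_ne_zero hdet))
    (isIdealizing_shiftDownLinearMap hideal) (fun _ _ => shiftDown_apply_of_covBy _) j k hk i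
end

section
/- Fix d ≥ 1. For a monic polynomial f ∈ ℤ[X] of degree d, the quotient Z_f = ℤ[X]/(f) is a free ℤ-module with basis the classes of 1, X, …, X^{d-1}; let ρ_f : Z_f → ℤ^d be the corresponding coordinate isomorphism, ρ_f(Σ_{n=0}^{d-1} a_n X^n) = (a_0,…,a_{d-1}). For a positive integer n, let c_n^{(d)} be the number of subgroups Λ ⊆ ℤ^d of index n such that Λ = ρ_f(I) for some monic f ∈ ℤ[X] of degree d and some ideal I ⊆ Z_f. Then c_n^{(d)} = Σ ∏_{i=1}^{d-1} b_i^i, where the sum runs over all d-tuples (b_1,…,b_d) of positive integers with ∏_{i=1}^d b_i^i = n (and the empty product for d = 1 is 1). -/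
/-!
Vectors in `ℤ^d` are read as polynomials of degree `< d`. A lattice is an ideal lattice iff it is
stable under multiplication by `X` modulo some monic `X ^ d + g`.

Let `M` be an ideal lattice of finite index in degree `< d + 1`, and let `c` generate the ideal of
coefficients of `X ^ d` of its elements. Then `c` divides every element of `M`, so `M = c • N` where
`N` contains a monic polynomial of degree `d` and contains `X * p` for each `p ∈ N` of degree `< d`:
call such an `N` monic. Conversely each dilate of a monic lattice is an ideal lattice, and `(c, N)`
is determined by `M`. The index of `M` is `c ^ (d + 1)` times that of `N`.

A monic lattice `Λ` in degree `≤ d + 1` is spanned by its part `M` of degree `< d + 1` and a monic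
polynomial `X ^ (d + 1) + g`, where `M` is an ideal lattice for `g`, has the same index as `Λ`, and
`g` matters only modulo `M`. If `M = c • N` with `N` monic, the admissible `g` form a coset of `N`,
so there are `[N : c • N] = c ^ (d + 1)` monic lattices with low-degree part `M`.

Iterating, a monic lattice in degree `≤ d` yields a tuple `(b_1, …, b_d)` of contents; its index is
`∏ b_i ^ i`, and exactly `∏ b_i ^ i` monic lattices share the tuple. An ideal lattice `c • N` adds
the unweighted last entry `b_(d+1) = c`.
-/

open Polynomial

/-- A subgroup `Λ ⊆ ℤ^d` is an ideal lattice if it is the image, under the coordinate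
isomorphism with respect to the basis `1, X, …, X^{d-1}`, of an ideal of `ℤ[X]/(f)` for
some monic `f` of degree `d`. -/
def IsIdealLattice (d : ℕ) (Λ : AddSubgroup (Fin d → ℤ)) : Prop :=
  ∃ f : Polynomial ℤ, f.Monic ∧ f.natDegree = d ∧
    ∃ I : Ideal (Polynomial ℤ ⧸ Ideal.span {f}),
      ∀ v : Fin d → ℤ, v ∈ Λ ↔
        Ideal.Quotient.mk (Ideal.span {f}) (∑ i : Fin d, C (v i) * X ^ (i : ℕ)) ∈ I

open scoped Pointwise

section Vectors

variable {R : Type*} [CommRing R] {d : ℕ}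

/-- The inclusion of polynomials of degree `< d` into polynomials of degree `< d + 1`, on
coefficient vectors. -/
def appendZero : (Fin d → R) →ₗ[R] (Fin (d + 1) → R) where
  toFun v := Fin.snoc v 0
  map_add' u v := by ext i; refine Fin.lastCases ?_ (fun i ↦ ?_) i <;> simp
  map_smul' a v := by ext i; refine Fin.lastCases ?_ (fun i ↦ ?_) i <;> simp

/-- Multiplication by `X` on coefficient vectors. -/
def mulX : (Fin d → R) →ₗ[R] (Fin (d + 1) → R) where
  toFun v := Fin.cons 0 v
  map_add' u v := by ext i; refine Fin.cases ?_ (fun i ↦ ?_) i <;> simp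
  map_smul' a v := by ext i; refine Fin.cases ?_ (fun i ↦ ?_) i <;> simp

/-- Reduction of polynomials of degree `≤ d` modulo the monic polynomial
`X ^ d + ∑ i, g i * X ^ i`, on coefficient vectors. -/
def reduceMod (g : Fin d → R) : (Fin (d + 1) → R) →ₗ[R] (Fin d → R) :=
  LinearMap.funLeft R R Fin.castSucc - (LinearMap.proj (Fin.last d)).smulRight g

lemma reduceMod_apply (g : Fin d → R) (w : Fin (d + 1) → R) :
    reduceMod g w = Fin.init w - w (Fin.last d) • g := rfl

@[simp]
lemma appendZero_castSucc (v : Fin d → R) (i : Fin d) : appendZero v i.castSucc = v i :=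
  Fin.snoc_castSucc (α := fun _ ↦ R) 0 v i

@[simp]
lemma appendZero_last (v : Fin d → R) : appendZero v (Fin.last d) = 0 :=
  Fin.snoc_last (α := fun _ ↦ R) 0 v

@[simp]
lemma mulX_zero (v : Fin d → R) : mulX v 0 = 0 := rfl

@[simp]
lemma mulX_succ (v : Fin d → R) (i : Fin d) : mulX v i.succ = v i := rfl

@[simp]
lemma mulX_last (v : Fin (d + 1) → R) : mulX v (Fin.last (d + 1)) = v (Fin.last d) := rfl

lemma appendZero_init {w : Fin (d + 1) → R} (hw : w (Fin.last d) = 0) :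
    appendZero (Fin.init w) = w := by
  ext i; refine Fin.lastCases ?_ (fun i ↦ ?_) i <;> simp [hw, Fin.init]

lemma mulX_appendZero (v : Fin d → R) : mulX (appendZero v) = appendZero (mulX v) :=
  Fin.cons_snoc_eq_snoc_cons 0 v 0

lemma init_mulX (v : Fin (d + 1) → R) : Fin.init (mulX v) = mulX (Fin.init v) := by
  ext i; refine Fin.cases ?_ (fun i ↦ ?_) i <;> rfl

@[simp]
lemma reduceMod_appendZero (g v : Fin d → R) : reduceMod g (appendZero v) = v := by
  ext i; simp [reduceMod_apply, Fin.init]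

lemma reduceMod_surjective (g : Fin d → R) : Function.Surjective (reduceMod g) :=
  fun v ↦ ⟨appendZero v, reduceMod_appendZero g v⟩

lemma reduceMod_snoc_one (g h : Fin d → R) :
    reduceMod g (Fin.snoc h 1 : Fin (d + 1) → R) = h - g := by
  simp [reduceMod_apply]

lemma reduceMod_sub_reduceMod (g h : Fin d → R) (w : Fin (d + 1) → R) :
    reduceMod g w - reduceMod h w = w (Fin.last d) • (h - g) := by
  rw [reduceMod_apply, reduceMod_apply, smul_sub]
  abel

lemma reduceMod_mulX_mulX (g : Fin d → R) (v : Fin (d + 1) → R) :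
    reduceMod (mulX g) (mulX v) = mulX (reduceMod g v) := by
  rw [reduceMod_apply, reduceMod_apply, init_mulX, mulX_last, map_sub, map_smul]

lemma appendZero_reduceMod_init {w : Fin (d + 1) → R} (hw : w (Fin.last d) = 1)
    (u : Fin (d + 1) → R) :
    appendZero (reduceMod (Fin.init w) u) = u - u (Fin.last d) • w := by
  have hinit : reduceMod (Fin.init w) u = Fin.init (u - u (Fin.last d) • w) := rfl
  rw [hinit, appendZero_init (by simp [hw])]

/-- `M` is stable under multiplication by `X` modulo `X ^ d + ∑ i, g i * X ^ i`. -/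
def IsStableMod (g : Fin d → R) (M : Submodule R (Fin d → R)) : Prop :=
  ∀ v ∈ M, reduceMod g (mulX v) ∈ M

end Vectors

lemma smul_mem_of_X_smul_mem {R M : Type*} [CommSemiring R] [AddCommMonoid M] [Module R M]
    [Module R[X] M] [IsScalarTower R R[X] M] {N : Submodule R M}
    (hX : ∀ y ∈ N, (X : R[X]) • y ∈ N) (p : R[X]) : ∀ y ∈ N, p • y ∈ N := by
  induction p using Polynomial.induction_on' with
  | add p q hp hq => exact fun y hy ↦ add_smul p q y ▸ N.add_mem (hp y hy) (hq y hy)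
  | monomial n a =>
    have hpow (n : ℕ) : ∀ y ∈ N, (X ^ n : R[X]) • y ∈ N := by
      induction n with
      | zero => simp
      | succ n ih => exact fun y hy ↦ by rw [pow_succ, mul_smul]; exact ih _ (hX y hy)
    intro y hy
    rw [← mul_one a, ← smul_eq_mul, ← smul_monomial, smul_assoc, monomial_one_right_eq_X_pow]
    exact N.smul_mem a (hpow n y hy)

section QuotientRing

variable {R : Type*} [CommRing R] [DecidableEq R] {d : ℕ}

/-- The monic polynomial `X ^ d + ∑ i, g i * X ^ i`. -/
noncomputable def monicOfFn (g : Fin d → R) : R[X] := X ^ d + ofFn d g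

lemma monic_monicOfFn (g : Fin d → R) : (monicOfFn g).Monic := monic_X_pow_add (ofFn_degree_lt g)

lemma degree_monicOfFn [Nontrivial R] (g : Fin d → R) : (monicOfFn g).degree = d := by
  rw [monicOfFn, degree_add_eq_left_of_degree_lt, degree_X_pow]
  simpa only [degree_X_pow] using ofFn_degree_lt g

lemma monicOfFn_toFn {f : R[X]} (hf : f.Monic) : monicOfFn (toFn f.natDegree f) = f := by
  conv_rhs => rw [hf.as_sum]
  simp [monicOfFn, ofFn_eq_sum_monomial, Finset.sum_range, toFn, C_mul_X_pow_eq_monomial]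

lemma ofFn_mulX (v : Fin d → R) : ofFn (d + 1) (mulX v) = X * ofFn d v := by
  simp [ofFn_eq_sum_monomial, Fin.sum_univ_succ, Finset.mul_sum, X_mul_monomial]

lemma ofFn_eq_ofFn_reduceMod_add (g : Fin d → R) (w : Fin (d + 1) → R) :
    ofFn (d + 1) w = ofFn d (reduceMod g w) + C (w (Fin.last d)) * monicOfFn g := by
  rw [reduceMod_apply, map_sub, map_smul, monicOfFn, smul_eq_C_mul, mul_add,
    C_mul_X_pow_eq_monomial]
  simp only [ofFn_eq_sum_monomial, Fin.sum_univ_castSucc, Fin.init, Fin.val_castSucc, Fin.val_last]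
  abel

/-- The class in `R[X] ⧸ (X ^ d + ∑ i, g i * X ^ i)` of the polynomial with a given coefficient
vector: the inverse of the coordinate isomorphism. -/
noncomputable def ofCoords (g : Fin d → R) :
    (Fin d → R) →ₗ[R] R[X] ⧸ Ideal.span {monicOfFn g} :=
  (Ideal.Quotient.mkₐ R (Ideal.span {monicOfFn g})).toLinearMap ∘ₗ ofFn d

lemma ofCoords_apply (g v : Fin d → R) :
    ofCoords g v = Ideal.Quotient.mk (Ideal.span {monicOfFn g}) (ofFn d v) := rfl

lemma ofCoords_reduceMod_mulX (g v : Fin d → R) :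
    ofCoords g (reduceMod g (mulX v)) =
      Ideal.Quotient.mk (Ideal.span {monicOfFn g}) X * ofCoords g v := by
  rw [ofCoords_apply, ofCoords_apply, ← map_mul, ← ofFn_mulX, ofFn_eq_ofFn_reduceMod_add g,
    Ideal.Quotient.eq, ← neg_mem_iff, neg_sub, add_sub_cancel_left]
  exact Ideal.mul_mem_left _ _ (Ideal.mem_span_singleton_self _)

lemma ofCoords_injective (g : Fin d → R) : Function.Injective (ofCoords g) := by
  nontriviality R
  rw [injective_iff_map_eq_zero]
  intro v hv
  rw [ofCoords_apply, Ideal.Quotient.eq_zero_iff_dvd] at hv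
  have hdeg : (ofFn d v).degree < (monicOfFn g).degree := by
    rw [degree_monicOfFn]
    exact ofFn_degree_lt v
  have hzero : ofFn d v = 0 := by
    by_contra hne
    exact (monic_monicOfFn g).not_dvd_of_degree_lt hne hdeg hv
  exact injective_ofFn d (hzero.trans (map_zero _).symm)

lemma exists_ideal_iff_isStableMod (g : Fin d → R) (M : Submodule R (Fin d → R)) :
    (∃ I : Ideal (R[X] ⧸ Ideal.span {monicOfFn g}), ∀ v, v ∈ M ↔ ofCoords g v ∈ I) ↔
      IsStableMod g M := by
  constructor
  · rintro ⟨I, hI⟩ v hv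
    rw [hI, ofCoords_reduceMod_mulX]
    exact I.mul_mem_left _ ((hI v).1 hv)
  · intro hM
    have hX : ∀ y ∈ M.map (ofCoords g), (X : R[X]) • y ∈ M.map (ofCoords g) := by
      rintro _ ⟨v, hv, rfl⟩
      exact ⟨_, hM v hv, ofCoords_reduceMod_mulX g v⟩
    let I : Ideal (R[X] ⧸ Ideal.span {monicOfFn g}) :=
      { M.map (ofCoords g) with
        smul_mem' a y hy := by
          obtain ⟨p, rfl⟩ := Ideal.Quotient.mk_surjective a
          exact smul_mem_of_X_smul_mem hX p y hy }
    have hI (v : Fin d → R) : ofCoords g v ∈ I ↔ v ∈ M :=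
      Submodule.mem_map.trans (ofCoords_injective g).mem_set_image
    exact ⟨I, fun v ↦ (hI v).symm⟩

end QuotientRing

lemma isIdealLattice_toAddSubgroup_iff {d : ℕ} (M : Submodule ℤ (Fin d → ℤ)) :
    IsIdealLattice d M.toAddSubgroup ↔ ∃ g, IsStableMod g M := by
  simp only [IsIdealLattice, C_mul_X_pow_eq_monomial, ← ofFn_eq_sum_monomial,
    ← exists_ideal_iff_isStableMod, Submodule.mem_toAddSubgroup]
  constructor
  · rintro ⟨f, hf, rfl, hI⟩
    refine ⟨toFn f.natDegree f, ?_⟩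
    simp only [ofCoords_apply]
    rwa [monicOfFn_toFn hf]
  · rintro ⟨g, hI⟩
    exact ⟨monicOfFn g, monic_monicOfFn g, natDegree_eq_of_degree_eq_some (degree_monicOfFn g), hI⟩

section MonicLattices

variable {R : Type*} [CommRing R] {d : ℕ}

/-- The elements of degree `< d` of a lattice of polynomials of degree `≤ d`. -/
def lowPart (Λ : Submodule R (Fin (d + 1) → R)) : Submodule R (Fin d → R) := Λ.comap appendZero

/-- The ideal of coefficients of `X ^ d` in a lattice of polynomials of degree `≤ d`. -/
def leadingIdeal (Λ : Submodule R (Fin (d + 1) → R)) : Ideal R :=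
  Λ.map (LinearMap.proj (Fin.last d))

/-- The lattice `M + R * (X ^ d + ∑ i, g i * X ^ i)` of polynomials of degree `≤ d`, encoded as
the preimage of `M` under reduction modulo the new generator. -/
def adjoinMonic (g : Fin d → R) (M : Submodule R (Fin d → R)) : Submodule R (Fin (d + 1) → R) :=
  M.comap (reduceMod g)

/-- A lattice of polynomials of degree `≤ d` that contains `X * p` for each of its elements `p` of
degree `< d`. -/
def IsShiftClosed (Λ : Submodule R (Fin (d + 1) → R)) : Prop :=
  ∀ v ∈ lowPart Λ, mulX v ∈ Λ

/-- A shift-closed lattice of polynomials of degree `≤ d` that contains a monic polynomial of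
degree `d`. Such lattices are the truncations in degree `≤ d` of the ideals of `R[X]` that contain
a monic polynomial of degree `d`. -/
structure IsMonicLattice (Λ : Submodule R (Fin (d + 1) → R)) : Prop where
  isShiftClosed : IsShiftClosed Λ
  leadingIdeal_eq_top : leadingIdeal Λ = ⊤

variable {g h : Fin d → R} {M : Submodule R (Fin d → R)} {Λ : Submodule R (Fin (d + 1) → R)}

lemma mem_lowPart {v : Fin d → R} : v ∈ lowPart Λ ↔ appendZero v ∈ Λ := Iff.rfl

lemma mem_adjoinMonic {w : Fin (d + 1) → R} : w ∈ adjoinMonic g M ↔ reduceMod g w ∈ M := Iff.rfl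

lemma mem_leadingIdeal {a : R} : a ∈ leadingIdeal Λ ↔ ∃ w ∈ Λ, w (Fin.last d) = a := Iff.rfl

lemma isMonicLattice_top : IsMonicLattice (⊤ : Submodule R (Fin (d + 1) → R)) where
  isShiftClosed _ _ := Submodule.mem_top
  leadingIdeal_eq_top := (Ideal.eq_top_iff_one _).2 ⟨1, Submodule.mem_top, rfl⟩

lemma eq_top_of_leadingIdeal_eq_top {N : Submodule R (Fin 1 → R)} (hN : leadingIdeal N = ⊤) :
    N = ⊤ := by
  refine eq_top_iff.2 fun v _ ↦ ?_
  obtain ⟨w, hw, hwv⟩ := mem_leadingIdeal.1 (hN ▸ Submodule.mem_top : v (Fin.last 0) ∈ _)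
  obtain rfl : w = v := by
    ext i
    rwa [Fin.fin_one_eq_zero i]
  exact hw

lemma lowPart_adjoinMonic (g : Fin d → R) (M : Submodule R (Fin d → R)) :
    lowPart (adjoinMonic g M) = M := by
  ext v; rw [mem_lowPart, mem_adjoinMonic, reduceMod_appendZero]

lemma snoc_one_mem_adjoinMonic_iff :
    (Fin.snoc h 1 : Fin (d + 1) → R) ∈ adjoinMonic g M ↔ h - g ∈ M := by
  rw [mem_adjoinMonic, reduceMod_snoc_one]

lemma leadingIdeal_adjoinMonic (g : Fin d → R) (M : Submodule R (Fin d → R)) :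
    leadingIdeal (adjoinMonic g M) = ⊤ :=
  (Ideal.eq_top_iff_one _).2
    ⟨Fin.snoc g 1, snoc_one_mem_adjoinMonic_iff.2 (by simp), Fin.snoc_last (α := fun _ ↦ R) 1 g⟩

lemma isMonicLattice_adjoinMonic_iff : IsMonicLattice (adjoinMonic g M) ↔ IsStableMod g M := by
  have hshift : IsShiftClosed (adjoinMonic g M) ↔ IsStableMod g M := by
    rw [IsShiftClosed, lowPart_adjoinMonic]; rfl
  exact ⟨fun hΛ ↦ hshift.1 hΛ.1, fun hM ↦ ⟨hshift.2 hM, leadingIdeal_adjoinMonic g M⟩⟩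

lemma adjoinMonic_eq_adjoinMonic_iff : adjoinMonic g M = adjoinMonic h M ↔ g - h ∈ M := by
  constructor
  · intro heq
    rw [← snoc_one_mem_adjoinMonic_iff, ← heq, snoc_one_mem_adjoinMonic_iff, sub_self]
    exact M.zero_mem
  · intro hgh
    ext w
    rw [mem_adjoinMonic, mem_adjoinMonic, ← sub_add_cancel (reduceMod h w) (reduceMod g w),
      reduceMod_sub_reduceMod, M.add_mem_iff_right (M.smul_mem _ hgh)]

lemma adjoinMonic_init_lowPart {w : Fin (d + 1) → R} (hw : w ∈ Λ) (hw1 : w (Fin.last d) = 1) :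
    adjoinMonic (Fin.init w) (lowPart Λ) = Λ := by
  ext u
  rw [mem_adjoinMonic, mem_lowPart, appendZero_reduceMod_init hw1,
    Λ.sub_mem_iff_left (Λ.smul_mem _ hw)]

lemma IsMonicLattice.exists_adjoinMonic_lowPart_eq (hΛ : IsMonicLattice Λ) :
    ∃ g, IsStableMod g (lowPart Λ) ∧ adjoinMonic g (lowPart Λ) = Λ := by
  obtain ⟨w, hw, hw1⟩ := (Ideal.eq_top_iff_one _).1 hΛ.leadingIdeal_eq_top
  have heq := adjoinMonic_init_lowPart hw hw1
  exact ⟨Fin.init w, isMonicLattice_adjoinMonic_iff.1 (by rwa [heq]), heq⟩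

lemma IsStableMod.isShiftClosed {g : Fin (d + 1) → R} (hΛ : IsStableMod g Λ) :
    IsShiftClosed Λ := fun v hv ↦ by
  simpa only [mulX_appendZero, reduceMod_appendZero] using hΛ _ hv

lemma IsShiftClosed.isShiftClosed_lowPart {Λ : Submodule R (Fin (d + 2) → R)}
    (hΛ : IsShiftClosed Λ) : IsShiftClosed (lowPart Λ) := fun v hv ↦ by
  rw [mem_lowPart, ← mulX_appendZero]
  exact hΛ _ hv

-- If `Λ` contains the monic polynomial `f = X ^ d + g`, one may reduce modulo `X * f`.
lemma IsMonicLattice.exists_isStableMod (hΛ : IsMonicLattice Λ) : ∃ g, IsStableMod g Λ := by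
  obtain ⟨g, -, heq⟩ := hΛ.exists_adjoinMonic_lowPart_eq
  refine ⟨mulX g, fun v hv ↦ ?_⟩
  rw [reduceMod_mulX_mulX]
  exact hΛ.isShiftClosed _ (mem_adjoinMonic.1 (heq.ge hv))

lemma IsStableMod.smul (hM : IsStableMod g M) (c : R) : IsStableMod g (c • M) := by
  rintro _ ⟨v, hv, rfl⟩
  exact ⟨_, hM v hv, by simp⟩

lemma IsStableMod.iff_forall_leadingIdeal_smul {g₀ g : Fin (d + 1) → R} (hΛ : IsStableMod g₀ Λ) :
    IsStableMod g Λ ↔ ∀ a ∈ leadingIdeal Λ, a • (g - g₀) ∈ Λ := by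
  have hdiff (v) (hv : v ∈ Λ) : reduceMod g (mulX v) ∈ Λ ↔ v (Fin.last d) • (g - g₀) ∈ Λ := by
    rw [← mulX_last v, ← neg_sub g₀ g, smul_neg, neg_mem_iff, ← reduceMod_sub_reduceMod,
      Λ.sub_mem_iff_left (hΛ v hv)]
  constructor
  · rintro hg _ ⟨v, hv, rfl⟩
    exact (hdiff v hv).1 (hg v hv)
  · exact fun hg v hv ↦ (hdiff v hv).2 (hg _ ⟨v, hv, rfl⟩)

lemma leadingIdeal_smul (c : R) (Λ : Submodule R (Fin (d + 1) → R)) :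
    leadingIdeal (c • Λ) = c • leadingIdeal Λ := by
  ext a
  simp [mem_leadingIdeal, Submodule.mem_smul_pointwise_iff_exists]

lemma IsMonicLattice.leadingIdeal_smul_eq_span (hΛ : IsMonicLattice Λ) (c : R) :
    leadingIdeal (c • Λ) = Ideal.span {c} := by
  rw [leadingIdeal_smul, hΛ.leadingIdeal_eq_top]
  ext a
  simp [Submodule.mem_smul_pointwise_iff_exists, Ideal.mem_span_singleton', mul_comm]

lemma exists_smul_eq_of_forall_dvd {ι : Type*} {c : R} {M : Submodule R (ι → R)}
    (hM : ∀ v ∈ M, ∀ i, c ∣ v i) : ∃ N : Submodule R (ι → R), c • N = M := by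
  refine ⟨M.comap (LinearMap.lsmul R (ι → R) c), le_antisymm ?_ fun v hv ↦ ?_⟩
  · rintro _ ⟨u, hu, rfl⟩
    exact hu
  · choose u hu using hM v hv
    obtain rfl : c • u = v := funext fun i ↦ (hu i).symm
    exact ⟨u, hv, rfl⟩

end MonicLattices

section Dilation

variable {R : Type*} [CommRing R] [IsDomain R] {d : ℕ}

lemma smul_mem_smul_iff {V : Type*} [AddCommGroup V] [Module R V] [Module.IsTorsionFree R V]
    {c : R} (hc : c ≠ 0) {N : Submodule R V} {v : V} : c • v ∈ c • N ↔ v ∈ N := by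
  rw [Submodule.mem_smul_pointwise_iff_exists]
  exact ⟨fun ⟨u, hu, heq⟩ ↦ smul_right_injective _ hc heq ▸ hu, fun hv ↦ ⟨v, hv, rfl⟩⟩

lemma IsMonicLattice.isStableMod_smul_iff {N : Submodule R (Fin (d + 1) → R)}
    (hN : IsMonicLattice N) {c : R} (hc : c ≠ 0) {g₀ g : Fin (d + 1) → R}
    (hg₀ : IsStableMod g₀ (c • N)) : IsStableMod g (c • N) ↔ g - g₀ ∈ N := by
  rw [hg₀.iff_forall_leadingIdeal_smul, hN.leadingIdeal_smul_eq_span]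
  constructor
  · exact fun h ↦ (smul_mem_smul_iff hc).1 (h c (Ideal.mem_span_singleton_self c))
  · intro h a ha
    obtain ⟨b, rfl⟩ := Ideal.mem_span_singleton.1 ha
    rw [mul_smul, smul_mem_smul_iff hc]
    exact N.smul_mem b h

lemma isMonicLattice_of_smul {c : R} (hc : c ≠ 0) {N : Submodule R (Fin (d + 1) → R)}
    (hN : IsShiftClosed (c • N)) (hlead : leadingIdeal (c • N) = Ideal.span {c}) :
    IsMonicLattice N where
  isShiftClosed v hv := by
    rw [← smul_mem_smul_iff hc, ← map_smul]
    refine hN _ ?_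
    rwa [mem_lowPart, map_smul, smul_mem_smul_iff hc]
  leadingIdeal_eq_top := by
    have hmem : c • (1 : R) ∈ c • leadingIdeal N := by
      rw [← leadingIdeal_smul, hlead, smul_eq_mul, mul_one]
      exact Ideal.mem_span_singleton_self c
    exact (Ideal.eq_top_iff_one _).2 ((smul_mem_smul_iff hc).1 hmem)

-- Write `c' = c * e`. Subtracting from `e • v` a multiple of some `X * w ∈ M` with leading
-- coefficient `c'` leaves an element of `lowPart M`, so `c'` divides `e • v`.
lemma IsShiftClosed.dvd_apply_of_forall_lowPart {M : Submodule R (Fin (d + 2) → R)}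
    (hM : IsShiftClosed M) {c c' : R} (hc : leadingIdeal M = Ideal.span {c})
    (hc' : leadingIdeal (lowPart M) = Ideal.span {c'}) (hc'0 : c' ≠ 0)
    (hlow : ∀ u ∈ lowPart M, ∀ i, c' ∣ u i) {v : Fin (d + 2) → R} (hv : v ∈ M)
    (i : Fin (d + 2)) : c ∣ v i := by
  obtain ⟨w, hw, hwc'⟩ := mem_leadingIdeal.1 (hc'.ge (Ideal.mem_span_singleton_self c'))
  have hlead (u) (hu : u ∈ M) : c ∣ u (Fin.last _) :=
    Ideal.mem_span_singleton.1 (hc.le ⟨u, hu, rfl⟩)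
  obtain ⟨e, he⟩ : c ∣ c' := by simpa only [mulX_last, hwc'] using hlead _ (hM w hw)
  obtain ⟨k, hk⟩ := hlead v hv
  have hu0 : (e • v - k • mulX w) (Fin.last _) = 0 := by
    simp only [Pi.sub_apply, Pi.smul_apply, smul_eq_mul, mulX_last, hk, hwc', he]
    ring
  have hu : Fin.init (e • v - k • mulX w) ∈ lowPart M := by
    rw [mem_lowPart, appendZero_init hu0]
    exact M.sub_mem (M.smul_mem e hv) (M.smul_mem k (hM w hw))
  have hdvd_u : c' ∣ (e • v - k • mulX w) i := by
    refine Fin.lastCases ?_ (fun j ↦ hlow _ hu j) i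
    simp only [hu0, dvd_zero]
  have hdvd_mulX : c' ∣ mulX w i := Fin.cases (dvd_zero c') (fun j ↦ hlow w hw j) i
  have hdvd : e * c ∣ e * v i := by
    have := dvd_add hdvd_u (hdvd_mulX.mul_left k)
    rwa [Pi.sub_apply, Pi.smul_apply, Pi.smul_apply, smul_eq_mul, smul_eq_mul, sub_add_cancel, he,
      mul_comm c e] at this
  exact (mul_dvd_mul_iff_left (right_ne_zero_of_mul (he ▸ hc'0))).1 hdvd

lemma IsShiftClosed.apply_mem_leadingIdeal [IsPrincipalIdealRing R] {a : R} (ha : a ≠ 0)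
    {M : Submodule R (Fin (d + 1) → R)} (hM : IsShiftClosed M) (haM : ∀ v, a • v ∈ M)
    {v : Fin (d + 1) → R} (hv : v ∈ M) (i : Fin (d + 1)) : v i ∈ leadingIdeal M := by
  induction d with
  | zero => exact ⟨v, hv, congrArg v (Subsingleton.elim (α := Fin 1) _ i)⟩
  | succ d ih =>
    have haL (u : Fin (d + 1) → R) : a • u ∈ lowPart M := by
      rw [mem_lowPart, map_smul]
      exact haM _
    obtain ⟨c, hc⟩ := IsPrincipalIdealRing.principal (leadingIdeal M)
    obtain ⟨c', hc'⟩ := IsPrincipalIdealRing.principal (leadingIdeal (lowPart M))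
    rw [Ideal.submodule_span_eq] at hc hc'
    have hlow (u) (hu : u ∈ lowPart M) (j) : c' ∣ u j :=
      Ideal.mem_span_singleton.1 (hc' ▸ ih hM.isShiftClosed_lowPart haL hu j)
    have hc'0 : c' ≠ 0 := fun h0 ↦
      ha (zero_dvd_iff.1 (by simpa [h0] using hlow _ (haL 1) 0))
    rw [hc, Ideal.mem_span_singleton]
    exact hM.dvd_apply_of_forall_lowPart hc hc' hc'0 hlow hv i

lemma IsShiftClosed.exists_isMonicLattice_smul_eq [IsPrincipalIdealRing R] {a : R} (ha : a ≠ 0)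
    {M : Submodule R (Fin (d + 1) → R)} (hM : IsShiftClosed M) (haM : ∀ v, a • v ∈ M) {c : R}
    (hc : leadingIdeal M = Ideal.span {c}) : c ≠ 0 ∧ ∃ N, IsMonicLattice N ∧ c • N = M := by
  have hdvd (v) (hv : v ∈ M) (i) : c ∣ v i :=
    Ideal.mem_span_singleton.1 (hc ▸ hM.apply_mem_leadingIdeal ha haM hv i)
  have hc0 : c ≠ 0 := fun h0 ↦ ha (zero_dvd_iff.1 (by simpa [h0] using hdvd _ (haM 1) 0))
  obtain ⟨N, rfl⟩ := exists_smul_eq_of_forall_dvd hdvd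
  exact ⟨hc0, N, isMonicLattice_of_smul hc0 hM hc, rfl⟩

end Dilation

lemma card_eq_index_of_surjective {G β : Type*} [AddGroup G] (H : AddSubgroup G) {f : G → β}
    (hf : Function.Surjective f) (hH : ∀ x y, f x = f y ↔ -x + y ∈ H) :
    Nat.card β = H.index := by
  have hker : Setoid.ker f = QuotientAddGroup.leftRel H := by
    ext x y
    rw [Setoid.ker_def, hH, QuotientAddGroup.leftRel_apply]
  rw [← Nat.card_congr (Setoid.quotientKerEquivOfSurjective f hf), hker]
  rfl

lemma IsMonicLattice.card_monicLattice_lowPart_eq_smul {R : Type*} [CommRing R] [IsDomain R]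
    {d : ℕ} {N : Submodule R (Fin (d + 1) → R)} (hN : IsMonicLattice N) {c : R} (hc : c ≠ 0) :
    Nat.card {Λ // IsMonicLattice Λ ∧ lowPart Λ = c • N} =
      (c • N).toAddSubgroup.relIndex N.toAddSubgroup := by
  obtain ⟨g₀, hg₀⟩ := hN.exists_isStableMod
  have hstable {g} : IsStableMod g (c • N) ↔ g - g₀ ∈ N := hN.isStableMod_smul_iff hc (hg₀.smul c)
  let extend (x : N.toAddSubgroup) : {Λ // IsMonicLattice Λ ∧ lowPart Λ = c • N} :=
    ⟨adjoinMonic (g₀ + x) (c • N),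
      isMonicLattice_adjoinMonic_iff.2 (hstable.2 (by simp)), lowPart_adjoinMonic _ _⟩
  refine card_eq_index_of_surjective _ (f := extend) ?_ fun x y ↦ ?_
  · rintro ⟨Λ, hΛ, hlow⟩
    obtain ⟨g, hg, heq⟩ := hΛ.exists_adjoinMonic_lowPart_eq
    rw [hlow] at hg heq
    refine ⟨⟨g - g₀, hstable.1 hg⟩, Subtype.ext ?_⟩
    simpa only [extend, add_sub_cancel] using heq
  · rw [Subtype.ext_iff, adjoinMonic_eq_adjoinMonic_iff, add_sub_add_left_eq_sub, ← neg_mem_iff,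
      neg_sub, AddSubgroup.mem_addSubgroupOf, neg_add_eq_sub]
    rfl

section Index

lemma index_adjoinMonic {R : Type*} [CommRing R] {d : ℕ} (g : Fin d → R)
    (M : Submodule R (Fin d → R)) :
    (adjoinMonic g M).toAddSubgroup.index = M.toAddSubgroup.index := by
  have hcomap : (adjoinMonic g M).toAddSubgroup =
      M.toAddSubgroup.comap (reduceMod g).toAddMonoidHom := rfl
  rw [hcomap, AddSubgroup.index_comap_of_surjective _ (reduceMod_surjective g)]

lemma IsMonicLattice.index_lowPart {R : Type*} [CommRing R] {d : ℕ}
    {Λ : Submodule R (Fin (d + 1) → R)} (hΛ : IsMonicLattice Λ) :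
    (lowPart Λ).toAddSubgroup.index = Λ.toAddSubgroup.index := by
  obtain ⟨g, -, heq⟩ := hΛ.exists_adjoinMonic_lowPart_eq
  rw [← index_adjoinMonic g, heq]

variable {V : Type*} [AddCommGroup V] [Module.Free ℤ V] [Module.Finite ℤ V] {c : ℕ}

lemma index_natCast_smul (hc : c ≠ 0) (N : Submodule ℤ V) :
    ((c : ℤ) • N).toAddSubgroup.index = N.toAddSubgroup.index * c ^ Module.finrank ℤ V := by
  have hmap : ((c : ℤ) • N).toAddSubgroup = N.toAddSubgroup.map (nsmulAddMonoidHom c) := by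
    ext v
    rw [Submodule.mem_toAddSubgroup, Submodule.mem_smul_pointwise_iff_exists, AddSubgroup.mem_map]
    simp
  rw [hmap, AddSubgroup.index_map_of_injective _
    (AddSubgroup.nsmulAddMonoidHom_injective_of_isTorsionFree hc), AddSubgroup.index_range_nsmul]

lemma relIndex_natCast_smul (hc : c ≠ 0) {N : Submodule ℤ V} (hN : N.toAddSubgroup.index ≠ 0) :
    ((c : ℤ) • N).toAddSubgroup.relIndex N.toAddSubgroup = c ^ Module.finrank ℤ V := by
  have hle : (c : ℤ) • N ≤ N := Submodule.smul_le_self_of_tower _ N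
  have hmul := AddSubgroup.relIndex_mul_index (Submodule.toAddSubgroup_mono hle)
  rw [index_natCast_smul hc, mul_comm] at hmul
  exact Nat.eq_of_mul_eq_mul_left (Nat.pos_of_ne_zero hN) hmul

end Index

/-- Ideal lattices of finite index in the polynomials of degree `< d`. -/
abbrev IdealLattice (d : ℕ) : Type :=
  {M : Submodule ℤ (Fin d → ℤ) // M.toAddSubgroup.index ≠ 0 ∧ ∃ g, IsStableMod g M}

/-- Monic lattices of finite index in the polynomials of degree `≤ d`. -/
abbrev MonicLattice (d : ℕ) : Type :=
  {N : Submodule ℤ (Fin (d + 1) → ℤ) // N.toAddSubgroup.index ≠ 0 ∧ IsMonicLattice N}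

section Content

variable {d : ℕ}

/-- The ideal lattice `c • N` of content `c`. -/
def MonicLattice.dilate (p : ℕ+ × MonicLattice d) : IdealLattice (d + 1) :=
  ⟨((p.1 : ℕ) : ℤ) • p.2.1, by
    rw [index_natCast_smul p.1.ne_zero]
    exact mul_ne_zero p.2.2.1 (pow_ne_zero _ p.1.ne_zero),
    p.2.2.2.exists_isStableMod.imp fun _ hg ↦ hg.smul _⟩

lemma MonicLattice.dilate_injective : Function.Injective (dilate (d := d)) := by
  rintro ⟨c, N, _, hN⟩ ⟨c', N', _, hN'⟩ hdilate
  have hsmul : ((c : ℕ) : ℤ) • N = ((c' : ℕ) : ℤ) • N' := congrArg Subtype.val hdilate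
  have hspan : Ideal.span {((c : ℕ) : ℤ)} = Ideal.span {((c' : ℕ) : ℤ)} := by
    rw [← hN.leadingIdeal_smul_eq_span, hsmul, hN'.leadingIdeal_smul_eq_span]
  obtain rfl : c = c' := PNat.eq <| by
    simpa [Int.associated_iff_natAbs] using Ideal.span_singleton_eq_span_singleton.1 hspan
  have hc : ((c : ℕ) : ℤ) ≠ 0 := Nat.cast_ne_zero.2 c.ne_zero
  obtain rfl : N = N' := by
    ext v
    rw [← smul_mem_smul_iff hc, hsmul, smul_mem_smul_iff hc]
  rfl

lemma MonicLattice.dilate_surjective : Function.Surjective (dilate (d := d)) := by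
  rintro ⟨M, hM, g, hg⟩
  obtain ⟨a, ha⟩ := IsPrincipalIdealRing.principal (leadingIdeal M)
  have hlead : leadingIdeal M = Ideal.span {(a.natAbs : ℤ)} := by
    rw [ha, Ideal.submodule_span_eq, Int.span_natAbs]
  obtain ⟨ha0, N, hN, rfl⟩ := hg.isShiftClosed.exists_isMonicLattice_smul_eq (Nat.cast_ne_zero.2 hM)
    (fun v ↦ by simpa using AddSubgroup.nsmul_index_mem M.toAddSubgroup v) hlead
  have hc : a.natAbs ≠ 0 := Nat.cast_ne_zero.1 ha0
  rw [index_natCast_smul hc] at hM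
  exact ⟨(⟨a.natAbs, Nat.pos_of_ne_zero hc⟩, ⟨N, left_ne_zero_of_mul hM, hN⟩), rfl⟩

/-- Every ideal lattice of finite index is uniquely a dilate of a monic lattice; this is the
decomposition `M = c • N`, read from right to left. -/
noncomputable def dilateEquiv (d : ℕ) : ℕ+ × MonicLattice d ≃ IdealLattice (d + 1) :=
  Equiv.ofBijective _ ⟨MonicLattice.dilate_injective, MonicLattice.dilate_surjective⟩

lemma index_dilateEquiv (c : ℕ+) (N : MonicLattice d) :
    (dilateEquiv d (c, N)).1.toAddSubgroup.index = N.1.toAddSubgroup.index * (c : ℕ) ^ (d + 1) :=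
  (index_natCast_smul c.ne_zero N.1).trans (by rw [Module.finrank_fin_fun])

/-- `lowPart` as a map from monic lattices to ideal lattices. -/
def MonicLattice.low (Λ : MonicLattice (d + 1)) : IdealLattice (d + 1) :=
  ⟨lowPart Λ.1, by rw [Λ.2.2.index_lowPart]; exact Λ.2.1,
    Λ.2.2.exists_adjoinMonic_lowPart_eq.imp fun _ hg ↦ hg.1⟩

lemma card_low_eq_dilateEquiv (c : ℕ+) (N : MonicLattice d) :
    Nat.card {Λ : MonicLattice (d + 1) // Λ.low = dilateEquiv d (c, N)} = (c : ℕ) ^ (d + 1) := by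
  have hfib : {Λ : MonicLattice (d + 1) // Λ.low = dilateEquiv d (c, N)} ≃
      {Λ // IsMonicLattice Λ ∧ lowPart Λ = ((c : ℕ) : ℤ) • N.1} :=
    { toFun Λ := ⟨Λ.1.1, Λ.1.2.2, congrArg Subtype.val Λ.2⟩
      invFun Λ := ⟨⟨Λ.1, by
        rw [← Λ.2.1.index_lowPart, Λ.2.2]; exact (dilateEquiv d (c, N)).2.1, Λ.2.1⟩,
        Subtype.ext Λ.2.2⟩ }
  rw [Nat.card_congr hfib,
    N.2.2.card_monicLattice_lowPart_eq_smul (Nat.cast_ne_zero.2 c.ne_zero),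
    relIndex_natCast_smul c.ne_zero N.2.1, Module.finrank_fin_fun]

end Content

section Fibers

variable {α β : Type*} (f : α → β) (p : β → Prop)

lemma card_subtype_comp_eq_mul {k : ℕ} (hk : k ≠ 0)
    (hf : ∀ y, p y → Nat.card {x // f x = y} = k) :
    Nat.card {x // p (f x)} = Nat.card {y // p y} * k := by
  have hfiber (y : {y // p y}) : {x // f x = y} ≃ Fin k :=
    have : Finite {x // f x = y} := Nat.finite_of_card_ne_zero (by rwa [hf y y.2])
    Finite.equivFinOfCardEq (hf y y.2)
  rw [← Nat.card_congr (Equiv.sigmaSubtypeFiberEquivSubtype f fun _ ↦ Iff.rfl),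
    Nat.card_congr (Equiv.sigmaCongrRight hfiber), Nat.card_congr (Equiv.sigmaEquivProd _ _),
    Nat.card_prod, Nat.card_fin]

lemma card_subtype_comp_eq_finsum [Finite {y // p y}]
    (hf : ∀ y, p y → Finite {x // f x = y}) :
    Nat.card {x // p (f x)} = ∑ᶠ (y) (_ : p y), Nat.card {x // f x = y} := by
  have := Fintype.ofFinite {y // p y}
  have (y : {y // p y}) : Finite {x // f x = y} := hf y y.2
  rw [← Nat.card_congr (Equiv.sigmaSubtypeFiberEquivSubtype f fun _ ↦ Iff.rfl), Nat.card_sigma,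
    ← finsum_eq_sum_of_fintype,
    finsum_subtype_eq_finsum_cond (f := fun y ↦ Nat.card {x // f x = y}) p]

end Fibers

section Contents

variable {d : ℕ}

/-- The index `∏ bᵢ ^ i` attached to a tuple `(b₁, …, b_d)`; the entry `b j` is `b_{j+1}`. -/
def tupleIndex (b : Fin d → ℕ+) : ℕ := ∏ j, (b j : ℕ) ^ ((j : ℕ) + 1)

lemma tupleIndex_ne_zero (b : Fin d → ℕ+) : tupleIndex b ≠ 0 :=
  Finset.prod_ne_zero_iff.2 fun j _ ↦ pow_ne_zero _ (b j).ne_zero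

lemma tupleIndex_eq_init_mul (b : Fin (d + 1) → ℕ+) :
    tupleIndex b = tupleIndex (Fin.init b) * (b (Fin.last d) : ℕ) ^ (d + 1) :=
  Fin.prod_univ_castSucc _

lemma tupleIndex_init (b : Fin (d + 1) → ℕ+) :
    tupleIndex (Fin.init b) =
      ∏ j, (b j : ℕ) ^ (if (j : ℕ) + 1 < d + 1 then (j : ℕ) + 1 else 0) := by
  rw [Fin.prod_univ_castSucc]
  simp [tupleIndex, Fin.init]

lemma finite_tupleIndex_eq {n : ℕ} (hn : 0 < n) :
    Finite {b : Fin d → ℕ+ // tupleIndex b = n} := by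
  refine Set.Finite.to_subtype ((Set.finite_Iic fun _ ↦ (⟨n, hn⟩ : ℕ+)).subset ?_)
  rintro b rfl j
  have hdvd : (b j : ℕ) ∣ tupleIndex b :=
    (dvd_pow_self _ (Nat.succ_ne_zero _)).trans
      (Finset.dvd_prod_of_mem (fun j ↦ (b j : ℕ) ^ ((j : ℕ) + 1)) (Finset.mem_univ j))
  exact Nat.le_of_dvd hn hdvd

/-- The successive contents `(b₁, …, b_d)` of a monic lattice: `b_d` is the content of the low
part `b_d • N`, and the remaining entries are the contents of the monic lattice `N`. -/
noncomputable def monicContents : {d : ℕ} → MonicLattice d → Fin d → ℕ+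
  | 0, _ => Fin.elim0
  | d + 1, Λ => Fin.snoc (monicContents ((dilateEquiv d).symm Λ.low).2)
      ((dilateEquiv d).symm Λ.low).1

/-- The tuple `(b₁, …, b_{d+1})` attached to an ideal lattice `c • N`: the contents of the monic
lattice `N`, followed by `c`. -/
noncomputable def idealContents (M : IdealLattice (d + 1)) : Fin (d + 1) → ℕ+ :=
  Fin.snoc (monicContents ((dilateEquiv d).symm M).2) ((dilateEquiv d).symm M).1

lemma monicContents_eq_idealContents_low (Λ : MonicLattice (d + 1)) :
    monicContents Λ = idealContents Λ.low := by
  rw [monicContents, idealContents]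

lemma idealContents_dilateEquiv (c : ℕ+) (N : MonicLattice d) :
    idealContents (dilateEquiv d (c, N)) = Fin.snoc (monicContents N) c := by
  rw [idealContents, Equiv.symm_apply_apply]

lemma idealContents_dilateEquiv_eq_iff (c : ℕ+) (N : MonicLattice d) (b : Fin (d + 1) → ℕ+) :
    idealContents (dilateEquiv d (c, N)) = b ↔
      c = b (Fin.last d) ∧ monicContents N = Fin.init b := by
  conv_lhs => rw [idealContents_dilateEquiv, ← Fin.snoc_init_self b, Fin.snoc_inj]
  exact and_comm

instance : Unique (MonicLattice 0) where
  default := ⟨⊤, by simp, isMonicLattice_top⟩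
  uniq N := Subtype.ext (eq_top_of_leadingIdeal_eq_top N.2.2.leadingIdeal_eq_top)

lemma MonicLattice.index_eq_tupleIndex {d : ℕ} (N : MonicLattice d) :
    N.1.toAddSubgroup.index = tupleIndex (monicContents N) := by
  induction d with
  | zero =>
    rw [eq_top_of_leadingIdeal_eq_top N.2.2.leadingIdeal_eq_top]
    simp [tupleIndex]
  | succ d ih =>
    obtain ⟨⟨c, N'⟩, hlow⟩ := (dilateEquiv d).surjective N.low
    calc N.1.toAddSubgroup.index
      _ = N.low.1.toAddSubgroup.index := N.2.2.index_lowPart.symm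
      _ = tupleIndex (monicContents N') * (c : ℕ) ^ (d + 1) := by rw [← hlow, index_dilateEquiv, ih]
      _ = tupleIndex (monicContents N) := by
        rw [monicContents_eq_idealContents_low, ← hlow, idealContents_dilateEquiv,
          tupleIndex_eq_init_mul, Fin.init_snoc, Fin.snoc_last]

lemma index_eq_tupleIndex (M : IdealLattice (d + 1)) :
    M.1.toAddSubgroup.index = tupleIndex (idealContents M) := by
  obtain ⟨⟨c, N⟩, rfl⟩ := (dilateEquiv d).surjective M
  rw [index_dilateEquiv, N.index_eq_tupleIndex, idealContents_dilateEquiv, tupleIndex_eq_init_mul,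
    Fin.init_snoc, Fin.snoc_last]

lemma card_idealContents_eq_card_monicContents (b : Fin (d + 1) → ℕ+) :
    Nat.card {M : IdealLattice (d + 1) // idealContents M = b} =
      Nat.card {N : MonicLattice d // monicContents N = Fin.init b} :=
  .symm <| Nat.card_congr <| .ofBijective
    (fun N ↦ ⟨dilateEquiv d (b (Fin.last d), N.1),
      (idealContents_dilateEquiv_eq_iff _ _ _).2 ⟨rfl, N.2⟩⟩) <| by
    refine ⟨fun N N' h ↦ ?_, fun ⟨M, hM⟩ ↦ ?_⟩
    · simpa [Subtype.ext_iff] using h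
    · obtain ⟨⟨c, N⟩, rfl⟩ := (dilateEquiv d).surjective M
      obtain ⟨rfl, hN⟩ := (idealContents_dilateEquiv_eq_iff c N b).1 hM
      exact ⟨⟨N, hN⟩, rfl⟩

lemma card_monicContents_eq {d : ℕ} (b : Fin d → ℕ+) :
    Nat.card {N : MonicLattice d // monicContents N = b} = tupleIndex b := by
  induction d with
  | zero =>
    have hone : {N : MonicLattice 0 // monicContents N = b} ≃ MonicLattice 0 :=
      Equiv.subtypeUnivEquiv fun _ ↦ Subsingleton.elim _ _
    rw [Nat.card_congr hone, Nat.card_unique, tupleIndex, Fin.prod_univ_zero]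
  | succ d ih =>
    have hfiber (M : IdealLattice (d + 1)) (hM : idealContents M = b) :
        Nat.card {Λ : MonicLattice (d + 1) // Λ.low = M} = (b (Fin.last d) : ℕ) ^ (d + 1) := by
      obtain ⟨⟨c, N⟩, rfl⟩ := (dilateEquiv d).surjective M
      rw [card_low_eq_dilateEquiv, ((idealContents_dilateEquiv_eq_iff c N b).1 hM).1]
    simp only [monicContents_eq_idealContents_low]
    rw [card_subtype_comp_eq_mul MonicLattice.low (idealContents · = b)
      (pow_ne_zero _ (b (Fin.last d)).ne_zero) hfiber, card_idealContents_eq_card_monicContents, ih,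
      tupleIndex_eq_init_mul b]

lemma card_idealContents_eq (b : Fin (d + 1) → ℕ+) :
    Nat.card {M : IdealLattice (d + 1) // idealContents M = b} = tupleIndex (Fin.init b) := by
  rw [card_idealContents_eq_card_monicContents, card_monicContents_eq]

end Contents

/-- An `IdealLattice` is the same thing as a subgroup of finite index satisfying
`IsIdealLattice`, sorted here by index. -/
def idealLatticeEquiv {d n : ℕ} (hn : 0 < n) :
    {Λ : AddSubgroup (Fin d → ℤ) // Λ.index = n ∧ IsIdealLattice d Λ} ≃
      {M : IdealLattice d // M.1.toAddSubgroup.index = n} where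
  toFun Λ := ⟨⟨Λ.1.toIntSubmodule, by simpa [Λ.2.1] using hn.ne',
    (isIdealLattice_toAddSubgroup_iff _).1 (by simpa using Λ.2.2)⟩, by simpa using Λ.2.1⟩
  invFun M := ⟨M.1.1.toAddSubgroup, M.2, (isIdealLattice_toAddSubgroup_iff _).2 M.1.2.2⟩

/-- Coefficient form of `ζ^{(d)}(s) = [∏_{i=1}^{d-1} ζ(i(s-1))]·ζ(ds)`: the number of ideal
lattices in `ℤ^d` of index `n` equals `∑ ∏_{i=1}^{d-1} bᵢ^i`, summed over all tuples
`(b_1, …, b_d)` of positive integers with `∏_{i=1}^d bᵢ^i = n`. -/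
theorem card_ideal_lattices_eq (d : ℕ) (hd : 1 ≤ d) (n : ℕ) (hn : 0 < n) :
    Nat.card {Λ : AddSubgroup (Fin d → ℤ) // Λ.index = n ∧ IsIdealLattice d Λ} =
      ∑ᶠ (b : Fin d → ℕ+) (_ : ∏ j : Fin d, (b j : ℕ) ^ ((j : ℕ) + 1) = n),
        ∏ j : Fin d, (b j : ℕ) ^ (if (j : ℕ) + 1 < d then (j : ℕ) + 1 else 0) := by
  obtain ⟨d, rfl⟩ := Nat.exists_eq_add_of_le' hd
  have hfiber (b : Fin (d + 1) → ℕ+) :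
      Finite {M : IdealLattice (d + 1) // idealContents M = b} :=
    Nat.finite_of_card_ne_zero (card_idealContents_eq b ▸ tupleIndex_ne_zero _)
  have := finite_tupleIndex_eq (d := d + 1) hn
  rw [Nat.card_congr (idealLatticeEquiv hn)]
  simp only [index_eq_tupleIndex, ← tupleIndex_init]
  rw [card_subtype_comp_eq_finsum idealContents (tupleIndex · = n) fun b _ ↦ hfiber b]
  simp only [card_idealContents_eq]
  rfl
end
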